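/- arXiv:1106.5480 — 12 statements merged into one kernel-verified Lean document; each statement's English description precedes it below -/
import Mathlib

section
/- Let P be a finite weakly graded poset with rank function rk. The following are equivalent: (I) P avoids 3+1; (II) P is vigilant and any two elements v, w with rk(w) − rk(v) ≥ 2 are comparable; (III) P is vigilant and any two elements v, w with rk(w) − rk(v) = 2 are comparable. -/
/-- A poset avoids `3+1` if it contains no chain `x < y < z` together with an
element `w` incomparable to each of `x`, `y`, `z`. -/
def AvoidsThreePlusOne (P : Type*) [PartialOrder P] : Prop :=
  ¬ ∃ w x y z : P, x < y ∧ y < z ∧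
      ¬(w ≤ x ∨ x ≤ w) ∧ ¬(w ≤ y ∨ y ≤ w) ∧ ¬(w ≤ z ∨ z ≤ w)

/-- `rk` is a rank function exhibiting `P` as weakly graded: it increases by one along
covers, and every connected component of the comparability graph contains an element of
rank `0` (so the minimal rank occurring in each component is `0`). -/
def IsWeaklyGraded (P : Type*) [PartialOrder P] (rk : P → ℕ) : Prop :=
  (∀ a b : P, a ⋖ b → rk b = rk a + 1) ∧
  ∀ v : P, ∃ u : P, Relation.ReflTransGen (fun a b : P => a ≤ b ∨ b ≤ a) v u ∧ rk u = 0

/-- `v` is up-seeing if every element of the next rank set covers it. -/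
def UpSeeing {P : Type*} [PartialOrder P] (rk : P → ℕ) (v : P) : Prop :=
  ∀ w : P, rk w = rk v + 1 → v ⋖ w

/-- `v` is down-seeing if it covers every element of the previous rank set. -/
def DownSeeing {P : Type*} [PartialOrder P] (rk : P → ℕ) (v : P) : Prop :=
  ∀ w : P, rk w + 1 = rk v → w ⋖ v

/-- A weakly graded poset is vigilant if every element is up-seeing or down-seeing. -/
def Vigilant {P : Type*} [PartialOrder P] (rk : P → ℕ) : Prop :=
  ∀ v : P, UpSeeing rk v ∨ DownSeeing rk v

section aux

variable {P : Type*} [PartialOrder P] [Fintype P] {rk : P → ℕ}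

theorem aux_cov (a b : P) (h : a < b) : ∃ c, a ⋖ c ∧ c ≤ b := by
  obtain ⟨c, hc⟩ := (Set.toFinite {c : P | a < c ∧ c ≤ b}).exists_minimal ⟨b, h, le_rfl⟩
  refine ⟨c, ⟨hc.prop.1, fun d had hdc => ?_⟩, hc.prop.2⟩
  exact absurd (hc.le_of_le ⟨had, hdc.le.trans hc.prop.2⟩ hdc.le) (not_le_of_gt hdc)

theorem aux_mid (hc : ∀ a b : P, a ⋖ b → rk b = rk a + 1) (b : P) (i : ℕ) (a : P) :
    a ≤ b → rk a ≤ rk b ∧ (a ≠ b → rk a < rk b) ∧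
      (rk a ≤ i → i ≤ rk b → ∃ c, a ≤ c ∧ c ≤ b ∧ rk c = i) := by
  induction a using (wellFounded_gt (α := P)).induction with
  | _ a ih =>
    intro hab
    rcases hab.eq_or_lt with rfl | hlt
    · exact ⟨le_rfl, fun h => absurd rfl h, fun h1 h2 => ⟨a, le_rfl, le_rfl, by omega⟩⟩
    · obtain ⟨c, hac, hcb⟩ := aux_cov a b hlt
      obtain ⟨h1, _, h3⟩ := ih c hac.lt hcb
      have h4 := hc a c hac
      refine ⟨by omega, fun _ => by omega, fun h5 h6 => ?_⟩
      by_cases h7 : rk a = i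
      · exact ⟨a, le_rfl, hab, h7⟩
      · obtain ⟨d, hd1, hd2, hd3⟩ := h3 (by omega) h6
        exact ⟨d, hac.le.trans hd1, hd2, hd3⟩

theorem aux_lt (hc : ∀ a b : P, a ⋖ b → rk b = rk a + 1) {a b : P} (h : a < b) :
    rk a < rk b := (aux_mid hc b 0 a h.le).2.1 h.ne

theorem aux_le (hc : ∀ a b : P, a ⋖ b → rk b = rk a + 1) {a b : P} (h : a ≤ b) :
    rk a ≤ rk b := (aux_mid hc b 0 a h).1

theorem aux_ivt (hc : ∀ a b : P, a ⋖ b → rk b = rk a + 1) {a b : P} (h : a ≤ b) (i : ℕ)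
    (h1 : rk a ≤ i) (h2 : i ≤ rk b) : ∃ c, a ≤ c ∧ c ≤ b ∧ rk c = i :=
  (aux_mid hc b i a h).2.2 h1 h2

theorem aux_ivt_lt (hc : ∀ a b : P, a ⋖ b → rk b = rk a + 1) {a b : P} (h : a ≤ b) (i : ℕ)
    (h1 : rk a < i) (h2 : i < rk b) : ∃ c, a < c ∧ c < b ∧ rk c = i := by
  obtain ⟨c, h3, h4, h5⟩ := aux_ivt hc h i h1.le h2.le
  refine ⟨c, lt_of_le_of_ne h3 ?_, lt_of_le_of_ne h4 ?_, h5⟩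
  · rintro rfl; omega
  · rintro rfl; omega

theorem aux_covby (hc : ∀ a b : P, a ⋖ b → rk b = rk a + 1) {a b : P} (h : a ≤ b)
    (h1 : rk b = rk a + 1) : a ⋖ b := by
  refine ⟨lt_of_le_of_ne h (by rintro rfl; omega), fun c h2 h3 => ?_⟩
  have := aux_lt hc h2
  have := aux_lt hc h3
  omega

theorem aux_exists_rank (hwg : IsWeaklyGraded P rk) (w : P) (k : ℕ) (hk : k ≤ rk w) :
    ∃ c, rk c = k := by
  by_contra! hno
  obtain ⟨u, hu, hu0⟩ := hwg.2 w
  have key : k < rk u := by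
    clear hu0
    induction hu with
    | refl => exact lt_of_le_of_ne hk (hno w).symm
    | @tail b c _ hbc ih =>
      rcases hbc with h | h
      · exact lt_of_lt_of_le ih (aux_le hwg.1 h)
      · by_contra hlt
        obtain ⟨d, _, _, hd⟩ := aux_ivt hwg.1 h k (by omega) ih.le
        exact hno d hd
  omega

theorem aux_chain (hwg : IsWeaklyGraded P rk) (w : P) (hw : 2 ≤ rk w) :
    ∃ x z : P, x ≤ z ∧ rk x = 0 ∧ rk z = 2 := by
  by_contra! hno
  obtain ⟨u, hu, hu0⟩ := hwg.2 w
  have key : ¬ (rk u ≤ 1 ∧ ∃ x, x ≤ u ∧ rk x = 0) := by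
    clear hu0
    induction hu with
    | refl => omega
    | @tail b c _ hbc ih =>
      rintro ⟨hc1, x, hx, hx0⟩
      apply ih
      rcases hbc with h | h
      · refine ⟨(aux_le hwg.1 h).trans hc1, ?_⟩
        rcases h.eq_or_lt with rfl | h
        · exact ⟨x, hx, hx0⟩
        · have := aux_lt hwg.1 h
          exact ⟨b, le_rfl, by omega⟩
      · refine ⟨?_, x, hx.trans h, hx0⟩
        by_contra hb
        obtain ⟨d, h1, _, h3⟩ := aux_ivt hwg.1 (hx.trans h) 2 (by omega) (by omega)
        exact hno x d h1 hx0 h3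
  exact key ⟨by omega, u, le_rfl, hu0⟩

theorem aux_zero (hwg : IsWeaklyGraded P rk) (hav : AvoidsThreePlusOne P) (w : P)
    (hw : 2 ≤ rk w) : ∃ x, x ≤ w ∧ rk x = 0 := by
  by_contra! hno
  obtain ⟨x, z, hxz, hx, hz⟩ := aux_chain hwg w hw
  obtain ⟨y, hxy, hyz, hy⟩ := aux_ivt_lt hwg.1 hxz 1 (by omega) (by omega)
  have hxw : ¬ x ≤ w := fun h => hno x h hx
  refine hav ⟨w, x, y, z, hxy, hyz, ?_, ?_, ?_⟩
  · rintro (h | h)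
    · have := aux_le hwg.1 h; omega
    · exact hxw h
  · rintro (h | h)
    · have := aux_le hwg.1 h; omega
    · exact hxw (hxy.le.trans h)
  · rintro (h | h)
    · rcases h.eq_or_lt with rfl | h
      · exact hxw hxz
      · have := aux_lt hwg.1 h; omega
    · exact hxw (hxz.trans h)

theorem aux_two (hwg : IsWeaklyGraded P rk) (hav : AvoidsThreePlusOne P) (v w : P)
    (h : rk v + 2 ≤ rk w) : v ≤ w := by
  by_contra hvw
  obtain ⟨u, huw, hu⟩ := aux_zero hwg hav w (by omega)
  obtain ⟨z, huz, hzw, hz⟩ := aux_ivt hwg.1 huw (rk v + 2) (by omega) h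
  obtain ⟨x, hux, hxz, hx⟩ := aux_ivt hwg.1 huz (rk v) (by omega) (by omega)
  obtain ⟨y, hxy, hyz, hy⟩ := aux_ivt_lt hwg.1 hxz (rk v + 1) (by omega) (by omega)
  refine hav ⟨v, x, y, z, hxy, hyz, ?_, ?_, ?_⟩
  · rintro (h | h)
    · exact hvw (h.trans (hxz.trans hzw))
    · rcases h.eq_or_lt with rfl | h
      · exact hvw (hxz.trans hzw)
      · have := aux_lt hwg.1 h; omega
  · rintro (h | h)
    · exact hvw (h.trans (hyz.le.trans hzw))
    · have := aux_le hwg.1 h; omega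
  · rintro (h | h)
    · exact hvw (h.trans hzw)
    · have := aux_le hwg.1 h; omega

theorem aux_vig (hwg : IsWeaklyGraded P rk) (hav : AvoidsThreePlusOne P) : Vigilant rk := by
  intro v
  by_contra! hcon
  obtain ⟨h1, h2⟩ := hcon
  unfold UpSeeing at h1
  unfold DownSeeing at h2
  push Not at h1 h2
  obtain ⟨a, ha, hva⟩ := h1
  obtain ⟨b, hb, hbv⟩ := h2
  have hva' : ¬ v ≤ a := fun h => hva (aux_covby hwg.1 h ha)
  have hbv' : ¬ b ≤ v := fun h => hbv (aux_covby hwg.1 h hb.symm)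
  have hba := aux_two hwg hav b a (by omega)
  obtain ⟨c, hbc, hca, hc⟩ := aux_ivt_lt hwg.1 hba (rk v) (by omega) (by omega)
  refine hav ⟨v, b, c, a, hbc, hca, ?_, ?_, ?_⟩
  · rintro (h | h)
    · have := aux_le hwg.1 h; omega
    · exact hbv' h
  · rintro (h | h)
    · exact hva' (h.trans hca.le)
    · exact hbv' (hbc.le.trans h)
  · rintro (h | h)
    · exact hva' h
    · have := aux_le hwg.1 h; omega

theorem aux_up (hwg : IsWeaklyGraded P rk)
    (h2 : ∀ v w : P, rk w = rk v + 2 → (v ≤ w ∨ w ≤ v)) (n : ℕ) :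
    ∀ v w : P, rk w = rk v + 2 + n → v ≤ w := by
  have h2' : ∀ v w : P, rk w = rk v + 2 → v ≤ w := by
    intro v w h
    rcases h2 v w h with h' | h'
    · exact h'
    · have := aux_le hwg.1 h'; omega
  induction n with
  | zero => exact h2'
  | succ n ih =>
    intro v w h
    obtain ⟨e, he⟩ := aux_exists_rank hwg w (rk v + 2) (by omega)
    obtain ⟨d, hvd, _, hd⟩ := aux_ivt hwg.1 (h2' v e he) (rk v + 1) (by omega) (by omega)
    exact hvd.trans (ih d w (by omega))

theorem aux_back (hwg : IsWeaklyGraded P rk) (hv : Vigilant rk)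
    (h2 : ∀ v w : P, rk v + 2 ≤ rk w → (v ≤ w ∨ w ≤ v)) : AvoidsThreePlusOne P := by
  rintro ⟨w, x, y, z, hxy, hyz, hx, hy, hz⟩
  have h1 := aux_lt hwg.1 hxy
  have h3 := aux_lt hwg.1 hyz
  have h4 : ¬ rk x + 2 ≤ rk w := fun h => hx (h2 x w h).symm
  have h5 : ¬ rk w + 2 ≤ rk z := fun h => hz (h2 w z h)
  rcases hv w with h | h
  · exact hz (Or.inl (h z (by omega)).le)
  · exact hx (Or.inr (h x (by omega)).le)

end aux

theorem avoids31_tfae (P : Type*) [PartialOrder P] [Fintype P] (rk : P → ℕ)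
    (hwg : IsWeaklyGraded P rk) :
    List.TFAE
      [AvoidsThreePlusOne P,
       Vigilant rk ∧ ∀ v w : P, rk v + 2 ≤ rk w → (v ≤ w ∨ w ≤ v),
       Vigilant rk ∧ ∀ v w : P, rk w = rk v + 2 → (v ≤ w ∨ w ≤ v)] := by
  tfae_have 1 → 2 := fun h => ⟨aux_vig hwg h, fun v w hvw => Or.inl (aux_two hwg h v w hvw)⟩
  tfae_have 2 → 3 := fun h => ⟨h.1, fun v w hvw => h.2 v w hvw.ge⟩
  tfae_have 3 → 1 := fun h => aux_back hwg h.1 fun v w hvw =>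
    Or.inl (aux_up hwg h.2 (rk w - (rk v + 2)) v w (by omega))
  tfae_finish
end

section
/- Let P be a finite weakly graded poset with rank function rk which avoids 3+1. Then any two elements v, w of P with rk(w) − rk(v) ≥ 2 satisfy v < w. -/
theorem rk_lt_aux {P : Type*} [PartialOrder P] [Fintype P] (rk : P → ℕ)
    (h : ∀ a b : P, a ⋖ b → rk b = rk a + 1) (y : P) : ∀ x : P, x < y → rk x < rk y := by
  intro x
  induction x using (wellFounded_gt (α := P)).induction with
  | _ x ih =>
    intro hxy
    obtain ⟨z, hz, hzy⟩ := exists_covBy_le_of_lt hxy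
    have h1 := h x z hz
    rcases hzy.eq_or_lt with rfl | hlt
    · omega
    · have := ih z hz.lt hlt
      omega

theorem rk_interp_aux {P : Type*} [PartialOrder P] [Fintype P] (rk : P → ℕ)
    (h : ∀ a b : P, a ⋖ b → rk b = rk a + 1) (y : P) (k : ℕ) (hk : k ≤ rk y) :
    ∀ x : P, x ≤ y → rk x ≤ k → ∃ z, x ≤ z ∧ z ≤ y ∧ rk z = k := by
  intro x
  induction x using (wellFounded_gt (α := P)).induction with
  | _ x ih =>
    intro hxy hxk
    rcases hxk.eq_or_lt with he | hlt
    · exact ⟨x, le_rfl, hxy, he⟩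
    · have hne : x < y := by
        rcases hxy.eq_or_lt with rfl | hl
        · omega
        · exact hl
      obtain ⟨z, hz, hzy⟩ := exists_covBy_le_of_lt hne
      have h1 := h x z hz
      obtain ⟨t, h2, h3, h4⟩ := ih z hz.lt hzy (by omega)
      exact ⟨t, hz.le.trans h2, h3, h4⟩

theorem lt_of_rank_ge_two_of_avoids31 (P : Type*) [PartialOrder P] [Fintype P]
    (rk : P → ℕ) (hwg : IsWeaklyGraded P rk) (havoid : AvoidsThreePlusOne P) :
    ∀ v w : P, rk v + 2 ≤ rk w → v < w := by
  obtain ⟨hc, hconn⟩ := hwg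
  intro v w hvw
  have hlt : ∀ x y : P, x < y → rk x < rk y := fun x y => rk_lt_aux rk hc y x
  have hle : ∀ x y : P, x ≤ y → rk y ≤ rk x → x = y := by
    intro x y hxy h
    rcases hxy.eq_or_lt with he | hl
    · exact he
    · have := hlt x y hl
      omega
  -- between
  have hbt : ∀ x y : P, x ≤ y → rk x + 2 ≤ rk y → ∃ n, x < n ∧ n < y ∧ rk n = rk x + 1 := by
    intro x y hxy h
    obtain ⟨n, h1, h2, h3⟩ := rk_interp_aux rk hc y (rk x + 1) (by omega) x hxy (by omega)
    refine ⟨n, lt_of_le_of_ne h1 ?_, lt_of_le_of_ne h2 ?_, h3⟩ <;> rintro rfl <;> omega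
  have hchain : ∃ a c : P, a ≤ c ∧ rk a + 2 = rk w ∧ rk c = rk w := by
    by_contra hno
    have key : ∀ x y : P, x ≤ y → rk x + 2 ≤ rk w → rk w ≤ rk y → False := by
      intro x y hxy h1 h2
      obtain ⟨a, _, h3, h4⟩ := rk_interp_aux rk hc y (rk w - 2) (by omega) x hxy (by omega)
      obtain ⟨c, h5, _, h6⟩ := rk_interp_aux rk hc y (rk w) (by omega) a h3 (by omega)
      exact hno ⟨a, c, h5, by omega, h6⟩
    obtain ⟨u, hu, hu0⟩ := hconn w
    have hS : ∃ y, u ≤ y ∧ rk w ≤ rk y := by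
      clear hu0
      induction hu with
      | refl => exact ⟨w, le_rfl, le_rfl⟩
      | @tail b c _ hbc ih =>
        obtain ⟨y, hy, hyr⟩ := ih
        rcases hbc with hbc | hcb
        · by_cases hcr : rk w ≤ rk c
          · exact ⟨c, le_rfl, hcr⟩
          · rcases hbc.eq_or_lt with rfl | hl
            · exact ⟨y, hy, hyr⟩
            · have := hlt _ _ hl
              exact (key b y hy (by omega) hyr).elim
        · exact ⟨y, hcb.trans hy, hyr⟩
    obtain ⟨y, hy, hyr⟩ := hS
    exact key u y hy (by omega) hyr
  obtain ⟨a, c, hac, har, hcr⟩ := hchain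
  obtain ⟨b, hab, hbc, hbr⟩ := hbt a c hac (by omega)
  have haw : a ≤ w := by
    by_contra hn
    refine havoid ⟨w, a, b, c, hab, hbc, ?_, ?_, ?_⟩
    · rintro (h | h)
      · have := hle _ _ h (by omega)
        exact hn this.ge
      · exact hn h
    · rintro (h | h)
      · have := hle _ _ h (by omega)
        exact hn (this ▸ hab.le)
      · exact hn (hab.le.trans h)
    · rintro (h | h)
      · have := hle _ _ h (by omega)
        exact hn (this ▸ hac)
      · exact hn (hac.trans h)
  obtain ⟨n, han, hnw, hnr⟩ := hbt a w haw (by omega)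
  by_contra hn
  refine havoid ⟨v, a, n, w, han, hnw, ?_, ?_, ?_⟩
  · rintro (h | h)
    · exact hn (h.trans_lt (han.trans hnw))
    · have := hle _ _ h (by omega)
      exact hn (this ▸ han.trans hnw)
  · rintro (h | h)
    · exact hn (h.trans_lt hnw)
    · have := hle _ _ h (by omega)
      exact hn (this ▸ hnw)
  · rintro (h | h)
    · refine hn (lt_of_le_of_ne h ?_)
      rintro rfl
      omega
    · have := hle _ _ h (by omega)
      rw [this] at hvw
      omega
end

section
/- Let P be a finite weakly graded poset with rank function rk which avoids 3+1. Then P is vigilant, i.e., every element of P is up-seeing or down-seeing. -/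
theorem wg_path {P : Type*} [PartialOrder P] [Fintype P] {a b : P} (h : a ≤ b) :
    Relation.ReflTransGen (fun a b : P => a ⋖ b) a b := by
  classical
  letI : LocallyFiniteOrder P := Fintype.toLocallyFiniteOrder
  exact le_iff_reflTransGen_covBy.mp h

theorem wg_mono {P : Type*} [PartialOrder P] [Fintype P] {rk : P → ℕ}
    (hc : ∀ a b : P, a ⋖ b → rk b = rk a + 1) {a b : P} (h : a ≤ b) : rk a ≤ rk b := by
  have h0 := wg_path h
  clear h
  induction h0 with
  | refl => exact le_rfl
  | tail h1 h2 ih =>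
    have := hc _ _ h2
    omega

theorem wg_conn {P : Type*} [PartialOrder P] [Fintype P] {v u : P}
    (h : Relation.ReflTransGen (fun a b : P => a ≤ b ∨ b ≤ a) v u) :
    Relation.ReflTransGen (fun a b : P => a ⋖ b ∨ b ⋖ a) v u := by
  induction h with
  | refl => exact .refl
  | tail h1 h2 ih =>
    refine ih.trans ?_
    rcases h2 with h2 | h2
    · have h3 := wg_path h2
      clear h2 h1 ih
      induction h3 with
      | refl => exact .refl
      | tail _ h5 ih => exact ih.tail (Or.inl h5)
    · have h3 := wg_path h2
      clear h2 h1 ih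
      induction h3 with
      | refl => exact .refl
      | tail _ h5 ih => exact ih.head (Or.inr h5)

theorem wg_chain {P : Type*} [PartialOrder P] [Fintype P] {rk : P → ℕ}
    (hc : ∀ a b : P, a ⋖ b → rk b = rk a + 1) (j : ℕ) {v u : P}
    (h : Relation.ReflTransGen (fun a b : P => a ⋖ b ∨ b ⋖ a) v u) (hu : rk u = 0) :
    (j + 2 ≤ rk v → ∃ x y z : P, x < y ∧ y < z ∧ rk x = j ∧ rk y = j + 1 ∧ rk z = j + 2) ∧
    (rk v = j + 1 → (∃ x y z : P, x < y ∧ y < z ∧ rk x = j ∧ rk y = j + 1 ∧ rk z = j + 2) ∨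
      ∃ x, x < v ∧ rk x = j) := by
  induction h using Relation.ReflTransGen.head_induction_on with
  | refl => exact ⟨fun h => by omega, fun h => by omega⟩
  | @head s t h1 h2 ih =>
    obtain ⟨ih1, ih2⟩ := ih
    rcases h1 with h1 | h1
    · have h3 := hc _ _ h1
      exact ⟨fun h => ih1 (by omega), fun h => Or.inl (ih1 (by omega))⟩
    · have h3 := hc _ _ h1
      refine ⟨fun h => ?_, fun h => Or.inr ⟨t, h1.lt, by omega⟩⟩
      by_cases h4 : j + 2 ≤ rk t
      · exact ih1 h4
      · rcases ih2 (by omega) with h5 | ⟨x, hx, hx'⟩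
        · exact h5
        · exact ⟨x, t, s, hx, h1.lt, hx', by omega, by omega⟩

theorem vigilant_of_avoids31 (P : Type*) [PartialOrder P] [Fintype P]
    (rk : P → ℕ) (hwg : IsWeaklyGraded P rk) (havoid : AvoidsThreePlusOne P) :
    Vigilant rk := by
  obtain ⟨hc, hconn⟩ := hwg
  have lt_rk : ∀ {a b : P}, a < b → rk a < rk b := by
    intro a b h
    obtain ⟨c, h1, h2⟩ := exists_covBy_le_of_lt h
    have := hc _ _ h1
    have := wg_mono hc h2
    omega
  have hle : ∀ {a b : P}, a ≤ b → a = b ∨ rk a < rk b := fun h =>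
    h.eq_or_lt.imp id lt_rk
  have hcov : ∀ {a b : P}, a < b → rk b = rk a + 1 → a ⋖ b := by
    intro a b h hr
    refine ⟨h, fun c h1 h2 => ?_⟩
    have := lt_rk h1
    have := lt_rk h2
    omega
  have mid : ∀ {a b : P}, a < b → rk b = rk a + 2 → ∃ c, a < c ∧ c < b ∧ rk c = rk a + 1 := by
    intro a b h hr
    obtain ⟨c, h1, h2⟩ := exists_covBy_le_of_lt h
    have h3 := hc _ _ h1
    refine ⟨c, h1.lt, lt_of_le_of_ne h2 ?_, h3⟩
    rintro rfl
    omega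
  have comp : ∀ w x y z : P, x < y → y < z →
      (w ≤ x ∨ x ≤ w) ∨ (w ≤ y ∨ y ≤ w) ∨ (w ≤ z ∨ z ≤ w) := by
    intro w x y z h1 h2
    by_contra h
    push Not at h
    exact havoid ⟨w, x, y, z, h1, h2, by tauto, by tauto, by tauto⟩
  have down : ∀ (j : ℕ) (w : P), rk w = j + 2 → ∃ x, x < w ∧ rk x = j := by
    intro j w hw
    obtain ⟨u, hu, hu0⟩ := hconn w
    obtain ⟨x, y, z, hxy, hyz, hx, hy, hz⟩ := (wg_chain hc j (wg_conn hu) hu0).1 (by omega)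
    refine ⟨x, ?_, hx⟩
    have hxz := hxy.trans hyz
    rcases comp w x y z hxy hyz with (h | h) | (h | h) | (h | h)
    · rcases hle h with rfl | h' <;> omega
    · rcases h.eq_or_lt with rfl | h'
      · omega
      · exact h'
    · rcases hle h with rfl | h' <;> omega
    · exact hxy.trans_le h
    · rcases hle h with rfl | h'
      · exact hxz
      · omega
    · exact hxz.trans_le h
  have two : ∀ b a : P, rk a = rk b + 2 → b < a := by
    intro b a hab
    obtain ⟨x, hxa, hx⟩ := down _ a hab
    obtain ⟨y, hxy, hya, hy⟩ := mid hxa (by omega)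
    rcases comp b x y a hxy hya with (h | h) | (h | h) | (h | h)
    · exact h.trans_lt hxa
    · rcases hle h with rfl | h'
      · exact hxa
      · omega
    · exact h.trans_lt hya
    · rcases hle h with rfl | h' <;> omega
    · rcases h.eq_or_lt with rfl | h'
      · omega
      · exact h'
    · rcases hle h with rfl | h' <;> omega
  intro v
  by_contra hv
  simp only [UpSeeing, DownSeeing, not_or, not_forall] at hv
  obtain ⟨⟨a, ha, hva⟩, b, hb, hbv⟩ := hv
  obtain ⟨c, hbc, hca, hcr⟩ := mid (two b a (by omega)) (by omega)
  have hcv : c ≠ v := by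
    rintro rfl
    exact hva (hcov hca ha)
  rcases comp v b c a hbc hca with (h | h) | (h | h) | (h | h)
  · rcases hle h with rfl | h' <;> omega
  · rcases h.eq_or_lt with rfl | h'
    · omega
    · exact hbv (hcov h' hb.symm)
  · rcases hle h with h' | h'
    · exact hcv h'.symm
    · omega
  · rcases hle h with h' | h'
    · exact hcv h'
    · omega
  · rcases h.eq_or_lt with rfl | h'
    · omega
    · exact hva (hcov h' ha)
  · rcases hle h with rfl | h' <;> omega
end

section
/- Let P be a finite weakly graded poset with rank function rk. Suppose P is vigilant and any two elements v, w with rk(w) − rk(v) = 2 are comparable. Then any two elements v, w with rk(w) − rk(v) ≥ 2 are comparable. -/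
theorem comparable_of_rank_ge_two (P : Type*) [PartialOrder P] [Fintype P]
    (rk : P → ℕ) (hwg : IsWeaklyGraded P rk) (hvig : Vigilant rk)
    (h2 : ∀ v w : P, rk w = rk v + 2 → (v ≤ w ∨ w ≤ v)) :
    ∀ v w : P, rk v + 2 ≤ rk w → (v ≤ w ∨ w ≤ v) := by
  classical
  obtain ⟨hc, h0⟩ := hwg
  letI : LocallyFiniteOrder P := Fintype.toLocallyFiniteOrder
  have chain : ∀ a b : P, a ≤ b → Relation.ReflTransGen (· ⋖ ·) a b := fun a b h =>
    le_iff_reflTransGen_covBy.1 h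
  have mono : ∀ a b : P, a ≤ b → rk a ≤ rk b := by
    intro a b h
    induction chain a b h with
    | refl => exact le_rfl
    | tail h1 h2 ih =>
      have := hc _ _ h2
      have := ih (le_iff_reflTransGen_covBy.2 h1)
      omega
  have full : ∀ v : P, ∀ r ≤ rk v, ∃ c : P, rk c = r := by
    intro v
    obtain ⟨u, hu, hu0⟩ := h0 v
    induction hu using Relation.ReflTransGen.head_induction_on with
    | refl => intro r hr; exact ⟨u, by omega⟩
    | head hab _ ih =>
      rcases hab with h | h
      · intro r hr
        exact ih r (hr.trans (mono _ _ h))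
      · have hch := chain _ _ h
        clear h
        induction hch with
        | refl => exact ih
        | @tail y z _ h2 ih2 =>
          intro r hr
          have := hc _ _ h2
          by_cases hz : r = rk z
          · exact ⟨_, hz.symm⟩
          · exact ih2 r (by omega)
  have main : ∀ n : ℕ, ∀ v w : P, rk w = rk v + 2 + n → v ≤ w := by
    intro n
    induction n with
    | zero =>
      intro v w h
      rcases h2 v w h with h' | h'
      · exact h'
      · have := mono _ _ h'
        omega
    | succ n ih =>
      intro v w h
      obtain ⟨y, hy⟩ := full w (rk v + 2) (by omega)
      have hvy : v ≤ y := by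
        rcases h2 v y hy with h' | h'
        · exact h'
        · have := mono _ _ h'
          omega
      rcases Relation.ReflTransGen.cases_head (chain _ _ hvy) with e | ⟨x, hx, _⟩
      · subst e
        omega
      · have := hc _ _ hx
        exact hx.le.trans (ih x w (by omega))
  intro v w h
  exact Or.inl (main (rk w - rk v - 2) v w (by omega))
end

section
/- Let P be a finite weakly graded poset with rank function rk. Suppose P is vigilant and any two elements v, w with rk(w) − rk(v) ≥ 2 are comparable. Then P avoids 3+1. -/
theorem avoids31_of_vigilant (P : Type*) [PartialOrder P] [Fintype P]
    (rk : P → ℕ) (hwg : IsWeaklyGraded P rk) (hvig : Vigilant rk)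
    (h2 : ∀ v w : P, rk v + 2 ≤ rk w → (v ≤ w ∨ w ≤ v)) :
    AvoidsThreePlusOne P := by
  have hcov := hwg.1
  letI : LocallyFiniteOrder P := by
    classical
    exact Fintype.toLocallyFiniteOrder
  have hlt : StrictMono rk := by
    refine (strictMono_iff_forall_covBy rk).2 ?_
    intro a b hab
    have := hcov a b hab
    omega
  rintro ⟨w, x, y, z, hxy, hyz, hx, hy, hz⟩
  have h1 := hlt hxy
  have h3 := hlt hyz
  have a1 : ¬ rk x + 2 ≤ rk w := fun h => hx (h2 x w h).symm
  have a2 : ¬ rk w + 2 ≤ rk z := fun h => hz (h2 w z h)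
  rcases hvig w with h | h
  · exact hz (Or.inl (h z (by omega)).le)
  · exact hx (Or.inr (h x (by omega)).le)
end

section
/- Let P be a finite weakly graded poset with rank function rk which avoids 3+1, and suppose P has height k+1 with k ≥ 1 (i.e., the longest chain of P has k+1 elements). Then every maximal element of P has rank k or k−1, and every minimal element of P has rank 0 or 1. -/
/-- A finset is a chain for the order if its elements are pairwise comparable. -/
def FinChain {P : Type*} [PartialOrder P] (s : Finset P) : Prop :=
  IsChain (· ≤ ·) (↑s : Set P)

theorem aux_chain_s7 (P : Type*) [PartialOrder P] [Fintype P]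
    (rk : P → ℕ) (h : ∀ a b : P, a ⋖ b → rk b = rk a + 1) (a b : P) (hab : a ≤ b) :
    ∃ s : Finset P, FinChain s ∧ (∀ x ∈ s, x ≤ b) ∧ b ∈ s ∧ rk b + 1 = rk a + s.card := by
  classical
  induction b using WellFoundedLT.induction with
  | ind b ih =>
    rcases hab.eq_or_lt with rfl | hlt
    · refine ⟨{a}, ?_, by simp, by simp, by simp⟩
      simp [FinChain]
    · obtain ⟨c, hac, hcb⟩ := exists_le_covBy_of_lt hlt
      obtain ⟨s, hs, hle, hcs, hcard⟩ := ih c hcb.lt hac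
      have hb : b ∉ s := fun hb => absurd (hle b hb) (not_le_of_gt hcb.lt)
      refine ⟨insert b s, ?_, ?_, by simp, ?_⟩
      · unfold FinChain
        rw [Finset.coe_insert]
        exact IsChain.insert hs (fun x hx _ => Or.inr ((hle x hx).trans hcb.le))
      · intro x hx
        rcases Finset.mem_insert.1 hx with rfl | hx
        · exact le_rfl
        · exact (hle x hx).trans hcb.le
      · rw [Finset.card_insert_of_notMem hb, h c b hcb]; omega

theorem aux_mono (P : Type*) [PartialOrder P] [Fintype P]
    (rk : P → ℕ) (h : ∀ a b : P, a ⋖ b → rk b = rk a + 1) (a b : P) (hab : a ≤ b) :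
    rk a ≤ rk b := by
  obtain ⟨s, _, _, hb, hc⟩ := aux_chain_s7 P rk h a b hab
  have := Finset.card_pos.2 ⟨b, hb⟩
  omega

theorem aux_smono (P : Type*) [PartialOrder P] [Fintype P]
    (rk : P → ℕ) (h : ∀ a b : P, a ⋖ b → rk b = rk a + 1) (a b : P) (hab : a < b) :
    rk a < rk b := by
  obtain ⟨c, hac, hcb⟩ := exists_le_covBy_of_lt hab
  have := aux_mono P rk h a c hac
  have := h c b hcb
  omega

theorem aux_one (P : Type*) [PartialOrder P] [Fintype P]
    (rk : P → ℕ) (hwg : IsWeaklyGraded P rk)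
    (hd : ∀ a b : P, a ≤ b → rk b ≤ rk a + 1) (v : P) : rk v ≤ 1 := by
  classical
  obtain ⟨h, hconn⟩ := hwg
  have key : ∀ a b : P, a ≤ b → (if IsMin a then rk a else rk a - 1) =
      (if IsMin b then rk b else rk b - 1) := by
    intro a b hab
    rcases hab.eq_or_lt with rfl | hlt
    · rfl
    · have h1 := aux_smono P rk h a b hlt
      have h2 := hd a b hab
      have ha : IsMin a := by
        intro c hc
        by_contra hn
        have hca : c < a := lt_of_le_not_ge hc hn
        have := aux_smono P rk h c a hca
        have := hd c b (hc.trans hab)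
        omega
      have hb : ¬ IsMin b := fun hb => absurd hlt hb.not_lt
      rw [if_pos ha, if_neg hb]; omega
  obtain ⟨u, hu, hu0⟩ := hconn v
  have : (if IsMin v then rk v else rk v - 1) = (if IsMin u then rk u else rk u - 1) := by
    clear hu0
    induction hu with
    | refl => rfl
    | tail _ hbc ih =>
      rcases hbc with e | e
      · exact ih.trans (key _ _ e)
      · exact ih.trans (key _ _ e).symm
  rw [hu0] at this
  split_ifs at this <;> omega

theorem maximal_minimal_ranks (P : Type*) [PartialOrder P] [Fintype P]
    (rk : P → ℕ) (hwg : IsWeaklyGraded P rk) (havoid : AvoidsThreePlusOne P)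
    (k : ℕ) (hk : 1 ≤ k)
    -- `P` has height `k + 1`: the longest chain of `P` has `k + 1` elements
    (hht₁ : ∃ s : Finset P, FinChain s ∧ s.card = k + 1)
    (hht₂ : ∀ s : Finset P, FinChain s → s.card ≤ k + 1) :
    (∀ v : P, IsMax v → rk v = k ∨ rk v = k - 1) ∧
    (∀ v : P, IsMin v → rk v = 0 ∨ rk v = 1) := by
  classical
  have h := hwg.1
  have hd : ∀ a b : P, a ≤ b → rk b ≤ rk a + k := by
    intro a b hab
    obtain ⟨s, hs, _, _, hc⟩ := aux_chain_s7 P rk h a b hab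
    have := hht₂ s hs
    omega
  have sm := aux_smono P rk h
  rcases hk.eq_or_lt with rfl | hk2
  · have := aux_one P rk hwg hd
    exact ⟨fun v _ => by have := this v; omega, fun v _ => by have := this v; omega⟩
  obtain ⟨s, hs, hcard⟩ := hht₁
  have hlt : ∀ x ∈ s, ∀ y ∈ s, rk x < rk y → x < y := by
    intro x hx y hy hxy
    rcases hs.total hx hy with hle | hle
    · exact lt_of_le_of_ne hle (fun e => by subst e; omega)
    · have := aux_mono P rk h _ _ hle; omega
  have hinj : Set.InjOn rk (s : Set P) := by
    intro x hx y hy hxy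
    rcases hs.total hx hy with hle | hle
    · by_contra hne
      have := sm _ _ (lt_of_le_of_ne hle hne); omega
    · by_contra hne
      have := sm _ _ (lt_of_le_of_ne hle (Ne.symm hne)); omega
  have hne : s.Nonempty := Finset.card_pos.1 (by omega)
  obtain ⟨c0, hc0, hmin⟩ := Finset.exists_min_image s rk hne
  have hsub : s.image rk ⊆ Finset.Icc (rk c0) (rk c0 + k) := by
    intro i hi
    obtain ⟨x, hx, rfl⟩ := Finset.mem_image.1 hi
    rw [Finset.mem_Icc]
    refine ⟨hmin x hx, ?_⟩
    rcases hs.total hc0 hx with hle | hle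
    · exact hd _ _ hle
    · have := aux_mono P rk h _ _ hle; omega
  have heq : s.image rk = Finset.Icc (rk c0) (rk c0 + k) := by
    apply Finset.eq_of_subset_of_card_le hsub
    rw [Finset.card_image_of_injOn hinj, Nat.card_Icc]; omega
  have hex : ∀ i ≤ k, ∃ c ∈ s, rk c = rk c0 + i := by
    intro i hi
    have : rk c0 + i ∈ s.image rk := by rw [heq, Finset.mem_Icc]; omega
    simpa using this
  have hcomp : ∀ v x y z : P, x < y → y < z →
      (v ≤ x ∨ x ≤ v) ∨ (v ≤ y ∨ y ≤ v) ∨ (v ≤ z ∨ z ≤ v) := by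
    intro v x y z hxy hyz
    by_contra hcon
    exact havoid ⟨v, x, y, z, hxy, hyz, fun e => hcon (Or.inl e),
      fun e => hcon (Or.inr (Or.inl e)), fun e => hcon (Or.inr (Or.inr e))⟩
  have hmn : ∀ v : P, IsMin v → rk c0 ≤ rk v ∧ rk v ≤ rk c0 + 1 := by
    intro v hv
    obtain ⟨c1, hc1, h1⟩ := hex 1 (by omega)
    obtain ⟨c2, hc2, h2⟩ := hex 2 (by omega)
    obtain ⟨ck, hck, hkk⟩ := hex k le_rfl
    have l01 := hlt c0 hc0 c1 hc1 (by omega)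
    have l12 := hlt c1 hc1 c2 hc2 (by omega)
    have l2k : c2 ≤ ck := by
      rcases Nat.lt_or_ge 2 k with hk3 | hk3
      · exact (hlt c2 hc2 ck hck (by omega)).le
      · exact (hinj hc2 hck (by omega)).le
    have hv2 : v ≤ c2 := by
      rcases hcomp v c0 c1 c2 l01 l12 with (e | e) | (e | e) | (e | e)
      · exact e.trans (l01.trans l12).le
      · exact (hv e).trans (l01.trans l12).le
      · exact e.trans l12.le
      · exact (hv e).trans l12.le
      · exact e
      · exact hv e
    have hvk := hd v ck (hv2.trans l2k)
    have : v < c2 := lt_of_le_of_ne hv2 (fun e => by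
      subst e; exact hv.not_lt l12)
    have := sm _ _ this
    omega
  have hm0 : rk c0 = 0 := by
    obtain ⟨u, _, hu⟩ := hwg.2 c0
    obtain ⟨w, hw, hwm⟩ := Finite.exists_le_minimal (p := fun _ : P => True) (a := u) trivial
    have hwmin : IsMin w := by
      intro b hb
      exact hwm.2 trivial hb
    have := aux_mono P rk h _ _ hw
    have := hmn w hwmin
    omega
  refine ⟨fun v hv => ?_, fun v hv => by have := hmn v hv; omega⟩
  obtain ⟨a, ha, h0⟩ := hex (k - 2) (by omega)
  obtain ⟨b, hb, h1⟩ := hex (k - 1) (by omega)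
  obtain ⟨c, hc, h2⟩ := hex k le_rfl
  have lab := hlt a ha b hb (by omega)
  have lbc := hlt b hb c hc (by omega)
  have l0a : c0 ≤ a := by
    rcases Nat.lt_or_ge 2 k with hk3 | hk3
    · exact (hlt c0 hc0 a ha (by omega)).le
    · exact (hinj hc0 ha (by omega)).le
  have hav : a ≤ v := by
    rcases hcomp v a b c lab lbc with (e | e) | (e | e) | (e | e)
    · exact hv e
    · exact e
    · exact lab.le.trans (hv e)
    · exact lab.le.trans e
    · exact (lab.trans lbc).le.trans (hv e)
    · exact (lab.trans lbc).le.trans e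
  have hvk := hd c0 v (l0a.trans hav)
  have : a < v := lt_of_le_of_ne hav (fun e => by
    subst e; exact hv.not_lt lab)
  have := sm _ _ this
  omega
end

section
/- For all m, n ∈ ℕ, the number of bipartite graphs R on [m] ⊎ [n] with no all-seeing vertex on either side equals Σ_{i=0}^{m} (−1)^i · C(m,i) · (2^{m−i} − 1)^n. -/
/-- `R` (a bipartite graph on `[m] ⊎ [n]`, given as its edge set) has no all-seeing
vertex on either side: no `i ∈ [m]` joined to all of `[n]`, and no `j ∈ [n]` joined to
all of `[m]`. -/
def NoAllSeeing {m n : ℕ} (R : Finset (Fin m × Fin n)) : Prop :=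
  (∀ i : Fin m, ¬ ∀ j : Fin n, (i, j) ∈ R) ∧ (∀ j : Fin n, ¬ ∀ i : Fin m, (i, j) ∈ R)

theorem card_noAllSeeing (m n : ℕ) :
    (Nat.card {R : Finset (Fin m × Fin n) // NoAllSeeing R} : ℤ) =
      ∑ i ∈ Finset.range (m + 1),
        (-1 : ℤ) ^ i * (m.choose i) * ((2 : ℤ) ^ (m - i) - 1) ^ n := by
  classical
  have h1 : Nat.card {R : Finset (Fin m × Fin n) // NoAllSeeing R} =
      Nat.card {f : Fin n → Finset (Fin m) //
        (∀ i : Fin m, ¬ ∀ j, i ∈ f j) ∧ ∀ j, f j ≠ Finset.univ} := by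
    apply Nat.card_congr
    refine Equiv.subtypeEquiv
      { toFun := fun R j => Finset.univ.filter fun i => (i, j) ∈ R
        invFun := fun f => Finset.univ.filter fun p => p.1 ∈ f p.2
        left_inv := fun R => by ext ⟨i, j⟩; simp
        right_inv := fun f => by funext j; ext i; simp } ?_
    intro R
    simp [NoAllSeeing, Finset.eq_univ_iff_forall]
  have h2 : ∀ f : Fin n → Finset (Fin m),
      (if (∀ i : Fin m, ¬ ∀ j, i ∈ f j) ∧ ∀ j, f j ≠ Finset.univ then (1 : ℤ) else 0) =
      ∑ S ∈ (Finset.univ : Finset (Fin m)).powerset, (-1 : ℤ) ^ S.card *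
        (if ∀ j, f j ∈ Finset.Ico S Finset.univ then 1 else 0) := by
    intro f
    by_cases hf : ∀ j, f j ≠ Finset.univ
    · have h3 : ∀ S : Finset (Fin m), (∀ j, f j ∈ Finset.Ico S Finset.univ) ↔
          S ⊆ Finset.univ.filter (fun i => ∀ j, i ∈ f j) := by
        intro S
        simp only [Finset.mem_Ico, 
          Finset.ssubset_univ_iff, Finset.subset_iff, Finset.mem_filter]
        constructor
        · intro h x hx
          exact ⟨Finset.mem_univ _, fun j => (h j).1 hx⟩
        · intro h j
          exact ⟨fun x hx => (h hx).2 j, hf j⟩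
      simp only [h3, mul_ite, mul_one, mul_zero]
      rw [← Finset.sum_filter]
      have h4 : (Finset.univ : Finset (Fin m)).powerset.filter
          (fun S => S ⊆ Finset.univ.filter (fun i => ∀ j, i ∈ f j)) =
          (Finset.univ.filter (fun i => ∀ j, i ∈ f j)).powerset := by
        ext S; simp
      rw [h4, Finset.sum_powerset_neg_one_pow_card]
      refine if_congr ?_ rfl rfl
      simp only [Finset.filter_eq_empty_iff]
      exact ⟨fun h i _ => h.1 i, fun h => ⟨fun i => h (Finset.mem_univ i), hf⟩⟩
    · rw [if_neg (fun h => hf h.2)]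
      symm
      apply Finset.sum_eq_zero
      intro S _
      rw [if_neg, mul_zero]
      intro h
      exact hf fun j => (Finset.mem_Ico.1 (h j)).2.ne
  rw [h1, Nat.card_eq_fintype_card, Fintype.card_subtype, Finset.card_filter]
  push_cast
  rw [Finset.sum_congr rfl (fun f _ => h2 f), Finset.sum_comm]
  have h5 : ∀ S ∈ (Finset.univ : Finset (Fin m)).powerset,
      ∑ f : Fin n → Finset (Fin m), (-1 : ℤ) ^ S.card *
        (if ∀ j, f j ∈ Finset.Ico S Finset.univ then (1 : ℤ) else 0) =
      (-1 : ℤ) ^ S.card * ((2 : ℤ) ^ (m - S.card) - 1) ^ n := by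
    intro S _
    rw [← Finset.mul_sum]
    congr 1
    rw [← Finset.sum_filter, Finset.sum_const, nsmul_one]
    have h6 : (Finset.univ.filter fun f : Fin n → Finset (Fin m) =>
        ∀ j, f j ∈ Finset.Ico S Finset.univ) =
        Fintype.piFinset (fun _ => Finset.Ico S Finset.univ) := by
      ext f; simp only [Finset.mem_filter, Fintype.mem_piFinset, Finset.mem_univ, true_and]
    rw [h6, Fintype.card_piFinset_const, Finset.card_Ico_finset (Finset.subset_univ S)]
    have := Nat.one_le_two_pow (n := m - S.card)
    simp [Nat.cast_sub this]
  rw [Finset.sum_congr rfl h5,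
    Finset.sum_powerset_apply_card (fun k => (-1 : ℤ) ^ k * ((2 : ℤ) ^ (m - k) - 1) ^ n)]
  simp only [Finset.card_univ, Fintype.card_fin, nsmul_eq_mul]
  refine Finset.sum_congr rfl fun i _ => ?_
  ring
end

section
/- For all m, n ∈ ℕ, Σ_{i=0}^{m} (−1)^i · C(m,i) · (2^{m−i} − 1)^n = Σ_{j=0}^{n} (−1)^j · C(n,j) · (2^{n−j} − 1)^m (as integers). -/
theorem ie_expand (m n : ℕ) :
    ∑ i ∈ Finset.range (m + 1),
        (-1 : ℤ) ^ i * (m.choose i) * ((2 : ℤ) ^ (m - i) - 1) ^ n =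
      ∑ i ∈ Finset.range (m + 1), ∑ j ∈ Finset.range (n + 1),
        ((-1 : ℤ) ^ i * (m.choose i)) * ((-1 : ℤ) ^ j * (n.choose j)) *
          (2 : ℤ) ^ ((m - i) * (n - j)) := by
  refine Finset.sum_congr rfl fun i _ => ?_
  rw [show (2 : ℤ) ^ (m - i) - 1 = -1 + 2 ^ (m - i) by ring, add_pow, Finset.mul_sum]
  refine Finset.sum_congr rfl fun j _ => ?_
  rw [pow_mul]
  ring

theorem inclusion_exclusion_symmetric (m n : ℕ) :
    ∑ i ∈ Finset.range (m + 1),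
        (-1 : ℤ) ^ i * (m.choose i) * ((2 : ℤ) ^ (m - i) - 1) ^ n =
      ∑ j ∈ Finset.range (n + 1),
        (-1 : ℤ) ^ j * (n.choose j) * ((2 : ℤ) ^ (n - j) - 1) ^ m := by
  rw [ie_expand, ie_expand, Finset.sum_comm]
  refine Finset.sum_congr rfl fun j _ => Finset.sum_congr rfl fun i _ => ?_
  rw [mul_comm (m - i) (n - j)]
  ring
end

section
/- Let B(m,n) denote the number of bipartite graphs on [m] ⊎ [n] with no all-seeing vertex on either side. Then, as formal power series in two variables x, y over ℚ, Σ_{m,n ≥ 0} B(m,n) · x^m y^n/(m! n!) = e^{−x−y} · Ψ(x,y), where Ψ(x,y) = Σ_{m,n ≥ 0} 2^{mn} x^m y^n/(m! n!) and e^{−x−y} = Σ_{m,n ≥ 0} (−1)^{m+n} x^m y^n/(m! n!). -/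
/-- `B m n` is the number of bipartite graphs on `[m] ⊎ [n]` with no all-seeing vertex
on either side. -/
noncomputable def B (m n : ℕ) : ℕ :=
  Nat.card {R : Finset (Fin m × Fin n) // NoAllSeeing R}

/-- The bivariate egf `Σ B(m,n) xᵐ yⁿ/(m! n!)`, with `x`, `y` the two variables. -/
noncomputable def Bgf : MvPowerSeries (Fin 2) ℚ :=
  fun d => (B (d 0) (d 1) : ℚ) / ((d 0).factorial * (d 1).factorial)

/-- `Ψ(x, y) = Σ 2^{mn} xᵐ yⁿ/(m! n!)`. -/
noncomputable def Psi2 : MvPowerSeries (Fin 2) ℚ :=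
  fun d => (2 : ℚ) ^ (d 0 * d 1) / ((d 0).factorial * (d 1).factorial)

/-- `e^{-x-y} = Σ (-1)^{m+n} xᵐ yⁿ/(m! n!)`. -/
noncomputable def ExpNegXY : MvPowerSeries (Fin 2) ℚ :=
  fun d => (-1 : ℚ) ^ (d 0 + d 1) / ((d 0).factorial * (d 1).factorial)

lemma ite_aux1 (p q r : Prop) [Decidable p] [Decidable q] [Decidable r] (h : r ↔ p ∧ q) :
    (if r then (1 : ℚ) else 0) = (if p then 1 else 0) * (if q then 1 else 0) := by
  by_cases p <;> by_cases q <;> simp [*]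

lemma ite_aux2 (p q : Prop) [Decidable p] [Decidable q] [Decidable (p ∧ q)] (a b : ℚ) :
    (if p then a else 0) * (if q then b else 0) = a * b * (if p ∧ q then (1 : ℚ) else 0) := by
  by_cases p <;> by_cases q <;> simp [*]

lemma ind_aux {α : Type*} [DecidableEq α] (s : Finset α) :
    ∑ S ∈ s.powerset, (-1 : ℚ) ^ S.card = if s = ∅ then 1 else 0 := by
  have h := Finset.sum_powerset_neg_one_pow_card (x := s)
  have h2 := congrArg (Int.cast : ℤ → ℚ) h
  push_cast at h2
  exact h2

lemma sum_card_aux (m : ℕ) (f : ℕ → ℚ) :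
    ∑ S : Finset (Fin m), f S.card
      = ∑ p ∈ Finset.HasAntidiagonal.antidiagonal m, (m.choose p.1 : ℚ) * f p.1 := by
  have h := Finset.sum_powerset_apply_card f (x := (Finset.univ : Finset (Fin m)))
  rw [Finset.powerset_univ] at h
  rw [h, Finset.Nat.sum_antidiagonal_eq_sum_range_succ_mk]
  simp

open Classical in
lemma count_aux {m n : ℕ} (S : Finset (Fin m)) (T : Finset (Fin n)) :
    (∑ R : Finset (Fin m × Fin n),
      if (∀ i ∈ S, ∀ j, (i, j) ∈ R) ∧ (∀ j ∈ T, ∀ i, (i, j) ∈ R) then (1 : ℚ) else 0)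
      = 2 ^ ((m - S.card) * (n - T.card)) := by
  rw [Finset.sum_boole]
  have : (Finset.univ.filter fun R : Finset (Fin m × Fin n) =>
      (∀ i ∈ S, ∀ j, (i, j) ∈ R) ∧ (∀ j ∈ T, ∀ i, (i, j) ∈ R)).card
      = (Sᶜ ×ˢ Tᶜ).powerset.card := by
    refine Finset.card_nbij' (fun R => Rᶜ) (fun R => Rᶜ) ?_ ?_ ?_ ?_
    · intro R hR
      simp only [Finset.coe_filter, Finset.mem_univ, true_and, Set.mem_ofPred_eq] at hR
      simp only [Finset.coe_powerset, Set.mem_preimage, Set.mem_powerset_iff, Finset.coe_subset]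
      rintro ⟨i, j⟩ h
      simp only [Finset.mem_compl, Finset.mem_product] at h ⊢
      exact ⟨fun hi => h (hR.1 i hi j), fun hj => h (hR.2 j hj i)⟩
    · intro R hR
      simp only [Finset.coe_powerset, Set.mem_preimage, Set.mem_powerset_iff,
        Finset.coe_subset] at hR
      simp only [Finset.coe_filter, Finset.mem_univ, true_and, Set.mem_ofPred_eq,
        Finset.mem_compl]
      refine ⟨fun i hi j h => ?_, fun j hj i h => ?_⟩
      · have := hR h
        simp [hi] at this
      · have := hR h
        simp [hj] at this
    · intro R _; simp
    · intro R _; simp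
  rw [this, Finset.card_powerset, Finset.card_product, Finset.card_compl, Finset.card_compl]
  simp

open Classical in
lemma B_sum (m n : ℕ) : (B m n : ℚ) =
    ∑ S : Finset (Fin m), ∑ T : Finset (Fin n),
      (-1 : ℚ) ^ S.card * (-1) ^ T.card * 2 ^ ((m - S.card) * (n - T.card)) := by
  have h1 : (B m n : ℚ) = ∑ R : Finset (Fin m × Fin n), if NoAllSeeing R then (1 : ℚ) else 0 := by
    rw [Finset.sum_boole, B, Nat.card_eq_fintype_card, Fintype.card_subtype]
  have h2 : ∀ R : Finset (Fin m × Fin n), (if NoAllSeeing R then (1 : ℚ) else 0)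
      = ∑ S : Finset (Fin m), ∑ T : Finset (Fin n), (-1 : ℚ) ^ S.card * (-1) ^ T.card *
        if (∀ i ∈ S, ∀ j, (i, j) ∈ R) ∧ (∀ j ∈ T, ∀ i, (i, j) ∈ R) then (1 : ℚ) else 0 := by
    intro R
    have ha := ind_aux (Finset.univ.filter fun i : Fin m => ∀ j, (i, j) ∈ R)
    have hb := ind_aux (Finset.univ.filter fun j : Fin n => ∀ i, (i, j) ∈ R)
    have ea : (Finset.univ.filter fun i : Fin m => ∀ j, (i, j) ∈ R).powerset
        = Finset.univ.filter fun S : Finset (Fin m) => ∀ i ∈ S, ∀ j, (i, j) ∈ R := by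
      ext S; simp [Finset.subset_iff]
    have eb : (Finset.univ.filter fun j : Fin n => ∀ i, (i, j) ∈ R).powerset
        = Finset.univ.filter fun T : Finset (Fin n) => ∀ j ∈ T, ∀ i, (i, j) ∈ R := by
      ext S; simp [Finset.subset_iff]
    rw [ea, Finset.sum_filter] at ha
    rw [eb, Finset.sum_filter] at hb
    have : (if NoAllSeeing R then (1 : ℚ) else 0) =
      (if (Finset.univ.filter fun i : Fin m => ∀ j, (i, j) ∈ R) = ∅ then 1 else 0) *
      (if (Finset.univ.filter fun j : Fin n => ∀ i, (i, j) ∈ R) = ∅ then 1 else 0) := by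
      apply ite_aux1
      simp only [NoAllSeeing, Finset.filter_eq_empty_iff, Finset.mem_univ, true_imp_iff]
    rw [this, ← ha, ← hb, Finset.sum_mul_sum]
    refine Finset.sum_congr rfl fun S _ => Finset.sum_congr rfl fun T _ => ?_
    exact ite_aux2 _ _ _ _
  rw [h1, Finset.sum_congr rfl fun R _ => h2 R, Finset.sum_comm]
  refine Finset.sum_congr rfl fun S _ => ?_
  rw [Finset.sum_comm]
  refine Finset.sum_congr rfl fun T _ => ?_
  rw [← Finset.mul_sum, count_aux]

lemma B_anti (m n : ℕ) : (B m n : ℚ) =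
    ∑ p ∈ Finset.HasAntidiagonal.antidiagonal m, ∑ q ∈ Finset.HasAntidiagonal.antidiagonal n,
      (m.choose p.1 : ℚ) * (n.choose q.1) * ((-1 : ℚ) ^ (p.1 + q.1) * 2 ^ (p.2 * q.2)) := by
  rw [B_sum, sum_card_aux m fun k => ∑ T : Finset (Fin n),
      (-1 : ℚ) ^ k * (-1) ^ T.card * 2 ^ ((m - k) * (n - T.card))]
  refine Finset.sum_congr rfl fun p hp => ?_
  rw [sum_card_aux n fun l => (-1 : ℚ) ^ p.1 * (-1) ^ l * 2 ^ ((m - p.1) * (n - l)),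
    Finset.mul_sum]
  refine Finset.sum_congr rfl fun q hq => ?_
  rw [Finset.HasAntidiagonal.mem_antidiagonal] at hp hq
  rw [show m - p.1 = p.2 by omega, show n - q.1 = q.2 by omega]
  ring

lemma choose_aux {m : ℕ} {p : ℕ × ℕ} (hp : p ∈ Finset.HasAntidiagonal.antidiagonal m) :
    (m.choose p.1 : ℚ) / m.factorial = 1 / (p.1.factorial * p.2.factorial) := by
  rw [Finset.HasAntidiagonal.mem_antidiagonal] at hp
  subst hp
  have h := Nat.add_choose_mul_factorial_mul_factorial p.1 p.2
  rw [← Nat.choose_symm_add] at h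
  have h' : ((p.1 + p.2).choose p.1 : ℚ) * p.1.factorial * p.2.factorial
    = (p.1 + p.2).factorial := by exact_mod_cast h
  have h1 : (p.1.factorial : ℚ) ≠ 0 := by positivity
  have h2 : (p.2.factorial : ℚ) ≠ 0 := by positivity
  have h3 : ((p.1 + p.2).factorial : ℚ) ≠ 0 := by positivity
  field_simp
  linarith

theorem Bgf_eq_expNeg_mul_psi : Bgf = ExpNegXY * Psi2 := by
  classical
  ext d
  rw [MvPowerSeries.coeff_mul]
  have e1 : MvPowerSeries.coeff d Bgf
    = (B (d 0) (d 1) : ℚ) / ((d 0).factorial * (d 1).factorial) := rfl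
  have e2 : ∀ d, MvPowerSeries.coeff d ExpNegXY
    = (-1 : ℚ) ^ (d 0 + d 1) / ((d 0).factorial * (d 1).factorial) := fun _ => rfl
  have e3 : ∀ d, MvPowerSeries.coeff d Psi2
    = (2 : ℚ) ^ (d 0 * d 1) / ((d 0).factorial * (d 1).factorial) := fun _ => rfl
  simp only [e1, e2, e3]
  rw [B_anti, ← Finset.sum_product', Finset.sum_div]
  refine Finset.sum_nbij'
    (fun z => (Finsupp.equivFunOnFinite.symm ![z.1.1, z.2.1],
      Finsupp.equivFunOnFinite.symm ![z.1.2, z.2.2]))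
    (fun w => ((w.1 0, w.2 0), (w.1 1, w.2 1))) ?_ ?_ ?_ ?_ ?_
  · intro z hz
    simp only [Finset.mem_product, Finset.HasAntidiagonal.mem_antidiagonal] at hz ⊢
    ext i
    fin_cases i <;> simp [hz]
  · intro w hw
    simp only [Finset.mem_product, Finset.HasAntidiagonal.mem_antidiagonal] at hw ⊢
    subst hw
    simp
  · intro z _; simp
  · intro w _
    refine Prod.ext ?_ ?_ <;> ext i <;> fin_cases i <;> simp
  · intro z hz
    rw [Finset.mem_product] at hz
    have h1 := choose_aux hz.1
    have h2 := choose_aux hz.2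
    simp only [Finsupp.equivFunOnFinite_symm_apply_apply, Matrix.cons_val_zero, Matrix.cons_val_one]
    rw [show ∀ a b c f g : ℚ, a * b * c / (f * g) = (a / f) * (b / g) * c by
      intros; ring, h1, h2]
    ring
end

section
/- Let b(m,n) denote the number of bipartite graphs on [m] ⊎ [n] with no all-seeing vertex on either side, at least one isolated vertex in [m], and at least one isolated vertex in [n]. Then, as formal power series in x over ℚ, Σ_{m,n ≥ 1} b(m,n) · x^{m+n}/(m! n!) = (1 − e^{−x})^2 · Ψ(x), where Ψ(x) = Σ_{m,n ≥ 0} 2^{mn} x^{m+n}/(m! n!) and e^{−x} is the power series Σ_{k ≥ 0} (−1)^k x^k/k!. -/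
/-- vertex `i ∈ [m]` is isolated in `R`. -/
def IsolatedLeft {m n : ℕ} (R : Finset (Fin m × Fin n)) (i : Fin m) : Prop :=
  ∀ j : Fin n, (i, j) ∉ R

/-- vertex `j ∈ [n]` is isolated in `R`. -/
def IsolatedRight {m n : ℕ} (R : Finset (Fin m × Fin n)) (j : Fin n) : Prop :=
  ∀ i : Fin m, (i, j) ∉ R

/-- `Ψ(x) = Σ_{m,n ≥ 0} 2^{mn} x^{m+n}/(m! n!)`. -/
noncomputable def Psi : PowerSeries ℚ :=
  PowerSeries.mk fun N =>
    ∑ p ∈ Finset.HasAntidiagonal.antidiagonal N, (2 : ℚ) ^ (p.1 * p.2) / (p.1.factorial * p.2.factorial)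

/-- `e^{-x} = Σ_{k ≥ 0} (-1)^k x^k / k!`. -/
noncomputable def ExpNeg : PowerSeries ℚ :=
  PowerSeries.mk fun k => (-1 : ℚ) ^ k / k.factorial

/-- The egf `Σ_{m,n ≥ 1} b(m,n) x^{m+n}/(m! n!)` of a double sequence `b`. -/
noncomputable def egf2 (b : ℕ → ℕ → ℕ) : PowerSeries ℚ :=
  PowerSeries.mk fun N =>
    ∑ p ∈ (Finset.HasAntidiagonal.antidiagonal N).filter (fun p => 1 ≤ p.1 ∧ 1 ≤ p.2),
      (b p.1 p.2 : ℚ) / (p.1.factorial * p.2.factorial)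

/-- graphs with no all-seeing vertex, an isolated vertex in `[m]` and one in `[n]`. -/
noncomputable def bIsoIso (m n : ℕ) : ℕ :=
  Nat.card {R : Finset (Fin m × Fin n) // NoAllSeeing R ∧
    (∃ i, IsolatedLeft R i) ∧ (∃ j, IsolatedRight R j)}

/-- inclusion-exclusion weight -/
def gw (s : ℕ) : ℚ := (if s = 0 then 1 else 0) - (-1) ^ s

/-- Diagonal series of a double sequence. -/
noncomputable def diagSeries (F : ℕ → ℕ → ℚ) : PowerSeries ℚ :=
  PowerSeries.mk fun N => ∑ p ∈ Finset.HasAntidiagonal.antidiagonal N, F p.1 p.2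

lemma diagSeries_left (e : ℕ → ℚ) (F : ℕ → ℕ → ℚ) :
    diagSeries (fun m n => ∑ p ∈ Finset.HasAntidiagonal.antidiagonal m, e p.1 * F p.2 n)
      = PowerSeries.mk e * diagSeries F := by
  ext N
  simp only [diagSeries, PowerSeries.coeff_mul, PowerSeries.coeff_mk, Finset.mul_sum]
  rw [Finset.sum_sigma', Finset.sum_sigma']
  refine Finset.sum_nbij' (fun x => ⟨(x.2.1, x.2.2 + x.1.2), (x.2.2, x.1.2)⟩)
    (fun x => ⟨(x.1.1 + x.2.1, x.2.2), (x.1.1, x.2.1)⟩) ?_ ?_ ?_ ?_ ?_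
  · rintro ⟨⟨a, b⟩, ⟨c, d⟩⟩ h
    simp only [Finset.mem_sigma, Finset.HasAntidiagonal.mem_antidiagonal] at h ⊢
    exact ⟨by omega, trivial⟩
  · rintro ⟨⟨a, b⟩, ⟨c, d⟩⟩ h
    simp only [Finset.mem_sigma, Finset.HasAntidiagonal.mem_antidiagonal] at h ⊢
    exact ⟨by omega, trivial⟩
  · rintro ⟨⟨a, b⟩, ⟨c, d⟩⟩ h
    simp only [Finset.mem_sigma, Finset.HasAntidiagonal.mem_antidiagonal] at h ⊢
    obtain ⟨-, rfl⟩ := h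
    rfl
  · rintro ⟨⟨a, b⟩, ⟨c, d⟩⟩ h
    simp only [Finset.mem_sigma, Finset.HasAntidiagonal.mem_antidiagonal] at h ⊢
    obtain ⟨-, rfl⟩ := h
    rfl
  · rintro ⟨⟨a, b⟩, ⟨c, d⟩⟩ h
    rfl

lemma diagSeries_swap (F : ℕ → ℕ → ℚ) :
    diagSeries (fun m n => F n m) = diagSeries F := by
  ext N
  simp only [diagSeries, PowerSeries.coeff_mk]
  exact Finset.Nat.sum_antidiagonal_swap (f := fun p : ℕ × ℕ => F p.1 p.2)

lemma diagSeries_right (e : ℕ → ℚ) (F : ℕ → ℕ → ℚ) :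
    diagSeries (fun m n => ∑ p ∈ Finset.HasAntidiagonal.antidiagonal n, e p.1 * F m p.2)
      = PowerSeries.mk e * diagSeries F := by
  rw [← diagSeries_swap F, ← diagSeries_left, ← diagSeries_swap]

lemma sum_gw {α : Type*} [DecidableEq α] (L : Finset α) :
    ∑ S ∈ L.powerset, gw S.card = if L.Nonempty then 1 else 0 := by
  have h := Finset.sum_powerset_neg_one_pow_card (x := L)
  have h' : ∑ S ∈ L.powerset, ((-1 : ℚ)) ^ S.card = if L = ∅ then 1 else 0 := by
    have := congrArg (Int.cast : ℤ → ℚ) h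
    push_cast at this
    exact this
  simp only [gw, Finset.sum_sub_distrib, h', Finset.card_eq_zero]
  rw [Finset.sum_ite_eq']
  by_cases hL : L = ∅
  · simp [hL]
  · simp [hL, Finset.nonempty_iff_ne_empty]

lemma sum_subsets (m : ℕ) (f : ℕ → ℕ → ℚ) :
    ∑ S : Finset (Fin m), f S.card (m - S.card)
      = ∑ p ∈ Finset.HasAntidiagonal.antidiagonal m, (m.factorial : ℚ) / (p.1.factorial * p.2.factorial) * f p.1 p.2 := by
  rw [← Finset.powerset_univ, Finset.sum_powerset_apply_card (fun k => f k (m - k)),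
    Finset.Nat.sum_antidiagonal_eq_sum_range_succ_mk, Finset.card_univ, Fintype.card_fin]
  refine Finset.sum_congr rfl fun k hk => ?_
  have hk' : k ≤ m := by simpa [Nat.lt_succ_iff] using hk
  rw [nsmul_eq_mul, Nat.cast_choose ℚ hk']

open Classical in
lemma card_avoid (m n : ℕ) (S : Finset (Fin m)) (T : Finset (Fin n)) :
    ((Finset.univ.filter fun R : Finset (Fin m × Fin n) =>
      (∀ i ∈ S, IsolatedLeft R i) ∧ (∀ j ∈ T, IsolatedRight R j)).card : ℚ)
      = 2 ^ ((m - S.card) * (n - T.card)) := by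
  have : (Finset.univ.filter fun R : Finset (Fin m × Fin n) =>
      (∀ i ∈ S, IsolatedLeft R i) ∧ (∀ j ∈ T, IsolatedRight R j)) = (Sᶜ ×ˢ Tᶜ).powerset := by
    ext R
    rw [Finset.mem_filter]
    simp only [Finset.mem_univ, true_and, Finset.mem_powerset,
      IsolatedLeft, IsolatedRight, Finset.subset_iff, Finset.mem_product, Finset.mem_compl, Prod.forall]
    constructor
    · rintro ⟨h1, h2⟩ i j h
      exact ⟨fun hi => h1 i hi j h, fun hj => h2 j hj i h⟩
    · intro h
      exact ⟨fun i hi j hR => (h i j hR).1 hi, fun j hj i hR => (h i j hR).2 hj⟩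
  rw [this]
  simp [Finset.card_compl]

open Classical in
lemma b_eq_sum (m n : ℕ) : (bIsoIso m n : ℚ) =
    ∑ S : Finset (Fin m), ∑ T : Finset (Fin n),
      gw S.card * (gw T.card * 2 ^ ((m - S.card) * (n - T.card))) := by
  have h1 : bIsoIso m n = (Finset.univ.filter fun R : Finset (Fin m × Fin n) =>
      (∃ i, IsolatedLeft R i) ∧ (∃ j, IsolatedRight R j)).card := by
    rw [bIsoIso, Nat.card_eq_fintype_card, Fintype.card_subtype]
    congr 1
    ext R
    simp only [Finset.mem_filter, Finset.mem_univ, true_and, and_iff_right_iff_imp]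
    rintro ⟨⟨i, hi⟩, ⟨j, hj⟩⟩
    exact ⟨fun i' h => hj i' (h j), fun j' h => hi j' (h i)⟩
  have hL : ∀ R : Finset (Fin m × Fin n), (if ∃ i, IsolatedLeft R i then (1 : ℚ) else 0) =
      ∑ S : Finset (Fin m), if ∀ i ∈ S, IsolatedLeft R i then gw S.card else 0 := by
    intro R
    have := sum_gw (Finset.univ.filter fun i => IsolatedLeft R i)
    simp only [Finset.filter_nonempty_iff, Finset.mem_univ, true_and] at this
    rw [← this, ← Finset.sum_filter]
    refine Finset.sum_congr ?_ fun _ _ => rfl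
    ext S
    simp [Finset.subset_iff]
  have hR : ∀ R : Finset (Fin m × Fin n), (if ∃ i, IsolatedRight R i then (1 : ℚ) else 0) =
      ∑ S : Finset (Fin n), if ∀ i ∈ S, IsolatedRight R i then gw S.card else 0 := by
    intro R
    have := sum_gw (Finset.univ.filter fun i => IsolatedRight R i)
    simp only [Finset.filter_nonempty_iff, Finset.mem_univ, true_and] at this
    rw [← this, ← Finset.sum_filter]
    refine Finset.sum_congr ?_ fun _ _ => rfl
    ext S
    simp [Finset.subset_iff]
  rw [h1, Finset.card_filter]
  push_cast
  have h2 : ∀ R : Finset (Fin m × Fin n),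
      (if (∃ i, IsolatedLeft R i) ∧ (∃ j, IsolatedRight R j) then (1 : ℚ) else 0) =
      ∑ S : Finset (Fin m), ∑ T : Finset (Fin n), gw S.card * (gw T.card *
        if (∀ i ∈ S, IsolatedLeft R i) ∧ (∀ j ∈ T, IsolatedRight R j) then 1 else 0) := by
    intro R
    have : (if (∃ i, IsolatedLeft R i) ∧ (∃ j, IsolatedRight R j) then (1 : ℚ) else 0) =
      (if ∃ i, IsolatedLeft R i then (1 : ℚ) else 0) *
        (if ∃ i, IsolatedRight R i then (1 : ℚ) else 0) := by
      rw [ite_and]; split_ifs <;> simp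
    rw [this, hL, hR, Finset.sum_mul_sum]
    refine Finset.sum_congr rfl fun S _ => Finset.sum_congr rfl fun T _ => ?_
    rw [ite_and]; split_ifs <;> simp
  rw [Finset.sum_congr rfl fun R _ => h2 R, Finset.sum_comm]
  refine Finset.sum_congr rfl fun S _ => ?_
  rw [Finset.sum_comm]
  refine Finset.sum_congr rfl fun T _ => ?_
  rw [← Finset.mul_sum, ← Finset.mul_sum, ← card_avoid, Finset.card_filter]
  push_cast
  rfl

lemma b_div (m n : ℕ) : (bIsoIso m n : ℚ) / (m.factorial * n.factorial) =
    ∑ p ∈ Finset.HasAntidiagonal.antidiagonal m, (gw p.1 / p.1.factorial) *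
      ∑ q ∈ Finset.HasAntidiagonal.antidiagonal n, (gw q.1 / q.1.factorial) *
        ((2 : ℚ) ^ (p.2 * q.2) / (p.2.factorial * q.2.factorial)) := by
  rw [b_eq_sum]
  have h : ∀ S : Finset (Fin m), ∑ T : Finset (Fin n),
      gw S.card * (gw T.card * 2 ^ ((m - S.card) * (n - T.card))) = _ := fun S =>
    sum_subsets n (fun t n' => gw S.card * (gw t * 2 ^ ((m - S.card) * n')))
  rw [Finset.sum_congr rfl fun S _ => h S,
    sum_subsets m (fun s m' => ∑ p ∈ Finset.HasAntidiagonal.antidiagonal n,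
      (n.factorial : ℚ) / (p.1.factorial * p.2.factorial) * (gw s * (gw p.1 * 2 ^ (m' * p.2)))),
    Finset.sum_div]
  refine Finset.sum_congr rfl fun p _ => ?_
  rw [Finset.mul_sum, Finset.mul_sum, Finset.sum_div]
  refine Finset.sum_congr rfl fun q _ => ?_
  have a1 : (m.factorial : ℚ) ≠ 0 := by positivity
  have a2 : (n.factorial : ℚ) ≠ 0 := by positivity
  field_simp

lemma b_zero (m n : ℕ) (h : ¬ (1 ≤ m ∧ 1 ≤ n)) : bIsoIso m n = 0 := by
  rw [bIsoIso, Nat.card_eq_zero]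
  left
  refine ⟨?_⟩
  rintro ⟨R, -, ⟨i, -⟩, ⟨j, -⟩⟩
  have := i.isLt
  have := j.isLt
  omega

theorem egf_isoIso : egf2 bIsoIso = (1 - ExpNeg) ^ 2 * Psi := by
  have h1 : egf2 bIsoIso =
      diagSeries (fun m n => (bIsoIso m n : ℚ) / (m.factorial * n.factorial)) := by
    ext N
    simp only [egf2, diagSeries, PowerSeries.coeff_mk]
    rw [Finset.sum_filter]
    refine Finset.sum_congr rfl fun p _ => ?_
    split_ifs with h
    · rfl
    · simp [b_zero _ _ h]
  have h2 : (1 - ExpNeg) = PowerSeries.mk fun s => gw s / s.factorial := by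
    ext N
    simp only [ExpNeg, map_sub, PowerSeries.coeff_mk, PowerSeries.coeff_one, gw, sub_div]
    congr 1
    split_ifs with h <;> simp [h]
  have h3 : Psi = diagSeries fun m n => (2 : ℚ) ^ (m * n) / (m.factorial * n.factorial) := rfl
  rw [h1, h2, h3, pow_two, mul_assoc, ← diagSeries_right, ← diagSeries_left]
  congr 1
  funext m n
  exact b_div m n
end

section
/- Let b(m,n) denote the number of bipartite graphs on [m] ⊎ [n] with no all-seeing vertex on either side, no isolated vertex in [m], and no isolated vertex in [n]. Then, as formal power series in x over ℚ, Σ_{m,n ≥ 1} b(m,n) · x^{m+n}/(m! n!) = (2e^{−x} − 1)·((2e^{−x} − 1)·Ψ(x) − 1), where Ψ(x) = Σ_{m,n ≥ 0} 2^{mn} x^{m+n}/(m! n!) and e^{−x} is the power series Σ_{k ≥ 0} (−1)^k x^k/k!. -/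
/-- graphs with no all-seeing vertex and no isolated vertex on either side. -/
noncomputable def bNoIsoNoIso (m n : ℕ) : ℕ :=
  Nat.card {R : Finset (Fin m × Fin n) // NoAllSeeing R ∧
    (∀ i, ¬ IsolatedLeft R i) ∧ (∀ j, ¬ IsolatedRight R j)}

open Finset

section Counting
variable {α β : Type} [Fintype α] [Fintype β] [DecidableEq α] [DecidableEq β]

lemma aux_prod {ι : Type} [Fintype ι] [DecidableEq ι] (p : ι → Prop) [DecidablePred p] :
    (if ∀ i, ¬ p i then (1 : ℚ) else 0)
      = ∑ A : Finset ι, (-1 : ℚ) ^ #A * (if ∀ i ∈ A, p i then 1 else 0) := by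
  have h1 : (if ∀ i, ¬ p i then (1 : ℚ) else 0)
      = ∏ i : ι, ((-(if p i then (1 : ℚ) else 0)) + 1) := by
    split_ifs with h
    · symm
      apply Finset.prod_eq_one
      intro i _
      simp [h i]
    · push Not at h
      obtain ⟨i, hi⟩ := h
      symm
      apply Finset.prod_eq_zero (mem_univ i)
      simp [hi]
  rw [h1, Finset.prod_add, Finset.powerset_univ]
  apply Finset.sum_congr rfl
  intro A _
  rw [Finset.prod_neg, Finset.prod_ite_zero]
  simp

/-- the weight -/
def wgt (a b : ℕ) : ℚ :=
  if b = 0 then 2 ^ a else if a = 0 then 2 ^ b else 2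

lemma count_const {γ : Type} [Fintype γ] [DecidableEq γ] [Nonempty γ] :
    ∑ c : γ → Bool, (if ∃ v, ∀ j, c j = v then (1 : ℚ) else 0) = 2 := by
  have h : ∀ c : γ → Bool, (if ∃ v, ∀ j, c j = v then (1 : ℚ) else 0)
      = ∑ v : Bool, if c = (fun _ => v) then 1 else 0 := by
    intro c
    split_ifs with h
    · obtain ⟨v, hv⟩ := h
      have : c = fun _ => v := funext hv
      subst this
      obtain ⟨x⟩ := ‹Nonempty γ›
      cases v <;> simp [funext_iff]
    · symm
      apply Finset.sum_eq_zero
      intro v _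
      rw [if_neg]
      rintro rfl
      exact h ⟨v, fun _ => rfl⟩
  simp_rw [h]
  rw [Finset.sum_comm]
  simp

lemma count_rows [Nonempty β] (A : Finset α) :
    ∑ R : α → β → Bool, (if ∀ i ∈ A, ∃ v, ∀ j, R i j = v then (1 : ℚ) else 0)
      = 2 ^ #A * 2 ^ ((Fintype.card α - #A) * Fintype.card β) := by
  have h : ∀ R : α → β → Bool, (if ∀ i ∈ A, ∃ v, ∀ j, R i j = v then (1 : ℚ) else 0)
      = ∏ i, (if i ∈ A then (if ∃ v, ∀ j, R i j = v then (1 : ℚ) else 0) else 1) := by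
    intro R
    rw [Finset.prod_ite_mem, Finset.univ_inter, Finset.prod_ite_zero]
    simp
  simp_rw [h]
  rw [← Fintype.prod_sum (f := fun (i : α) (c : β → Bool) =>
    (if i ∈ A then (if ∃ v, ∀ j, c j = v then (1 : ℚ) else 0) else 1))]
  have h2 : ∀ i : α, ∑ c : β → Bool,
      (if i ∈ A then (if ∃ v, ∀ j, c j = v then (1 : ℚ) else 0) else 1)
      = if i ∈ A then 2 else 2 ^ Fintype.card β := by
    intro i
    split_ifs with hi
    · exact count_const
    · simp
  simp_rw [h2]
  rw [Finset.prod_ite]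
  simp only [Finset.prod_const, Finset.filter_mem_eq_inter, Finset.univ_inter]
  have : #(univ.filter fun i => i ∉ A) = Fintype.card α - #A := by
    rw [← Finset.card_compl]; congr 1; ext; simp
  rw [this, ← pow_mul, mul_comm (Fintype.card β)]

lemma count_both (A : Finset α) (B : Finset β) (hA : A.Nonempty) (hB : B.Nonempty) :
    ∑ R : α → β → Bool, (if (∀ i ∈ A, ∃ v, ∀ j, R i j = v) ∧ (∀ j ∈ B, ∃ v, ∀ i, R i j = v)
        then (1 : ℚ) else 0)
      = 2 * 2 ^ ((Fintype.card α - #A) * (Fintype.card β - #B)) := by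
  obtain ⟨a, ha⟩ := hA
  obtain ⟨b, hb⟩ := hB
  have h : ∀ R : α → β → Bool,
      (if (∀ i ∈ A, ∃ v, ∀ j, R i j = v) ∧ (∀ j ∈ B, ∃ v, ∀ i, R i j = v) then (1 : ℚ) else 0)
      = ∑ v : Bool, ∏ i, ∏ j, if ((i ∈ A ∨ j ∈ B) → R i j = v) then (1 : ℚ) else 0 := by
    intro R
    have h0 : ∀ v : Bool, (∏ i, ∏ j, if ((i ∈ A ∨ j ∈ B) → R i j = v) then (1 : ℚ) else 0)
        = if R a b = v then
          (if ∀ i j, (i ∈ A ∨ j ∈ B) → R i j = v then (1 : ℚ) else 0) else 0 := by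
      intro v
      by_cases h1 : ∀ i j, (i ∈ A ∨ j ∈ B) → R i j = v
      · rw [if_pos (h1 a b (Or.inl ha)), if_pos h1]
        exact Finset.prod_eq_one fun i _ => Finset.prod_eq_one fun j _ => if_pos (h1 i j)
      · rw [if_neg h1, ite_self]
        push Not at h1
        obtain ⟨i, j, hij, hv⟩ := h1
        refine Finset.prod_eq_zero (mem_univ i) (Finset.prod_eq_zero (mem_univ j) (if_neg ?_))
        exact fun h => hv (h hij)
    simp_rw [h0]
    rw [Finset.sum_ite_eq]
    simp only [Finset.mem_univ, if_true]
    congr 1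
    apply propext
    constructor
    · rintro ⟨h1, h2⟩ i j (hi | hj)
      · obtain ⟨v, hv⟩ := h1 i hi
        obtain ⟨w, hw⟩ := h2 b hb
        rw [hv, ← hv b, hw, hw]
      · obtain ⟨v, hv⟩ := h1 a ha
        obtain ⟨w, hw⟩ := h2 j hj
        rw [hw, ← hw a, hv, hv]
    · intro h
      exact ⟨fun i hi => ⟨R a b, fun j => h i j (Or.inl hi)⟩,
        fun j hj => ⟨R a b, fun i => h i j (Or.inr hj)⟩⟩
  simp_rw [h]
  rw [Finset.sum_comm]
  have h3 : ∀ v : Bool, ∑ R : α → β → Bool,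
      ∏ i, ∏ j, (if ((i ∈ A ∨ j ∈ B) → R i j = v) then (1 : ℚ) else 0)
      = 2 ^ ((Fintype.card α - #A) * (Fintype.card β - #B)) := by
    intro v
    rw [← Fintype.prod_sum (f := fun (i : α) (c : β → Bool) =>
      ∏ j, (if ((i ∈ A ∨ j ∈ B) → c j = v) then (1 : ℚ) else 0))]
    have h4 : ∀ i : α, ∑ c : β → Bool,
        ∏ j, (if ((i ∈ A ∨ j ∈ B) → c j = v) then (1 : ℚ) else 0)
        = if i ∈ A then 1 else 2 ^ (Fintype.card β - #B) := by
      intro i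
      rw [← Fintype.prod_sum (f := fun (j : β) (c : Bool) =>
        (if ((i ∈ A ∨ j ∈ B) → c = v) then (1 : ℚ) else 0))]
      have h5 : ∀ j : β, ∑ c : Bool, (if ((i ∈ A ∨ j ∈ B) → c = v) then (1 : ℚ) else 0)
          = if i ∈ A ∨ j ∈ B then 1 else 2 := by
        intro j
        by_cases hij : i ∈ A ∨ j ∈ B
        · simp [hij]
        · simp [hij]
      simp_rw [h5]
      by_cases hi : i ∈ A
      · simp [hi]
      · simp only [hi, false_or, if_false]
        rw [Finset.prod_ite]
        have : #(univ.filter fun i => i ∉ B) = Fintype.card β - #B := by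
          rw [← Finset.card_compl]; congr 1; ext; simp
        simp [this]
    simp_rw [h4]
    rw [Finset.prod_ite]
    have : #(univ.filter fun i => i ∉ A) = Fintype.card α - #A := by
      rw [← Finset.card_compl]; congr 1; ext; simp
    simp only [Finset.prod_const, this, one_pow, one_mul]
    rw [← pow_mul, mul_comm]
  simp_rw [h3]
  simp

lemma count_all [Nonempty α] [Nonempty β] (A : Finset α) (B : Finset β) :
    ∑ R : α → β → Bool, (if (∀ i ∈ A, ∃ v, ∀ j, R i j = v) ∧ (∀ j ∈ B, ∃ v, ∀ i, R i j = v)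
        then (1 : ℚ) else 0)
      = wgt #A #B * 2 ^ ((Fintype.card α - #A) * (Fintype.card β - #B)) := by
  rcases B.eq_empty_or_nonempty with rfl | hB
  · simpa [wgt] using count_rows (β := β) A
  rcases A.eq_empty_or_nonempty with rfl | hA
  · have := count_rows (α := β) (β := α) B
    rw [← Equiv.sum_comp (Equiv.piComm (fun (_ : α) (_ : β) => Bool))] at this
    simp only [Equiv.piComm_apply, Function.swap] at this
    have hB0 : #B ≠ 0 := hB.card_pos.ne'
    simp only [Finset.notMem_empty, false_imp_iff, implies_true, true_and, wgt,
      Finset.card_empty, if_neg hB0, if_true, Nat.sub_zero]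
    rw [this, mul_comm (Fintype.card α)]
  · rw [count_both A B hA hB]
    simp [wgt, hA.ne_empty, hB.ne_empty]

lemma count_good [Nonempty α] [Nonempty β] :
    ∑ R : α → β → Bool, (if (∀ i, ¬ ∃ v, ∀ j, R i j = v) ∧ (∀ j, ¬ ∃ v, ∀ i, R i j = v)
        then (1 : ℚ) else 0)
      = ∑ A : Finset α, ∑ B : Finset β, (-1) ^ #A * (-1) ^ #B *
         (wgt #A #B * 2 ^ ((Fintype.card α - #A) * (Fintype.card β - #B))) := by
  have h : ∀ R : α → β → Bool,
      (if (∀ i, ¬ ∃ v, ∀ j, R i j = v) ∧ (∀ j, ¬ ∃ v, ∀ i, R i j = v) then (1 : ℚ) else 0)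
      = ∑ A : Finset α, ∑ B : Finset β, (-1) ^ #A * (-1) ^ #B *
        (if (∀ i ∈ A, ∃ v, ∀ j, R i j = v) ∧ (∀ j ∈ B, ∃ v, ∀ i, R i j = v)
        then (1 : ℚ) else 0) := by
    intro R
    have h1 := aux_prod (fun i => ∃ v, ∀ j, R i j = v)
    have h2 := aux_prod (fun j => ∃ v, ∀ i, R i j = v)
    have h3 : ∀ (p q : Prop) [Decidable p] [Decidable q], (if p ∧ q then (1 : ℚ) else 0)
        = (if p then 1 else 0) * (if q then 1 else 0) := by
      intro p q _ _
      by_cases hp : p <;> by_cases hq : q <;> simp [hp, hq]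
    rw [h3, h1, h2, Finset.sum_mul_sum]
    apply Finset.sum_congr rfl
    intro A _
    apply Finset.sum_congr rfl
    intro B _
    rw [h3]
    ring
  simp_rw [h]
  rw [Finset.sum_comm]
  apply Finset.sum_congr rfl
  intro A _
  rw [Finset.sum_comm]
  apply Finset.sum_congr rfl
  intro B _
  rw [← Finset.mul_sum, count_all]

end Counting

lemma b_eq (m n : ℕ) (hm : 1 ≤ m) (hn : 1 ≤ n) :
    (bNoIsoNoIso m n : ℚ) = ∑ a ∈ range (m + 1), ∑ b ∈ range (n + 1),
      m.choose a * (n.choose b * ((-1) ^ a * (-1) ^ b * (wgt a b * 2 ^ ((m - a) * (n - b))))) := by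
  have : Nonempty (Fin m) := ⟨⟨0, hm⟩⟩
  have : Nonempty (Fin n) := ⟨⟨0, hn⟩⟩
  have h := count_good (α := Fin m) (β := Fin n)
  simp only [Fintype.card_fin] at h
  have hB : ∀ a : ℕ, ∑ B : Finset (Fin n), (-1 : ℚ) ^ a * (-1) ^ #B *
         (wgt a #B * 2 ^ ((m - a) * (n - #B))) = ∑ b ∈ range (n + 1),
      (n.choose b * ((-1) ^ a * (-1) ^ b * (wgt a b * 2 ^ ((m - a) * (n - b))))) := by
    intro a
    have := Finset.sum_powerset_apply_card (x := (univ : Finset (Fin n))) (fun b => (-1 : ℚ) ^ a * (-1) ^ b *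
         (wgt a b * 2 ^ ((m - a) * (n - b))))
    simpa only [Finset.powerset_univ, Finset.card_univ, Fintype.card_fin, nsmul_eq_mul] using this
  simp_rw [hB] at h
  have := Finset.sum_powerset_apply_card (x := (univ : Finset (Fin m))) (fun a => ∑ b ∈ range (n + 1),
      ((n.choose b : ℚ) * ((-1) ^ a * (-1) ^ b * (wgt a b * 2 ^ ((m - a) * (n - b))))))
  simp only [Finset.powerset_univ, Finset.card_univ, Fintype.card_fin, nsmul_eq_mul] at this
  rw [this] at h
  simp_rw [Finset.mul_sum] at h
  have hb := Finset.sum_boole (R := ℚ) (fun R : Fin m → Fin n → Bool =>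
    (∀ i, ¬ ∃ v, ∀ j, R i j = v) ∧ (∀ j, ¬ ∃ v, ∀ i, R i j = v)) univ
  rw [← h]
  refine Eq.trans ?_ (hb.symm.trans ?_)
  swap
  · apply Finset.sum_congr rfl
    intro R _
    congr
  congr 1
  rw [bNoIsoNoIso, ← Fintype.card_subtype, ← Nat.card_eq_fintype_card]
  refine Nat.card_congr (Equiv.subtypeEquiv
    { toFun := fun R i j => decide ((i, j) ∈ R)
      invFun := fun R => univ.filter fun p => R p.1 p.2 = true
      left_inv := fun R => by ext; simp
      right_inv := fun R => by ext; simp } ?_)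
  intro R
  simp only [NoAllSeeing, IsolatedLeft, IsolatedRight, Equiv.coe_fn_mk, Bool.exists_bool,
    decide_eq_true_eq, decide_eq_false_iff_not, not_or]
  constructor
  · rintro ⟨⟨h1, h2⟩, h3, h4⟩
    exact ⟨fun i => ⟨h3 i, h1 i⟩, fun i => ⟨h4 i, h2 i⟩⟩
  · rintro ⟨h1, h2⟩
    exact ⟨⟨fun i => (h1 i).2, fun i => (h2 i).2⟩, fun i => (h1 i).1, fun i => (h2 i).1⟩

section Series
open PowerSeries

/-- diagonal series -/
noncomputable def DD (f : ℕ → ℕ → ℚ) : PowerSeries ℚ :=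
  PowerSeries.mk fun N => ∑ p ∈ antidiagonal N, f p.1 p.2

/-- two-variable convolution -/
noncomputable def cv (f g : ℕ → ℕ → ℚ) (m n : ℕ) : ℚ :=
  ∑ p ∈ antidiagonal m, ∑ q ∈ antidiagonal n, f p.1 q.1 * g p.2 q.2

lemma DD_cv (f g : ℕ → ℕ → ℚ) : DD (cv f g) = DD f * DD g := by
  ext N
  simp only [DD, PowerSeries.coeff_mk, PowerSeries.coeff_mul, cv, Finset.sum_mul_sum]
  simp only [← Finset.sum_product', Finset.sum_sigma']
  refine Finset.sum_nbij'
    (fun x => ⟨(x.2.1.1 + x.2.2.1, x.2.1.2 + x.2.2.2), ⟨(x.2.1.1, x.2.2.1), (x.2.1.2, x.2.2.2)⟩⟩)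
    (fun x => ⟨(x.2.1.1 + x.2.2.1, x.2.1.2 + x.2.2.2), ⟨(x.2.1.1, x.2.2.1), (x.2.1.2, x.2.2.2)⟩⟩)
    ?_ ?_ ?_ ?_ ?_
  · rintro ⟨⟨m, n⟩, ⟨⟨a, a'⟩, ⟨b, b'⟩⟩⟩ h
    simp at h ⊢
    omega
  · rintro ⟨⟨m, n⟩, ⟨⟨a, a'⟩, ⟨b, b'⟩⟩⟩ h
    simp at h ⊢
    omega
  · rintro ⟨⟨m, n⟩, ⟨⟨a, a'⟩, ⟨b, b'⟩⟩⟩ h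
    simp at h
    obtain ⟨_, rfl, rfl⟩ := h
    rfl
  · rintro ⟨⟨m, n⟩, ⟨⟨a, a'⟩, ⟨b, b'⟩⟩⟩ h
    simp at h
    obtain ⟨_, rfl, rfl⟩ := h
    rfl
  · rintro ⟨⟨m, n⟩, ⟨⟨a, a'⟩, ⟨b, b'⟩⟩⟩ h
    rfl

lemma DD_tensor (f g : ℕ → ℚ) : DD (fun a b => f a * g b) = mk f * mk g := by
  ext N
  simp [DD, PowerSeries.coeff_mul]

lemma DD_add (f g : ℕ → ℕ → ℚ) : DD (fun a b => f a b + g a b) = DD f + DD g := by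
  ext N
  simp [DD, Finset.sum_add_distrib]

lemma DD_sub (f g : ℕ → ℕ → ℚ) : DD (fun a b => f a b - g a b) = DD f - DD g := by
  ext N
  simp [DD, Finset.sum_sub_distrib]

def dl (a : ℕ) : ℚ := if a = 0 then 1 else 0
noncomputable def e1 (a : ℕ) : ℚ := (-1) ^ a / a.factorial
noncomputable def e2 (a : ℕ) : ℚ := (-2) ^ a / a.factorial

lemma mk_dl : PowerSeries.mk dl = 1 := by
  ext n
  simp [dl, PowerSeries.coeff_one]

lemma ExpNeg_eq : ExpNeg = PowerSeries.rescale (-1 : ℚ) (PowerSeries.exp ℚ) := by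
  ext n
  simp [ExpNeg, PowerSeries.coeff_rescale, PowerSeries.coeff_exp, div_eq_mul_inv]

lemma mk_e2 : PowerSeries.mk e2 = ExpNeg ^ 2 := by
  rw [ExpNeg_eq, ← map_pow, PowerSeries.exp_pow_eq_rescale_exp]
  ext n
  simp [e2, PowerSeries.coeff_rescale, PowerSeries.coeff_exp, div_eq_mul_inv, ← mul_assoc,
    ← mul_pow]

lemma mk_e2_mul : PowerSeries.mk e2 * PowerSeries.exp ℚ = ExpNeg := by
  have : ExpNeg * PowerSeries.exp ℚ = 1 := by
    rw [ExpNeg_eq, mul_comm]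
    exact PowerSeries.exp_mul_exp_neg_eq_one
  rw [mk_e2, pow_two, mul_assoc, this, mul_one]

/-- signed weights over factorials -/
noncomputable def W (a b : ℕ) : ℚ :=
  (-1) ^ a * (-1) ^ b * wgt a b / (a.factorial * b.factorial)

noncomputable def P (a b : ℕ) : ℚ := 2 ^ (a * b) / (a.factorial * b.factorial)

lemma W_eq : W = fun a b => (((e2 a * dl b + dl a * e2 b) - dl a * dl b)
    + (2 * (e1 a - dl a)) * (e1 b - dl b)) := by
  funext a b
  have h : ∀ k : ℕ, (-2 : ℚ) ^ k = (-1) ^ k * 2 ^ k := by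
    intro k; rw [← mul_pow]; norm_num
  rcases Nat.eq_zero_or_pos a with rfl | ha <;> rcases Nat.eq_zero_or_pos b with rfl | hb
  · simp [W, wgt, e1, e2, dl]
  · simp [W, wgt, e1, e2, dl, hb.ne', h]
  · simp [W, wgt, e1, e2, dl, ha.ne', h]
  · simp [W, wgt, e1, e2, dl, ha.ne', hb.ne']
    field_simp

lemma DD_W : DD W = (2 * ExpNeg - 1) ^ 2 := by
  have h1 : mk (fun a => 2 * (e1 a - dl a)) = 2 * (ExpNeg - 1) := by
    rw [← mk_dl, show (2 : PowerSeries ℚ) = PowerSeries.C (2 : ℚ) by rw [map_ofNat]]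
    ext n
    rw [PowerSeries.coeff_C_mul]
    simp [ExpNeg, e1]
  have h2 : mk (fun a => (e1 a - dl a)) = (ExpNeg - 1) := by
    rw [← mk_dl]
    ext n
    simp [ExpNeg, e1]
  rw [W_eq, DD_add, DD_sub, DD_add, DD_tensor, DD_tensor, DD_tensor, DD_tensor, mk_dl, h1, h2,
    mk_e2]
  ring

lemma cv_zero_right (m : ℕ) : cv W P m 0 = e1 m := by
  have h := congrArg (PowerSeries.coeff m) mk_e2_mul
  rw [PowerSeries.coeff_mul] at h
  simp only [ExpNeg, PowerSeries.coeff_mk] at h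
  rw [e1, ← h]
  simp only [cv, Finset.Nat.antidiagonal_zero, Finset.sum_singleton]
  apply Finset.sum_congr rfl
  intro p _
  rw [W_eq]
  by_cases hp : p.1 = 0 <;> simp [P, dl, e1, e2, hp, PowerSeries.coeff_exp]

lemma cv_zero_left (n : ℕ) : cv W P 0 n = e1 n := by
  have h := congrArg (PowerSeries.coeff n) mk_e2_mul
  rw [PowerSeries.coeff_mul] at h
  simp only [ExpNeg, PowerSeries.coeff_mk] at h
  rw [e1, ← h]
  simp only [cv, Finset.Nat.antidiagonal_zero, Finset.sum_singleton]
  apply Finset.sum_congr rfl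
  intro p _
  rw [W_eq]
  by_cases hp : p.1 = 0 <;> simp [P, dl, e1, e2, hp, PowerSeries.coeff_exp]

lemma cv_pos (m n : ℕ) (hm : 1 ≤ m) (hn : 1 ≤ n) :
    cv W P m n = (bNoIsoNoIso m n : ℚ) / (m.factorial * n.factorial) := by
  rw [b_eq m n hm hn, cv, Finset.Nat.sum_antidiagonal_eq_sum_range_succ_mk, Finset.sum_div]
  apply Finset.sum_congr rfl
  intro a ha
  rw [Finset.Nat.sum_antidiagonal_eq_sum_range_succ_mk, Finset.sum_div]
  apply Finset.sum_congr rfl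
  intro b hb
  have ha' : a ≤ m := by simpa [Nat.lt_succ_iff] using ha
  have hb' : b ≤ n := by simpa [Nat.lt_succ_iff] using hb
  rw [Nat.cast_choose ℚ ha', Nat.cast_choose ℚ hb']
  simp only [W, P]
  have hf : ∀ k : ℕ, (k.factorial : ℚ) ≠ 0 := fun k => by exact_mod_cast k.factorial_ne_zero
  have := hf m
  have := hf n
  have := hf a
  have := hf b
  have := hf (m - a)
  have := hf (n - b)
  field_simp

lemma egf2_eq : egf2 bNoIsoNoIso
    = DD (fun m n => cv W P m n - ((e1 m * dl n + dl m * e1 n) - dl m * dl n)) := by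
  ext N
  simp only [egf2, DD, PowerSeries.coeff_mk]
  rw [Finset.sum_filter]
  apply Finset.sum_congr rfl
  rintro ⟨m, n⟩ _
  dsimp only
  split_ifs with h
  · rw [cv_pos m n h.1 h.2]
    have h1 : m ≠ 0 := by omega
    have h2 : n ≠ 0 := by omega
    simp [dl, h1, h2]
  · rcases Nat.eq_zero_or_pos m with rfl | hm
    · rw [cv_zero_left]
      simp [dl, e1]
    · have : n = 0 := by omega
      subst this
      rw [cv_zero_right]
      simp [dl, hm.ne']

end Series

theorem egf_noIsoNoIso :
    egf2 bNoIsoNoIso = (2 * ExpNeg - 1) * ((2 * ExpNeg - 1) * Psi - 1) := by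
  have hP : DD P = Psi := rfl
  have he : PowerSeries.mk e1 = ExpNeg := rfl
  rw [egf2_eq, DD_sub, DD_sub, DD_add, DD_tensor, DD_tensor, DD_tensor, DD_cv, DD_W, hP, he, mk_dl]
  ring
end

section
/- Let g_n denote the number of strict partial order relations on {1, …, n} that are strongly graded and avoid 3+1, and let G(x) = Σ_{n ≥ 0} g_n x^n/n! as a formal power series over ℚ. Then (G(x) − 1)·(e^x(2e^x + 1) + (e^{2x} − 2e^x − 1)·Ψ(x)) = e^{2x}(2e^x − 3) + e^x(e^x − 2)^2·Ψ(x), where Ψ(x) = Σ_{m,n ≥ 0} 2^{mn} x^{m+n}/(m! n!) and e^x is the exponential power series. Equivalently, G(x) = 1 + (e^{2x}(2e^x − 3) + e^x(e^x − 2)^2 Ψ(x)) / (e^x(2e^x + 1) + (e^{2x} − 2e^x − 1)Ψ(x)). -/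
/-- `r` is a strict partial order relation (irreflexive and transitive). -/
def IsStrictOrderRel {n : ℕ} (r : Fin n → Fin n → Prop) : Prop :=
  (∀ a, ¬ r a a) ∧ ∀ a b c, r a b → r b c → r a c

/-- the poset `(Fin n, r)` avoids `3+1`: there is no chain `x < y < z` together with
an element `w` incomparable to each of `x`, `y`, `z`. -/
def RelAvoids31 {n : ℕ} (r : Fin n → Fin n → Prop) : Prop :=
  ¬ ∃ w x y z : Fin n, r x y ∧ r y z ∧
      (¬ r w x ∧ ¬ r x w) ∧ (¬ r w y ∧ ¬ r y w) ∧ (¬ r w z ∧ ¬ r z w)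

/-- a finset that is a chain of the poset `(Fin n, r)`. -/
def RelChain {n : ℕ} (r : Fin n → Fin n → Prop) (s : Finset (Fin n)) : Prop :=
  ∀ a ∈ s, ∀ b ∈ s, a ≠ b → r a b ∨ r b a

/-- a maximal chain of the poset `(Fin n, r)`. -/
def RelMaxChain {n : ℕ} (r : Fin n → Fin n → Prop) (s : Finset (Fin n)) : Prop :=
  RelChain r s ∧ ∀ t : Finset (Fin n), RelChain r t → s ⊆ t → s = t

/-- strongly graded: all maximal chains have the same number of elements. -/
def RelStronglyGraded {n : ℕ} (r : Fin n → Fin n → Prop) : Prop :=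
  ∀ s t : Finset (Fin n), RelMaxChain r s → RelMaxChain r t → s.card = t.card

/-- weakly graded: there is a rank function increasing by one along covers such that
every connected component of the comparability graph contains an element of rank `0`. -/
def RelWeaklyGraded {n : ℕ} (r : Fin n → Fin n → Prop) : Prop :=
  ∃ rk : Fin n → ℕ,
    (∀ a b, r a b → (¬ ∃ c, r a c ∧ r c b) → rk b = rk a + 1) ∧
    ∀ v, ∃ u, Relation.ReflTransGen (fun a b => r a b ∨ r b a) v u ∧ rk u = 0

/-- the number of strongly graded `3+1`-avoiding strict partial orders on `{1, …, n}`. -/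
noncomputable def gCount (n : ℕ) : ℕ :=
  Nat.card {r : Fin n → Fin n → Prop //
    IsStrictOrderRel r ∧ RelStronglyGraded r ∧ RelAvoids31 r}

/-- the number of weakly graded `3+1`-avoiding strict partial orders on `{1, …, n}`. -/
noncomputable def wCount (n : ℕ) : ℕ :=
  Nat.card {r : Fin n → Fin n → Prop //
    IsStrictOrderRel r ∧ RelWeaklyGraded r ∧ RelAvoids31 r}

/-- the exponential series `e^x`. -/
noncomputable def E : PowerSeries ℚ := PowerSeries.exp ℚ

/-- the egf of strongly graded `3+1`-avoiding posets. -/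
noncomputable def G : PowerSeries ℚ :=
  PowerSeries.mk fun n => (gCount n : ℚ) / n.factorial

set_option linter.all false
set_option linter.unusedVariables false
set_option linter.unusedSectionVars false
set_option linter.unusedSimpArgs false
namespace SG
open Finset
open scoped Classical

structure Code {V : Type} [Fintype V] (k : ℕ) (R : Finset V) (fl : Prop)
    (c : (V → ℕ) × (V → Finset V)) : Prop where
  supp : ∀ v, v ∈ R ↔ c.1 v ≠ 0
  le : ∀ v, c.1 v ≤ k
  step : ∀ a b, b ∈ c.2 a → c.1 a ≠ 0 ∧ c.1 b = c.1 a + 1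
  nop : ∀ a w b, w ∈ c.2 a → b ∉ c.2 w
  mid : ∀ i, 1 ≤ i → i < k → ∀ x z, ∃ y, c.1 y = i ∧ y ∉ c.2 x ∧ z ∉ c.2 y
  top : fl → ∀ x, ∃ y, c.1 y = k ∧ y ∉ c.2 x

structure Link {V : Type} [Fintype V] (L : Finset V) (m : V → Finset V) : Prop where
  supp : ∀ a b, b ∈ m a → a ∈ L ∧ b ∈ L
  nop : ∀ a w b, w ∈ m a → b ∉ m w
  cov : ∀ v ∈ L, (∃ b, b ∈ m v) ∨ ∃ a, v ∈ m a

def al {V : Type} (m : V → Finset V) : Prop := ∃ d, ∀ a u, u ∈ m a → u ∈ m d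
def be {V : Type} (m : V → Finset V) : Prop := ∃ u, ∀ d b, b ∈ m d → u ∈ m d

variable {V : Type} [Fintype V] [Nonempty V]

noncomputable def codes (k : ℕ) (R : Finset V) (fl : Prop) :
    Finset ((V → ℕ) × (V → Finset V)) :=
  (Fintype.piFinset (fun _ : V => range (k + 1)) ×ˢ univ).filter (Code k R fl)

lemma mem_codes {k : ℕ} {R : Finset V} {fl : Prop} {c : (V → ℕ) × (V → Finset V)} :
    c ∈ codes k R fl ↔ Code k R fl c := by
  simp only [codes, mem_filter, mem_product, Fintype.mem_piFinset, mem_range, mem_univ, and_true]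
  exact ⟨fun h => h.2, fun h => ⟨fun v => Nat.lt_succ_of_le (h.le v), h⟩⟩

noncomputable def pS (k : ℕ) (c : (V → ℕ) × (V → Finset V)) : Finset V :=
  univ.filter fun v => c.1 v = k + 1 ∧ ∀ a, v ∉ c.2 a
noncomputable def pL (k : ℕ) (c : (V → ℕ) × (V → Finset V)) : Finset V :=
  univ.filter fun v => (c.1 v = k + 1 ∧ ∃ a, v ∈ c.2 a) ∨ (c.1 v = k ∧ ∃ b, b ∈ c.2 v)
noncomputable def pM (k : ℕ) (c : (V → ℕ) × (V → Finset V)) : V → Finset V :=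
  fun a => if c.1 a = k then c.2 a else ∅
noncomputable def pC (k : ℕ) (c : (V → ℕ) × (V → Finset V)) : (V → ℕ) × (V → Finset V) :=
  (fun v => if c.1 v = k + 1 ∨ (c.1 v = k ∧ ∃ b, b ∈ c.2 v) then 0 else c.1 v,
   fun a => if c.1 a = k then ∅ else c.2 a)

noncomputable def glue (k : ℕ) (S L : Finset V) (m : V → Finset V)
    (c : (V → ℕ) × (V → Finset V)) : (V → ℕ) × (V → Finset V) :=
  (fun v => if v ∈ S then k + 1 else if v ∈ L then (if ∃ b, b ∈ m v then k else k + 1) else c.1 v,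
   fun a => m a ∪ c.2 a)

lemma mem_pM {k : ℕ} {c : (V → ℕ) × (V → Finset V)} {a b : V} :
    b ∈ pM k c a ↔ c.1 a = k ∧ b ∈ c.2 a := by
  unfold pM; split_ifs <;> simp_all

lemma mem_pC {k : ℕ} {c : (V → ℕ) × (V → Finset V)} {a b : V} :
    b ∈ (pC k c).2 a ↔ c.1 a ≠ k ∧ b ∈ c.2 a := by
  unfold pC; dsimp only; split_ifs <;> simp_all

lemma peel_link {k : ℕ} (hk : 1 ≤ k) {R : Finset V} {fl : Prop} {c : (V → ℕ) × (V → Finset V)}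
    (h : Code (k + 1) R fl c) : Link (pL k c) (pM k c) := by
  refine ⟨?_, ?_, ?_⟩
  · intro a b hb
    rw [mem_pM] at hb
    have := h.step a b hb.2
    simp only [pL, mem_filter, mem_univ, true_and]
    exact ⟨Or.inr ⟨hb.1, b, hb.2⟩, Or.inl ⟨by omega, a, hb.2⟩⟩
  · intro a w b hw hb
    rw [mem_pM] at hw hb
    exact h.nop a w b hw.2 hb.2
  · intro v hv
    simp only [pL, mem_filter, mem_univ, true_and] at hv
    rcases hv with ⟨h1, a, ha⟩ | ⟨h1, b, hb⟩
    · right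
      have := h.step a v ha
      exact ⟨a, mem_pM.2 ⟨by omega, ha⟩⟩
    · left; exact ⟨b, mem_pM.2 ⟨h1, hb⟩⟩

lemma peel_cond {k : ℕ} (hk : 1 ≤ k) {R : Finset V} {fl : Prop} {c : (V → ℕ) × (V → Finset V)}
    (h : Code (k + 1) R fl c) (hfl : fl) : (pS k c).Nonempty ∨ ¬ al (pM k c) := by
  by_contra hcon
  push Not at hcon
  obtain ⟨h1, d, hd⟩ := hcon
  obtain ⟨y, hy, hyd⟩ := h.top hfl d
  by_cases hh : ∃ a, y ∈ c.2 a
  · obtain ⟨a, ha⟩ := hh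
    have := h.step a y ha
    have := hd a y (mem_pM.2 ⟨by omega, ha⟩)
    exact hyd (mem_pM.1 this).2
  · push Not at hh
    have : y ∈ pS k c := by simp only [pS, mem_filter, mem_univ, true_and]; exact ⟨hy, hh⟩
    simp [h1] at this

lemma peel_code {k : ℕ} (hk : 1 ≤ k) {R : Finset V} {fl : Prop} {c : (V → ℕ) × (V → Finset V)}
    (h : Code (k + 1) R fl c) :
    Code k ((R \ pS k c) \ pL k c) (be (pM k c)) (pC k c) := by
  refine ⟨?_, ?_, ?_, ?_, ?_, ?_⟩
  · intro v
    have := h.supp v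
    simp only [pS, pL, pC, mem_sdiff, mem_filter, mem_univ, true_and]
    by_cases h1 : c.1 v = k + 1
    · simp [h1]
    · simp [h1]; simp [this]; tauto
  · intro v
    have := h.le v
    simp only [pC]; split_ifs with h1
    · omega
    · push Not at h1; have := h1.1; omega
  · intro a b hb
    rw [mem_pC] at hb
    have h1 := h.step a b hb.2
    have h2 := h.le b
    have h3 : ¬ (c.1 a = k + 1 ∨ (c.1 a = k ∧ ∃ b, b ∈ c.2 a)) := by
      rintro (h | h)
      · omega
      · exact hb.1 h.1
    have h4 : ¬ (c.1 b = k + 1 ∨ (c.1 b = k ∧ ∃ b', b' ∈ c.2 b)) := by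
      rintro (h' | ⟨h', b', hb'⟩)
      · omega
      · exact h.nop a b b' hb.2 hb'
    simp only [pC, h3, h4, if_false]; exact h1
  · intro a w b hw hb
    rw [mem_pC] at hw hb
    exact h.nop a w b hw.2 hb.2
  · intro i hi hik x z
    obtain ⟨y, hy, h1, h2⟩ := h.mid i hi (by omega) x z
    refine ⟨y, ?_, fun h => h1 (mem_pC.1 h).2, fun h => h2 (mem_pC.1 h).2⟩
    simp only [pC]; rw [if_neg, hy]
    rintro (h | h) <;> omega
  · rintro ⟨u, hu⟩ x
    obtain ⟨y, hy, h1, h2⟩ := h.mid k hk (by omega) x u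
    refine ⟨y, ?_, fun h => h1 (mem_pC.1 h).2⟩
    simp only [pC]; rw [if_neg, hy]
    rintro (h | ⟨h, b, hb⟩)
    · omega
    · exact h2 (mem_pM.1 (hu y b (mem_pM.2 ⟨h, hb⟩))).2

lemma glue_peel {k : ℕ} (hk : 1 ≤ k) {R : Finset V} {fl : Prop} {c : (V → ℕ) × (V → Finset V)}
    (h : Code (k + 1) R fl c) : glue k (pS k c) (pL k c) (pM k c) (pC k c) = c := by
  apply Prod.ext
  · funext v
    simp only [glue, pS, pL, pC, mem_filter, mem_univ, true_and, mem_pM]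
    by_cases h1 : c.1 v = k + 1
    · by_cases h2 : ∃ a, v ∈ c.2 a
      · simp [h1, h2]
      · push Not at h2; simp [h1, h2]
    · by_cases h3 : c.1 v = k
      · by_cases h4 : ∃ b, b ∈ c.2 v
        · simp [h3, h4]
        · simp [h3, h4]
      · simp [h1, h3]
  · funext a
    ext b
    simp only [glue, mem_union, mem_pM, mem_pC]
    tauto

lemma glue_facts {k : ℕ} (hk : 1 ≤ k) {R S L : Finset V} {m : V → Finset V}
    {c : (V → ℕ) × (V → Finset V)} (hS : S ⊆ R) (hL : L ⊆ R \ S)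
    (hm : Link L m) (hc : Code k ((R \ S) \ L) (be m) c) : 
    (∀ v ∈ S, (glue k S L m c).1 v = k + 1 ∧ (m v = ∅) ∧ c.2 v = ∅ ∧ (∀ a, v ∉ m a) ∧ (∀ a, v ∉ c.2 a) ∧ v ∈ R ∧ v ∉ L) ∧ 
    (∀ v ∈ L, ((∃ b, b ∈ m v) ∧ (glue k S L m c).1 v = k ∧ (∀ a, v ∉ m a) ∨ ((m v = ∅) ∧ (glue k S L m c).1 v = k + 1 ∧ (∃ a, v ∈ m a))) ∧ c.2 v = ∅ ∧ (∀ a, v ∉ c.2 a) ∧ v ∈ R ∧ v ∉ S ∧ c.1 v = 0) ∧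
    (∀ v, v ∉ S → v ∉ L → (glue k S L m c).1 v = c.1 v ∧ m v = ∅ ∧ ∀ a, v ∉ m a) := by
  have key : ∀ a b, b ∈ c.2 a → a ∈ (R \ S) \ L ∧ b ∈ (R \ S) \ L := by
    intro a b hb
    have := hc.step a b hb
    rw [hc.supp, hc.supp]; omega
  refine ⟨?_, ?_, ?_⟩
  · intro v hv
    have hvL : v ∉ L := fun h => (mem_sdiff.1 (hL h)).2 hv
    refine ⟨by simp [glue, hv], ?_, ?_, ?_, ?_, hS hv, hvL⟩
    · apply eq_empty_of_forall_notMem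
      intro b hb; exact hvL (hm.supp v b hb).1
    · apply eq_empty_of_forall_notMem
      intro b hb; have := (key v b hb).1; simp [hv] at this
    · intro a ha; exact hvL (hm.supp a v ha).2
    · intro a ha; have := (key a v ha).2; simp [hv] at this
  · intro v hv
    have hvS : v ∉ S := (mem_sdiff.1 (hL hv)).2
    refine ⟨?_, ?_, ?_, (mem_sdiff.1 (hL hv)).1, hvS, ?_⟩
    · by_cases h1 : ∃ b, b ∈ m v
      · left; refine ⟨h1, by simp [glue, hvS, hv, h1], ?_⟩
        obtain ⟨b, hb⟩ := h1
        intro a ha; exact hm.nop a v b ha hb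
      · right; refine ⟨?_, by simp [glue, hvS, hv, h1], (hm.cov v hv).resolve_left h1⟩
        apply eq_empty_of_forall_notMem
        push Not at h1; exact h1
    · apply eq_empty_of_forall_notMem
      intro b hb; have := (key v b hb).1; simp [hv] at this
    · intro a ha; have := (key a v ha).2; simp [hv] at this
    · by_contra h; rw [← ne_eq, ← hc.supp] at h; simp [hv] at h
  · intro v h1 h2
    refine ⟨by simp [glue, h1, h2], ?_, ?_⟩
    · apply eq_empty_of_forall_notMem
      intro b hb; exact h2 (hm.supp v b hb).1
    · intro a ha; exact h2 (hm.supp a v ha).2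

lemma glue_code {k : ℕ} (hk : 1 ≤ k) {R S L : Finset V} {fl : Prop} {m : V → Finset V}
    {c : (V → ℕ) × (V → Finset V)} (hS : S ⊆ R) (hL : L ⊆ R \ S)
    (hm : Link L m) (hc : Code k ((R \ S) \ L) (be m) c)
    (hcond : fl → S.Nonempty ∨ ¬ al m) : Code (k + 1) R fl (glue k S L m c) := by
  obtain ⟨f1, f2, f3⟩ := glue_facts hk hS hL hm hc
  have M : ∀ a b, b ∈ (glue k S L m c).2 a ↔ b ∈ m a ∨ b ∈ c.2 a := by
    intro a b; simp [glue]
  have st : ∀ a b, b ∈ m a → (glue k S L m c).1 a = k ∧ (glue k S L m c).1 b = k + 1 := by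
    intro a b hb
    have h1 := hm.supp a b hb
    have h2 := f2 a h1.1
    have h3 := f2 b h1.2
    constructor
    · rcases h2.1 with h | h
      · exact h.2.1
      · simp [h.1] at hb
    · rcases h3.1 with h | h
      · exact absurd hb (h.2.2 a)
      · exact h.2.1
  have st2 : ∀ a b, b ∈ c.2 a → (glue k S L m c).1 a = c.1 a ∧ (glue k S L m c).1 b = c.1 b ∧ c.1 a ≠ 0 ∧ c.1 b = c.1 a + 1 := by
    intro a b hb
    have h0 := hc.step a b hb
    have h1 : a ∈ (R \ S) \ L := by rw [hc.supp]; omega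
    have h2 : b ∈ (R \ S) \ L := by rw [hc.supp]; omega
    simp only [mem_sdiff] at h1 h2
    exact ⟨(f3 a h1.1.2 h1.2).1, (f3 b h2.1.2 h2.2).1, h0⟩
  refine ⟨?_, ?_, ?_, ?_, ?_, ?_⟩
  · intro v
    by_cases hvS : v ∈ S
    · have := f1 v hvS
      simp [this]
    by_cases hvL : v ∈ L
    · have := f2 v hvL
      rcases this.1 with h | h <;> simp [this, h]; omega
    rw [(f3 v hvS hvL).1, ← hc.supp]; simp [hvS, hvL]
  · intro v
    by_cases hvS : v ∈ S
    · have := f1 v hvS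
      omega
    by_cases hvL : v ∈ L
    · have := f2 v hvL
      rcases this.1 with h | h <;> omega
    rw [(f3 v hvS hvL).1]; have := hc.le v; omega
  · intro a b hb
    rw [M] at hb
    rcases hb with hb | hb
    · have := st a b hb; omega
    · have := st2 a b hb; omega
  · intro a w b hw hb
    rw [M] at hw hb
    rcases hw with hw | hw <;> rcases hb with hb | hb
    · exact hm.nop _ _ _ hw hb
    · have := st _ _ hw; have := st2 _ _ hb; have := hc.le b; omega
    · exact ((f2 w (hm.supp _ _ hb).1).2.2.1) _ hw
    · exact hc.nop _ _ _ hw hb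
  · intro i hi hik x z
    simp only [M]
    rcases Nat.lt_succ_iff_lt_or_eq.1 hik with hlt | rfl
    · obtain ⟨y, hy, h1, h2⟩ := hc.mid i hi hlt x z
      have hyR : y ∈ (R \ S) \ L := by rw [hc.supp]; omega
      simp only [mem_sdiff] at hyR
      have := f3 y hyR.1.2 hyR.2
      refine ⟨y, by rw [this.1, hy], ?_, ?_⟩
      · simp [this, h1]
      · simp [this, h2]
    · by_cases hb : be m
      · obtain ⟨y, hy, h1⟩ := hc.top hb x
        have hyR : y ∈ (R \ S) \ L := by rw [hc.supp]; omega
        simp only [mem_sdiff] at hyR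
        have := f3 y hyR.1.2 hyR.2
        refine ⟨y, by rw [this.1, hy], ?_, ?_⟩
        · simp [this, h1]
        · simp only [this, notMem_empty, false_or]
          intro hz
          have := hc.step _ _ hz; have := hc.le z; omega
      · unfold be at hb
        push Not at hb
        obtain ⟨d, b, hd, hz⟩ := hb z
        have hdL := (hm.supp _ _ hd).1
        have := f2 d hdL
        refine ⟨d, (st _ _ hd).1, ?_, ?_⟩
        · rintro (h | h)
          · exact hm.nop _ _ _ h hd
          · exact this.2.2.1 _ h
        · simp [this, hz]
  · intro hfl x
    simp only [M]
    rcases hcond hfl with ⟨y, hy⟩ | hal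
    · have := f1 y hy
      exact ⟨y, this.1, by simp [this]⟩
    · unfold al at hal
      push Not at hal
      obtain ⟨a, u, hu, hx⟩ := hal x
      have := f2 u (hm.supp _ _ hu).2
      exact ⟨u, (st _ _ hu).2, by simp [this, hx]⟩

lemma peel_glue {k : ℕ} (hk : 1 ≤ k) {R S L : Finset V} {m : V → Finset V}
    {c : (V → ℕ) × (V → Finset V)} (hS : S ⊆ R) (hL : L ⊆ R \ S)
    (hm : Link L m) (hc : Code k ((R \ S) \ L) (be m) c) : pS k (glue k S L m c) = S ∧ pL k (glue k S L m c) = L ∧ pM k (glue k S L m c) = m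
    ∧ pC k (glue k S L m c) = c := by
  obtain ⟨f1, f2, f3⟩ := glue_facts hk hS hL hm hc
  have M : ∀ a b, b ∈ (glue k S L m c).2 a ↔ b ∈ m a ∨ b ∈ c.2 a := by
    intro a b; simp [glue]
  have hcz : ∀ v, v ∈ S → c.1 v = 0 := by
    intro v hv; by_contra h; rw [← ne_eq, ← hc.supp] at h; simp [hv] at h
  have hck : ∀ a b, b ∈ c.2 a → c.1 a ≠ k := by
    intro a b hb; have := hc.step a b hb; have := hc.le b; omega
  refine ⟨?_, ?_, ?_, ?_⟩
  · ext v
    simp only [pS, mem_filter, mem_univ, true_and, M]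
    by_cases hvS : v ∈ S
    · have := f1 v hvS
      simp [this, hvS]
    by_cases hvL : v ∈ L
    · have := f2 v hvL
      rcases this.1 with h | h
      · simp [hvS, h]
      · simp only [hvS, iff_false]
        obtain ⟨a, ha⟩ := h.2.2
        intro hh; exact hh.2 a (Or.inl ha)
    · have := f3 v hvS hvL
      have h2 := hc.le v
      simp only [this, hvS, iff_false]
      omega
  · ext v
    simp only [pL, mem_filter, mem_univ, true_and, M]
    by_cases hvS : v ∈ S
    · have := f1 v hvS
      simp [this]
    by_cases hvL : v ∈ L
    · have := f2 v hvL
      rcases this.1 with h | h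
      · simp [hvL, h, this]
      · obtain ⟨a, ha⟩ := h.2.2
        simp only [hvL, iff_true]
        exact Or.inl ⟨h.2.1, a, Or.inl ha⟩
    · have := f3 v hvS hvL
      have h2 := hc.le v
      simp only [this, hvL, iff_false]
      rintro (h | ⟨h, b, hb⟩)
      · omega
      · simp at hb
        exact hck _ _ hb h
  · funext a
    ext b
    rw [mem_pM, M]
    constructor
    · rintro ⟨h1, h2 | h2⟩
      · exact h2
      · exfalso
        have h3 := hc.step _ _ h2
        have hyR : a ∈ (R \ S) \ L := by rw [hc.supp]; omega
        simp only [mem_sdiff] at hyR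
        have := f3 a hyR.1.2 hyR.2
        exact hck _ _ h2 (by omega)
    · intro h
      have := f2 a (hm.supp _ _ h).1
      rcases this.1 with h' | h'
      · exact ⟨h'.2.1, Or.inl h⟩
      · simp [h'] at h
  · apply Prod.ext
    · funext v
      simp only [pC, M]
      by_cases hvS : v ∈ S
      · have := f1 v hvS
        simp [this, hcz v hvS]
      by_cases hvL : v ∈ L
      · have := f2 v hvL
        rcases this.1 with h | h
        · simp [h, this]
        · simp [h, this]
      · have := f3 v hvS hvL
        rw [if_neg, this.1]
        rw [this.1]
        have h2 := hc.le v
        rintro (h | ⟨h, b, hb⟩)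
        · omega
        · simp [this] at hb
          exact hck _ _ hb h
    · funext a
      ext b
      rw [mem_pC, M]
      constructor
      · rintro ⟨h1, h2 | h2⟩
        · exfalso
          have := f2 a (hm.supp _ _ h2).1
          rcases this.1 with h' | h'
          · exact h1 h'.2.1
          · simp [h'] at h2
        · exact h2
      · intro h
        refine ⟨?_, Or.inr h⟩
        have h3 := hc.step _ _ h
        have hyR : a ∈ (R \ S) \ L := by rw [hc.supp]; omega
        simp only [mem_sdiff] at hyR
        have := f3 a hyR.1.2 hyR.2
        rw [this.1]
        exact hck _ _ h

noncomputable def links (L : Finset V) : Finset (V → Finset V) := univ.filter (Link L)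

lemma card_codes_succ (k : ℕ) (hk : 1 ≤ k) (R : Finset V) (fl : Prop) :
    (codes (k + 1) R fl).card = ∑ S ∈ R.powerset, ∑ L ∈ (R \ S).powerset, ∑ m ∈ links L,
      if (fl → S.Nonempty ∨ ¬ al m) then (codes k ((R \ S) \ L) (be m)).card else 0 := by
  simp_rw [← sum_filter]
  simp_rw [← card_sigma]
  refine card_bij' (fun c _ => ⟨pS k c, pL k c, pM k c, pC k c⟩)
    (fun x _ => glue k x.1 x.2.1 x.2.2.1 x.2.2.2) ?_ ?_ ?_ ?_
  · intro c hc
    rw [mem_codes] at hc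
    simp only [mem_sigma, mem_powerset, mem_filter, mem_codes, links, mem_univ, true_and]
    refine ⟨?_, ?_, ⟨peel_link hk hc, peel_cond hk hc⟩, peel_code hk hc⟩
    · intro v hv
      simp only [pS, mem_filter, mem_univ, true_and] at hv
      rw [hc.supp]; omega
    · intro v hv
      simp only [pS, pL, mem_filter, mem_univ, true_and, mem_sdiff] at hv ⊢
      rw [hc.supp]
      refine ⟨by omega, ?_⟩
      rintro ⟨h1, h2⟩
      rcases hv with ⟨h3, a, h4⟩ | ⟨h3, _⟩
      · exact h2 a h4
      · omega
  · rintro ⟨S, L, m, c⟩ h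
    simp only [mem_sigma, mem_powerset, mem_filter, mem_codes, links, mem_univ, true_and] at h
    rw [mem_codes]
    exact glue_code hk h.1 h.2.1 h.2.2.1.1 h.2.2.2 h.2.2.1.2
  · intro c hc
    rw [mem_codes] at hc
    exact glue_peel hk hc
  · rintro ⟨S, L, m, c⟩ h
    simp only [mem_sigma, mem_powerset, mem_filter, mem_codes, links, mem_univ, true_and] at h
    obtain ⟨h1, h2, h3, h4⟩ := peel_glue hk h.1 h.2.1 h.2.2.1.1 h.2.2.2
    simp only [h1, h2, h3, h4]

lemma card_codes_one (R : Finset V) (fl : Prop) :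
    (codes 1 R fl).card = if fl → R.Nonempty then 1 else 0 := by
  split_ifs with h
  · rw [card_eq_one]
    refine ⟨(fun v => if v ∈ R then 1 else 0, fun _ => ∅), ?_⟩
    ext c
    rw [mem_codes, mem_singleton]
    constructor
    · intro hc
      apply Prod.ext
      · funext v
        have := hc.supp v; have := hc.le v
        dsimp only; split_ifs <;> simp_all <;> omega
      · funext v
        apply eq_empty_of_forall_notMem
        intro b hb
        have := hc.step v b hb; have := hc.le b; omega
    · rintro rfl
      refine ⟨by simp, ?_, by simp, by simp, by intro i; omega, ?_⟩
      · intro v; dsimp only; split_ifs <;> simp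
      · intro hfl x
        obtain ⟨y, hy⟩ := h hfl
        exact ⟨y, by simp [hy], by simp⟩
  · push Not at h
    rw [card_eq_zero]
    apply eq_empty_of_forall_notMem
    intro c hc
    rw [mem_codes] at hc
    obtain ⟨y, hy, _⟩ := hc.top h.1 (Classical.arbitrary V)
    have : y ∈ R := by rw [hc.supp]; omega
    simp [h.2] at this

end SG

namespace SG
open Finset
open scoped Classical

variable {V : Type} [Fintype V] [Nonempty V]

def Rep (P : PowerSeries ℚ) (f : Finset V → ℚ) : Prop :=
  ∀ R : Finset V, f R = (R.card.factorial : ℚ) * PowerSeries.coeff R.card P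

lemma Rep.add {P Q : PowerSeries ℚ} {f g : Finset V → ℚ} (hP : Rep P f) (hQ : Rep Q g) :
    Rep (P + Q) (fun R => f R + g R) := by
  intro R; simp only [hP R, hQ R, map_add]; ring

lemma Rep.sub {P Q : PowerSeries ℚ} {f g : Finset V → ℚ} (hP : Rep P f) (hQ : Rep Q g) :
    Rep (P - Q) (fun R => f R - g R) := by
  intro R; simp only [hP R, hQ R, map_sub]; ring

lemma Rep.congr {P : PowerSeries ℚ} {f g : Finset V → ℚ} (hP : Rep P f) (h : ∀ R, g R = f R) :
    Rep P g := by
  intro R; rw [h, hP R]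

lemma Rep.mul {P Q : PowerSeries ℚ} {f g : Finset V → ℚ} (hP : Rep P f) (hQ : Rep Q g) :
    Rep (P * Q) (fun R => ∑ S ∈ R.powerset, f S * g (R \ S)) := by
  intro R
  have h1 : ∀ S ∈ R.powerset, f S * g (R \ S) =
      (fun j => ((j.factorial : ℚ) * PowerSeries.coeff j P) *
        (((R.card - j).factorial : ℚ) * PowerSeries.coeff (R.card - j) Q)) S.card := by
    intro S hS
    rw [hP S, hQ (R \ S), card_sdiff_of_subset (mem_powerset.1 hS)]
  beta_reduce
  rw [sum_congr rfl h1, sum_powerset_apply_card (fun j => ((j.factorial : ℚ) * PowerSeries.coeff j P) *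
        (((R.card - j).factorial : ℚ) * PowerSeries.coeff (R.card - j) Q)), PowerSeries.coeff_mul,
    Nat.sum_antidiagonal_eq_sum_range_succ (fun i j => PowerSeries.coeff i P * PowerSeries.coeff j Q), mul_sum]
  apply sum_congr rfl
  intro j hj
  have hj' : j ≤ R.card := by simp at hj; omega
  rw [← Nat.choose_mul_factorial_mul_factorial hj', nsmul_eq_mul]
  push_cast; ring

lemma rep_E : Rep E (fun _ : Finset V => 1) := by
  intro R
  have : (R.card.factorial : ℚ) ≠ 0 := by positivity
  simp [E, PowerSeries.coeff_exp, this]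

lemma rep_one : Rep 1 (fun R : Finset V => if R = ∅ then 1 else 0) := by
  intro R
  simp only [PowerSeries.coeff_one, card_eq_zero]
  split_ifs with h
  · simp [h]
  · simp

lemma E_mul_inv : E * E⁻¹ = 1 := by
  apply PowerSeries.mul_inv_cancel
  simp [E]

lemma sum_inj {f g : Finset V → ℚ}
    (h : ∀ R : Finset V, ∑ S ∈ R.powerset, f S = ∑ S ∈ R.powerset, g S) (R : Finset V) : f R = g R := by
  induction R using Finset.strongInduction with
  | H R ih =>
    have h1 := h R
    rw [← add_sum_erase _ _ (mem_powerset_self R), ← add_sum_erase _ _ (mem_powerset_self R)] at h1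
    rw [sum_congr rfl (g := g)] at h1
    · linarith
    · intro S hS
      rw [mem_erase, mem_powerset] at hS
      exact ih S (hS.2.ssubset_of_ne hS.1)

lemma Rep.div {H : PowerSeries ℚ} {h g : Finset V → ℚ} (hH : Rep H h)
    (hg : ∀ R, ∑ S ∈ R.powerset, g S = h R) : Rep (E⁻¹ * H) g := by
  set p : Finset V → ℚ := fun R => (R.card.factorial : ℚ) * PowerSeries.coeff R.card (E⁻¹ * H) with hp
  have h1 : Rep (E⁻¹ * H) p := fun R => rfl
  have h2 := h1.mul rep_E
  have h3 : E⁻¹ * H * E = H := by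
    calc E⁻¹ * H * E = (E * E⁻¹) * H := by ring
      _ = H := by rw [E_mul_inv, one_mul]
  rw [h3] at h2
  intro R
  refine sum_inj (f := g) (g := p) ?_ R
  intro R
  have := h2 R
  rw [hg, hH R, ← this]; simp

lemma swap_sum (F : Finset V → Finset V → ℚ) (R : Finset V) :
    ∑ S ∈ R.powerset, ∑ B ∈ S.powerset, F B (S \ B) =
      ∑ B ∈ R.powerset, ∑ T ∈ (R \ B).powerset, F B T := by
  rw [sum_sigma', sum_sigma']
  refine sum_bij' (fun x _ => ⟨x.2, x.1 \ x.2⟩) (fun x _ => ⟨x.1 ∪ x.2, x.1⟩) ?_ ?_ ?_ ?_ ?_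
  · rintro ⟨S, B⟩ h
    simp only [mem_sigma, mem_powerset] at h ⊢
    exact ⟨h.2.trans h.1, sdiff_subset_sdiff h.1 (Subset.refl _)⟩
  · rintro ⟨S, B⟩ h
    simp only [mem_sigma, mem_powerset] at h ⊢
    exact ⟨union_subset h.1 (h.2.trans sdiff_subset), subset_union_left⟩
  · rintro ⟨S, B⟩ h
    simp only [mem_sigma, mem_powerset] at h ⊢
    rw [union_sdiff_of_subset h.2]
  · rintro ⟨B, T⟩ h
    simp only [mem_sigma, mem_powerset] at h ⊢
    rw [union_sdiff_cancel_left]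
    exact (disjoint_sdiff.mono_right h.2)
  · rintro ⟨S, B⟩ h
    rfl

noncomputable def xx (c : ℚ) (R : Finset V) : ℚ :=
  ∑ B ∈ R.powerset, ((2 : ℚ) ^ B.card - c) ^ (R \ B).card
noncomputable def yy (c : ℚ) (R : Finset V) : ℚ :=
  ∑ B ∈ R.powerset, if B = ∅ then 0 else ((2 : ℚ) ^ B.card - c) ^ (R \ B).card

lemma sum_pow_card (a : ℚ) (Q : Finset V) : ∑ T ∈ Q.powerset, (a - 1) ^ T.card = a ^ Q.card := by
  have := Finset.sum_pow_mul_eq_add_pow (a - 1) 1 Q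
  simpa using this

lemma xx_step (c : ℚ) (R : Finset V) : ∑ S ∈ R.powerset, xx (c + 1) S = xx c R := by
  unfold xx
  rw [swap_sum (fun B T => ((2 : ℚ) ^ B.card - (c + 1)) ^ T.card)]
  apply sum_congr rfl
  intro B _
  rw [← sum_pow_card ((2 : ℚ) ^ B.card - c) (R \ B)]
  apply sum_congr rfl
  intro T _
  congr 1
  ring

lemma yy_step (c : ℚ) (R : Finset V) : ∑ S ∈ R.powerset, yy (c + 1) S = yy c R := by
  unfold yy
  rw [swap_sum (fun B T => if B = ∅ then 0 else ((2 : ℚ) ^ B.card - (c + 1)) ^ T.card)]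
  apply sum_congr rfl
  intro B _
  split_ifs
  · simp
  rw [← sum_pow_card ((2 : ℚ) ^ B.card - c) (R \ B)]
  apply sum_congr rfl
  intro T _
  congr 1
  ring

lemma rep_x0 : Rep Psi (xx (V := V) 0) := by
  intro R
  unfold xx
  have h1 : ∀ B ∈ R.powerset, ((2 : ℚ) ^ B.card - 0) ^ (R \ B).card =
      (fun j => ((2 : ℚ) ^ j) ^ (R.card - j)) B.card := by
    intro B hB
    rw [card_sdiff_of_subset (mem_powerset.1 hB), sub_zero]
  rw [sum_congr rfl h1, sum_powerset_apply_card (fun j => ((2 : ℚ) ^ j) ^ (R.card - j)), Psi, PowerSeries.coeff_mk,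
    Nat.sum_antidiagonal_eq_sum_range_succ (fun i j => (2 : ℚ) ^ (i * j) / (i.factorial * j.factorial)), mul_sum]
  apply sum_congr rfl
  intro j hj
  have hj' : j ≤ R.card := by simp at hj; omega
  rw [← Nat.choose_mul_factorial_mul_factorial hj', nsmul_eq_mul, pow_mul]
  have h2 : (j.factorial : ℚ) ≠ 0 := by positivity
  have h3 : ((R.card - j).factorial : ℚ) ≠ 0 := by positivity
  push_cast; field_simp

noncomputable def X1 : PowerSeries ℚ := E⁻¹ * Psi
noncomputable def s0 : PowerSeries ℚ := E⁻¹ * X1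
noncomputable def Y1 : PowerSeries ℚ := E⁻¹ * (Psi - E)
noncomputable def Y2 : PowerSeries ℚ := E⁻¹ * Y1
noncomputable def t0 : PowerSeries ℚ := 1 + (Y1 - Y2)
noncomputable def u0 : PowerSeries ℚ := 1 + (Psi - X1 - X1 + s0)

lemma rep_x1 : Rep X1 (xx (V := V) 1) := by
  apply rep_x0.div
  intro R
  have := xx_step 0 R
  rwa [zero_add] at this

lemma rep_y0 : Rep (Psi - E) (yy (V := V) 0) := by
  apply (rep_x0.sub rep_E).congr
  intro R
  unfold yy xx
  rw [← add_sum_erase _ _ (empty_mem_powerset R), ← add_sum_erase _ _ (empty_mem_powerset R)]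
  simp only [if_true, card_empty, pow_zero, sub_zero, one_pow]
  rw [zero_add, add_sub_cancel_left]
  apply sum_congr rfl
  intro B hB
  rw [if_neg (mem_erase.1 hB).1]

lemma rep_y1 : Rep Y1 (yy (V := V) 1) := by
  apply rep_y0.div
  intro R
  have := yy_step 0 R
  rwa [zero_add] at this

lemma rep_y2 : Rep Y2 (yy (V := V) 2) := by
  apply rep_y1.div
  intro R
  have := yy_step 1 R
  rwa [one_add_one_eq_two] at this

noncomputable def gr (A B : Finset V) (p : Finset V → Prop) : Finset (V → Finset V) :=
  univ.filter fun m => ∀ v, if v ∈ A then m v ⊆ B ∧ p (m v) else m v = ∅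

lemma mem_gr {A B : Finset V} {p : Finset V → Prop} {m : V → Finset V} :
    m ∈ gr A B p ↔ (∀ v ∈ A, m v ⊆ B ∧ p (m v)) ∧ ∀ v ∉ A, m v = ∅ := by
  simp only [gr, mem_filter, mem_univ, true_and]
  constructor
  · intro h
    exact ⟨fun v hv => by have := h v; rwa [if_pos hv] at this,
      fun v hv => by have := h v; rwa [if_neg hv] at this⟩
  · intro h v
    split_ifs with hv
    · exact h.1 v hv
    · exact h.2 v hv

lemma card_gr (A B : Finset V) (p : Finset V → Prop) [DecidablePred p] :
    (gr A B p).card = (B.powerset.filter p).card ^ A.card := by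
  have : gr A B p = Fintype.piFinset (fun v => if v ∈ A then B.powerset.filter p else {∅}) := by
    ext m
    simp only [gr, mem_filter, mem_univ, true_and, Fintype.mem_piFinset]
    apply forall_congr'
    intro v
    split_ifs <;> simp
  rw [this, Fintype.card_piFinset]
  have h2 : ∀ v, (if v ∈ A then B.powerset.filter p else {∅}).card =
      if v ∈ A then (B.powerset.filter p).card else 1 := by
    intro v; split_ifs <;> simp
  simp only [h2]
  rw [prod_ite_mem]
  simp

lemma card_gr_all (A B : Finset V) : ((gr A B (fun _ => True)).card : ℚ) = (2 ^ B.card - 0) ^ A.card := by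
  rw [card_gr]; simp

lemma card_gr_ne (A B : Finset V) : ((gr A B Finset.Nonempty).card : ℚ) = (2 ^ B.card - 1) ^ A.card := by
  rw [card_gr]
  have : B.powerset.filter Finset.Nonempty = B.powerset.erase ∅ := by
    ext s; simp [nonempty_iff_ne_empty, and_comm]
  rw [this, Nat.cast_pow, cast_card_erase_of_mem (empty_mem_powerset B)]; simp

lemma card_gr_nf (A B : Finset V) : ((gr A B (fun s => s ≠ B)).card : ℚ) = (2 ^ B.card - 1) ^ A.card := by
  rw [card_gr]
  have : B.powerset.filter (fun s => s ≠ B) = B.powerset.erase B := by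
    ext s; simp [and_comm]
  rw [this, Nat.cast_pow, cast_card_erase_of_mem (mem_powerset_self B)]; simp

lemma card_gr_nenf (A B : Finset V) (hB : B ≠ ∅) :
    ((gr A B (fun s => s.Nonempty ∧ s ≠ B)).card : ℚ) = (2 ^ B.card - 2) ^ A.card := by
  rw [card_gr]
  have : B.powerset.filter (fun s => s.Nonempty ∧ s ≠ B) = (B.powerset.erase ∅).erase B := by
    ext s; simp [nonempty_iff_ne_empty]; tauto
  rw [this, Nat.cast_pow, cast_card_erase_of_mem, cast_card_erase_of_mem (empty_mem_powerset B)]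
  · simp; ring
  · simp [hB]

lemma mem_links {L : Finset V} {m : V → Finset V} : m ∈ links L ↔ Link L m := by simp [links]

/-- relations without directed paths of length two, supported in `X`. -/
noncomputable def np (X : Finset V) : Finset (V → Finset V) :=
  univ.filter fun m => (∀ a b, b ∈ m a → a ∈ X ∧ b ∈ X) ∧ ∀ a w b, w ∈ m a → b ∉ m w

lemma np_links (X : Finset V) : (np X).card = ∑ L ∈ X.powerset, (links L).card := by
  rw [card_eq_sum_card_fiberwise (f := fun m : V → Finset V => univ.filter fun v => (∃ b, b ∈ m v) ∨ ∃ a, v ∈ m a) (t := X.powerset)]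
  · apply sum_congr rfl
    intro L hL
    congr 1
    ext m
    simp only [np, mem_filter, mem_univ, true_and, mem_links]
    constructor
    · rintro ⟨⟨h1, h2⟩, rfl⟩
      refine ⟨?_, h2, ?_⟩
      · intro a b hb
        simp only [mem_filter, mem_univ, true_and]
        exact ⟨Or.inl ⟨b, hb⟩, Or.inr ⟨a, hb⟩⟩
      · intro v hv
        simpa using hv
    · intro h
      rw [mem_powerset] at hL
      refine ⟨⟨fun a b hb => ⟨hL (h.supp a b hb).1, hL (h.supp a b hb).2⟩, h.nop⟩, ?_⟩
      ext v
      simp only [mem_filter, mem_univ, true_and]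
      constructor
      · rintro (⟨b, hb⟩ | ⟨a, ha⟩)
        · exact (h.supp _ _ hb).1
        · exact (h.supp _ _ ha).2
      · exact h.cov v
  · intro m hm
    simp only [np, coe_filter, mem_univ, true_and, Set.mem_setOf_eq] at hm
    simp only [coe_powerset, Set.mem_preimage, Set.mem_powerset_iff, coe_subset]
    intro v hv
    simp only [mem_filter, mem_univ, true_and, coe_filter, Set.mem_setOf_eq] at hv
    rcases hv with ⟨b, hb⟩ | ⟨a, ha⟩
    · exact (hm.1 _ _ hb).1
    · exact (hm.1 _ _ ha).2

lemma np_gr (X : Finset V) : (np X).card = ∑ B ∈ X.powerset, (gr (X \ B) B Finset.Nonempty).card := by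
  rw [card_eq_sum_card_fiberwise (f := fun m : V → Finset V => X.filter fun v => m v = ∅) (t := X.powerset)]
  · apply sum_congr rfl
    intro B hB
    congr 1
    ext m
    rw [mem_powerset] at hB
    simp only [np, mem_filter, mem_univ, true_and, mem_gr]
    constructor
    · rintro ⟨⟨h1, h2⟩, rfl⟩
      simp only [mem_sdiff, mem_filter]
      refine ⟨?_, ?_⟩
      · rintro v ⟨h3, h4⟩
        refine ⟨?_, nonempty_iff_ne_empty.2 fun h => h4 ⟨h3, h⟩⟩
        intro b hb
        simp only [mem_filter]
        exact ⟨(h1 _ _ hb).2, eq_empty_of_forall_notMem (h2 v b · hb)⟩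
      · intro v hv
        by_contra hne
        obtain ⟨b, hb⟩ := nonempty_iff_ne_empty.2 hne
        exact hv ⟨(h1 _ _ hb).1, fun h => hne h.2⟩
    · rintro ⟨h1, h2⟩
      have key : ∀ a b, b ∈ m a → a ∈ X \ B ∧ b ∈ B := by
        intro a b hb
        have ha : a ∈ X \ B := by
          by_contra ha; rw [h2 a ha] at hb; simp at hb
        exact ⟨ha, (h1 a ha).1 hb⟩
      refine ⟨⟨?_, ?_⟩, ?_⟩
      · intro a b hb
        have := key a b hb
        exact ⟨(mem_sdiff.1 this.1).1, hB this.2⟩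
      · intro a w b hw hb
        exact (mem_sdiff.1 (key _ _ hb).1).2 (key _ _ hw).2
      · ext v
        simp only [mem_filter]
        constructor
        · rintro ⟨h3, h4⟩
          by_contra h5
          have := (h1 v (mem_sdiff.2 ⟨h3, h5⟩)).2
          simp [h4] at this
        · intro hv
          exact ⟨hB hv, h2 v fun h => (mem_sdiff.1 h).2 hv⟩
  · intro m hm
    simp only [coe_powerset, Set.mem_preimage, Set.mem_powerset_iff, coe_subset]
    exact filter_subset _ _

lemma rep_s : Rep s0 (fun L : Finset V => ((links L).card : ℚ)) := by
  apply rep_x1.div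
  intro R
  have := (np_links R).symm.trans (np_gr R)
  have h2 : ∑ L ∈ R.powerset, ((links L).card : ℚ) =
    ∑ B ∈ R.powerset, ((gr (R \ B) B Finset.Nonempty).card : ℚ) := by exact_mod_cast this
  rw [h2]
  unfold xx
  simp only [card_gr_ne]

/-- the set of targets. -/
noncomputable def tg (m : V → Finset V) : Finset V := univ.filter fun v => ∃ a, v ∈ m a

lemma mem_tg {m : V → Finset V} {v : V} : v ∈ tg m ↔ ∃ a, v ∈ m a := by simp [tg]

lemma link_iff {L B : Finset V} (hB : B ⊆ L) {m : V → Finset V} :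
    (Link L m ∧ tg m = B) ↔ (m ∈ gr (L \ B) B Finset.Nonempty ∧ ∀ u ∈ B, ∃ a, u ∈ m a) := by
  rw [mem_gr]
  constructor
  · rintro ⟨h, rfl⟩
    refine ⟨⟨?_, ?_⟩, fun u hu => mem_tg.1 hu⟩
    · intro v hv
      rw [mem_sdiff, mem_tg] at hv
      refine ⟨fun b hb => mem_tg.2 ⟨v, hb⟩, ?_⟩
      rcases h.cov v hv.1 with h1 | h1
      · exact h1
      · exact absurd h1 hv.2
    · intro v hv
      apply eq_empty_of_forall_notMem
      intro b hb
      apply hv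
      rw [mem_sdiff, mem_tg]
      refine ⟨(h.supp _ _ hb).1, ?_⟩
      rintro ⟨a, ha⟩
      exact h.nop _ _ _ ha hb
  · rintro ⟨⟨h1, h2⟩, h3⟩
    have key : ∀ a b, b ∈ m a → a ∈ L \ B ∧ b ∈ B := by
      intro a b hb
      have ha : a ∈ L \ B := by
        by_contra ha; rw [h2 a ha] at hb; simp at hb
      exact ⟨ha, (h1 a ha).1 hb⟩
    refine ⟨⟨?_, ?_, ?_⟩, ?_⟩
    · intro a b hb
      have := key a b hb
      exact ⟨(mem_sdiff.1 this.1).1, hB this.2⟩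
    · intro a w b hw hb
      exact (mem_sdiff.1 (key _ _ hb).1).2 (key _ _ hw).2
    · intro v hv
      by_cases hvB : v ∈ B
      · exact Or.inr (h3 v hvB)
      · exact Or.inl (h1 v (mem_sdiff.2 ⟨hv, hvB⟩)).2
    · ext v
      rw [mem_tg]
      exact ⟨fun ⟨a, ha⟩ => (key _ _ ha).2, h3 v⟩

lemma card_links_filter (L : Finset V) (p : (V → Finset V) → Prop) [DecidablePred p] :
    ((links L).filter p).card = ∑ B ∈ L.powerset,
      ((gr (L \ B) B Finset.Nonempty).filter fun m => (∀ u ∈ B, ∃ a, u ∈ m a) ∧ p m).card := by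
  rw [card_eq_sum_card_fiberwise (f := tg) (t := L.powerset)]
  · apply sum_congr rfl
    intro B hB
    congr 1
    ext m
    have := link_iff (mem_powerset.1 hB) (m := m)
    simp only [mem_filter, mem_links]
    tauto
  · intro m hm
    simp only [coe_filter, mem_links, Set.mem_setOf_eq] at hm
    simp only [coe_powerset, Set.mem_preimage, Set.mem_powerset_iff, coe_subset]
    intro v hv
    rw [mem_tg] at hv
    obtain ⟨a, ha⟩ := hv
    exact (hm.1.supp _ _ ha).2

lemma links_empty : links (∅ : Finset V) = {fun _ => ∅} := by
  ext m
  rw [mem_links, mem_singleton]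
  constructor
  · intro h; funext a; apply eq_empty_of_forall_notMem
    intro b hb; simpa using h.supp a b hb
  · rintro rfl; exact ⟨by simp, by simp, by simp⟩

lemma al_empty : al (fun _ : V => (∅ : Finset V)) := ⟨Classical.arbitrary V, by simp⟩
lemma be_empty : be (fun _ : V => (∅ : Finset V)) := ⟨Classical.arbitrary V, by simp⟩

lemma rep_t : Rep t0 (fun L : Finset V => (((links L).filter al).card : ℚ)) := by
  apply (rep_one.add (rep_y1.sub rep_y2)).congr
  intro L
  by_cases hL : L = ∅
  · subst hL
    simp [links_empty, filter_singleton, al_empty, yy]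
  rw [if_neg hL, zero_add, card_links_filter]
  unfold yy
  rw [← sum_sub_distrib]
  push_cast
  apply sum_congr rfl
  intro B hB
  rw [mem_powerset] at hB
  split_ifs with hB0
  · subst hB0
    rw [sub_zero, Nat.cast_eq_zero, card_eq_zero]
    apply eq_empty_of_forall_notMem
    intro m hm
    rw [mem_filter, mem_gr] at hm
    obtain ⟨v, hv⟩ := nonempty_iff_ne_empty.2 hL
    have := hm.1.1 v (by simpa using hv)
    have h2 := subset_empty.1 this.1
    simp [h2] at this
  · rw [← card_gr_ne, ← card_gr_nenf _ _ hB0]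
    have hsub : gr (L \ B) B (fun s => s.Nonempty ∧ s ≠ B) ⊆ gr (L \ B) B Finset.Nonempty := by
      intro m hm
      rw [mem_gr] at hm ⊢
      exact ⟨fun v hv => ⟨(hm.1 v hv).1, (hm.1 v hv).2.1⟩, hm.2⟩
    rw [← Nat.cast_sub (card_le_card hsub), ← card_sdiff_of_subset hsub]
    congr 2
    ext m
    rw [mem_filter, mem_sdiff]
    apply and_congr_right
    intro hm
    rw [mem_gr] at hm ⊢
    constructor
    · rintro ⟨h1, d, hd⟩ hcon
      have hdB : B ⊆ m d := fun u hu => by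
        obtain ⟨a, ha⟩ := h1 u hu
        exact hd a u ha
      by_cases hdA : d ∈ L \ B
      · exact (hcon.1 d hdA).2.2 (Subset.antisymm (hcon.1 d hdA).1 hdB)
      · rw [hm.2 d hdA] at hdB
        exact hB0 (subset_empty.1 hdB)
    · intro hcon
      have : ∃ d ∈ L \ B, m d = B := by
        by_contra hh
        push Not at hh
        exact hcon ⟨fun v hv => ⟨(hm.1 v hv).1, (hm.1 v hv).2, hh v hv⟩, hm.2⟩
      obtain ⟨d, hdA, hd⟩ := this
      refine ⟨fun u hu => ⟨d, by rw [hd]; exact hu⟩, d, ?_⟩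
      intro a u hu
      have ha : a ∈ L \ B := by
        by_contra ha; rw [hm.2 a ha] at hu; simp at hu
      rw [hd]; exact (hm.1 a ha).1 hu

noncomputable def fp (m : V → Finset V) : V → Finset V := fun u => univ.filter fun a => u ∈ m a
lemma mem_fp {m : V → Finset V} {a u : V} : a ∈ fp m u ↔ u ∈ m a := by simp [fp]
lemma fp_fp (m : V → Finset V) : fp (fp m) = m := by
  funext a; ext b; simp [mem_fp]
lemma fp_link {L : Finset V} {m : V → Finset V} (h : Link L m) : Link L (fp m) := by
  refine ⟨?_, ?_, ?_⟩
  · intro a b hb; rw [mem_fp] at hb; exact (h.supp _ _ hb).symm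
  · intro a w b hw hb; rw [mem_fp] at hw hb; exact h.nop _ _ _ hb hw
  · intro v hv; simp only [mem_fp]; exact (h.cov v hv).symm
lemma al_fp {m : V → Finset V} : al (fp m) ↔ be m := by
  unfold al be; simp only [mem_fp]
  constructor <;> rintro ⟨d, hd⟩ <;> exact ⟨d, fun a b h => hd _ _ h⟩

lemma rep_t_be : Rep t0 (fun L : Finset V => (((links L).filter be).card : ℚ)) := by
  apply rep_t.congr
  intro L
  congr 1
  refine card_bij' (fun m _ => fp m) (fun m _ => fp m) ?_ ?_ ?_ ?_
  · intro m hm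
    rw [mem_filter, mem_links] at hm ⊢
    exact ⟨fp_link hm.1, al_fp.2 hm.2⟩
  · intro m hm
    rw [mem_filter, mem_links] at hm ⊢
    refine ⟨fp_link hm.1, ?_⟩
    rw [← al_fp, fp_fp]; exact hm.2
  · intro m _; exact fp_fp m
  · intro m _; exact fp_fp m

/-- complement graph. -/
noncomputable def cp (A B : Finset V) (m : V → Finset V) : V → Finset V :=
  fun a => if a ∈ A then B \ m a else ∅
lemma mem_cp {A B : Finset V} {m : V → Finset V} {a b : V} :
    b ∈ cp A B m a ↔ a ∈ A ∧ b ∈ B ∧ b ∉ m a := by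
  unfold cp; split_ifs <;> simp_all

lemma mem_gr' {A B : Finset V} {p : Finset V → Prop} {m : V → Finset V} :
    m ∈ gr A B p ↔ (∀ a b, b ∈ m a → a ∈ A ∧ b ∈ B) ∧ ∀ a ∈ A, p (m a) := by
  rw [mem_gr]
  constructor
  · rintro ⟨h1, h2⟩
    refine ⟨fun a b hb => ?_, fun a ha => (h1 a ha).2⟩
    have ha : a ∈ A := by
      by_contra ha; rw [h2 a ha] at hb; simp at hb
    exact ⟨ha, (h1 a ha).1 hb⟩
  · rintro ⟨h1, h2⟩
    refine ⟨fun a ha => ⟨fun b hb => (h1 a b hb).2, h2 a ha⟩, fun a ha => ?_⟩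
    apply eq_empty_of_forall_notMem
    intro b hb; exact ha (h1 a b hb).1

lemma cp_cp {A B : Finset V} {m : V → Finset V} (h : ∀ a b, b ∈ m a → a ∈ A ∧ b ∈ B) :
    cp A B (cp A B m) = m := by
  funext a; ext b; simp only [mem_cp]
  have := h a b
  tauto

lemma gr_not_both (A B : Finset V) :
    ((gr A B (fun s => s ≠ B)).filter fun m => ¬ ∃ u ∈ B, ∀ a ∈ A, u ∈ m a).card =
    ((gr A B Finset.Nonempty).filter fun m => ∀ u ∈ B, ∃ a, u ∈ m a).card := by
  refine card_bij' (fun m _ => cp A B m) (fun m _ => cp A B m) ?_ ?_ ?_ ?_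
  · intro m hm
    rw [mem_filter, mem_gr'] at hm ⊢
    push Not at hm
    refine ⟨⟨fun a b hb => ?_, fun a ha => ?_⟩, ?_⟩
    · rw [mem_cp] at hb; exact ⟨hb.1, hb.2.1⟩
    · have h1 := hm.1.2 a ha
      by_contra hc
      rw [not_nonempty_iff_eq_empty] at hc
      apply h1
      apply Subset.antisymm (fun b hb => (hm.1.1 a b hb).2)
      intro b hb
      by_contra hb2
      have : b ∈ cp A B m a := mem_cp.2 ⟨ha, hb, hb2⟩
      simp [hc] at this
    · intro u hu
      obtain ⟨a, ha, h⟩ := hm.2 u hu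
      exact ⟨a, mem_cp.2 ⟨ha, hu, h⟩⟩
  · intro m hm
    rw [mem_filter, mem_gr'] at hm ⊢
    push Not
    refine ⟨⟨fun a b hb => ?_, fun a ha => ?_⟩, ?_⟩
    · rw [mem_cp] at hb; exact ⟨hb.1, hb.2.1⟩
    · obtain ⟨b, hb⟩ := hm.1.2 a ha
      intro h
      have : b ∈ cp A B m a := by rw [h]; exact (hm.1.1 a b hb).2
      exact (mem_cp.1 this).2.2 hb
    · intro u hu
      obtain ⟨a, ha⟩ := hm.2 u hu
      refine ⟨a, (hm.1.1 _ _ ha).1, fun h => (mem_cp.1 h).2.2 ha⟩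
  · intro m hm
    rw [mem_filter, mem_gr'] at hm
    exact cp_cp hm.1.1
  · intro m hm
    rw [mem_filter, mem_gr'] at hm
    exact cp_cp hm.1.1

lemma gr_not_right (A B : Finset V) :
    ((gr A B (fun _ => True)).filter fun m => ¬ ∃ u ∈ B, ∀ a ∈ A, u ∈ m a).card =
    (gr B A Finset.Nonempty).card := by
  refine card_bij' (fun m _ => fp (cp A B m)) (fun m _ => cp A B (fp m)) ?_ ?_ ?_ ?_
  · intro m hm
    rw [mem_filter, mem_gr'] at hm 
    rw [mem_gr']
    push Not at hm
    refine ⟨fun a b hb => ?_, fun u hu => ?_⟩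
    · rw [mem_fp, mem_cp] at hb; exact ⟨hb.2.1, hb.1⟩
    · obtain ⟨a, ha, h⟩ := hm.2 u hu
      exact ⟨a, mem_fp.2 (mem_cp.2 ⟨ha, hu, h⟩)⟩
  · intro m hm
    rw [mem_filter, mem_gr']
    rw [mem_gr'] at hm
    push Not
    refine ⟨⟨fun a b hb => ?_, fun _ _ => trivial⟩, ?_⟩
    · rw [mem_cp] at hb; exact ⟨hb.1, hb.2.1⟩
    · intro u hu
      obtain ⟨a, ha⟩ := hm.2 u hu
      refine ⟨a, (hm.1 _ _ ha).2, fun h => (mem_cp.1 h).2.2 (mem_fp.2 ha)⟩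
  · intro m hm
    rw [mem_filter, mem_gr'] at hm
    simp only [fp_fp]
    exact cp_cp hm.1.1
  · intro m hm
    rw [mem_gr'] at hm
    rw [cp_cp, fp_fp]
    intro a b hb
    rw [mem_fp] at hb
    exact (hm.1 _ _ hb).symm

lemma gr_left (A B : Finset V) (q : (V → Finset V) → Prop) [DecidablePred q] :
    ((gr A B (fun _ => True)).filter fun m => (¬ ∃ d ∈ A, m d = B) ∧ q m) =
    (gr A B (fun s => s ≠ B)).filter q := by
  ext m
  simp only [mem_filter, mem_gr']
  push Not
  tauto

lemma incl_excl {α : Type} (s : Finset α) (p q : α → Prop) [DecidablePred p] [DecidablePred q] :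
    ((s.filter fun x => p x ∧ q x).card : ℚ) = s.card - (s.filter fun x => ¬ p x).card
      - (s.filter fun x => ¬ q x).card + (s.filter fun x => ¬ p x ∧ ¬ q x).card := by
  rw [card_eq_sum_ones s]
  simp only [card_filter, Nat.cast_sum]
  rw [← sum_sub_distrib, ← sum_sub_distrib, ← sum_add_distrib]
  apply sum_congr rfl
  intro x _
  by_cases h1 : p x <;> by_cases h2 : q x <;> simp [h1, h2]

lemma card_TT (A B : Finset V) :
    (((gr A B (fun _ => True)).filter fun m => (∃ d ∈ A, m d = B) ∧ ∃ u ∈ B, ∀ a ∈ A, u ∈ m a).card : ℚ)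
    = (2 ^ B.card - 0) ^ A.card - (2 ^ B.card - 1) ^ A.card - (2 ^ A.card - 1) ^ B.card
      + ((gr A B Finset.Nonempty).filter fun m => ∀ u ∈ B, ∃ a, u ∈ m a).card := by
  have h1 := congrArg card (gr_left A B (fun m => ¬ ∃ u ∈ B, ∀ a ∈ A, u ∈ m a))
  have h2 := congrArg card (gr_left A B (fun _ => True))
  simp only [and_true, filter_true] at h2
  rw [gr_not_both] at h1
  have h3 := incl_excl (gr A B (fun _ => True)) (fun m => ∃ d ∈ A, m d = B) (fun m => ∃ u ∈ B, ∀ a ∈ A, u ∈ m a)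
  rw [h1, h2, gr_not_right, card_gr_all, card_gr_ne, card_gr_nf] at h3
  exact h3

lemma rep_u : Rep u0 (fun L : Finset V => (((links L).filter fun m => al m ∧ be m).card : ℚ)) := by
  apply (rep_one.add (((rep_x0.sub rep_x1).sub rep_x1).add rep_s)).congr
  intro L
  by_cases hL : L = ∅
  · subst hL
    simp [links_empty, filter_singleton, al_empty, be_empty, xx]
  have h1 : xx 1 L = ∑ B ∈ L.powerset, ((2 : ℚ) ^ (L \ B).card - 1) ^ B.card := by
    unfold xx
    refine sum_bij' (fun B _ => L \ B) (fun B _ => L \ B) ?_ ?_ ?_ ?_ ?_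
    · intro B _; simp
    · intro B _; simp
    · intro B hB; simp only [sdiff_sdiff_right_self]; exact inter_eq_right.2 (mem_powerset.1 hB)
    · intro B hB; simp only [sdiff_sdiff_right_self]; exact inter_eq_right.2 (mem_powerset.1 hB)
    · intro B hB
      rw [sdiff_sdiff_right_self]
      congr 3
      simp only [inf_eq_inter, inter_eq_right.2 (mem_powerset.1 hB)]
  have h2 := card_links_filter L (fun _ => True)
  simp only [and_true, filter_true] at h2
  rw [if_neg hL, zero_add, card_links_filter, h2]
  nth_rewrite 2 [h1]
  unfold xx
  rw [← sum_sub_distrib, ← sum_sub_distrib]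
  push_cast
  rw [← sum_add_distrib]
  apply sum_congr rfl
  intro B hB
  rw [mem_powerset] at hB
  rw [← card_TT]
  congr 2
  ext m
  simp only [mem_filter, mem_gr']
  constructor
  · rintro ⟨⟨h3, h4⟩, h5, ⟨d, hd⟩, ⟨u, hu⟩⟩
    have hne : ∃ a b, b ∈ m a := by
      obtain ⟨v, hv⟩ := nonempty_iff_ne_empty.2 hL
      by_cases hvB : v ∈ B
      · obtain ⟨a, ha⟩ := h5 v hvB
        exact ⟨a, v, ha⟩
      · obtain ⟨b, hb⟩ := h4 v (mem_sdiff.2 ⟨hv, hvB⟩)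
        exact ⟨v, b, hb⟩
    obtain ⟨a, b, hab⟩ := hne
    refine ⟨⟨h3, fun _ _ => trivial⟩, ⟨d, (h3 _ _ (hd _ _ hab)).1, ?_⟩, ⟨u, (h3 _ _ (hu _ _ hab)).2, ?_⟩⟩
    · apply Subset.antisymm (fun b hb => (h3 _ _ hb).2)
      intro b hb
      obtain ⟨a, ha⟩ := h5 b hb
      exact hd _ _ ha
    · intro a ha
      obtain ⟨b, hb⟩ := h4 a ha
      exact hu _ _ hb
  · rintro ⟨⟨h3, _⟩, ⟨d, hdA, hd⟩, ⟨u, huB, hu⟩⟩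
    refine ⟨⟨h3, fun a ha => ⟨u, hu a ha⟩⟩, fun u hu => ⟨d, by rw [hd]; exact hu⟩, ⟨d, ?_⟩, ⟨u, ?_⟩⟩
    · intro a u hu; rw [hd]; exact (h3 _ _ hu).2
    · intro d b hb; exact hu d (h3 _ _ hb).1

end SG

namespace SG
open Finset
open scoped Classical

noncomputable def HH : ℕ → PowerSeries ℚ × PowerSeries ℚ
  | 0 => (E, E - 1)
  | j + 1 => (E * (s0 * (HH j).1 + t0 * ((HH j).2 - (HH j).1)),
      E * (s0 * (HH j).1 + t0 * ((HH j).2 - (HH j).1)) - (t0 * (HH j).1 + u0 * ((HH j).2 - (HH j).1)))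

variable {V : Type} [Fintype V] [Nonempty V]

lemma Rep.unE {P : PowerSeries ℚ} {p : Finset V → ℚ} (hP : Rep P p) :
    Rep (E * P) (fun R => ∑ S ∈ R.powerset, p (R \ S)) := by
  apply (rep_E.mul hP).congr
  intro R; simp

lemma codes_be (k : ℕ) (R : Finset V) (b : Prop) :
    ((codes k R b).card : ℚ) = (codes k R False).card +
      (if b then 1 else 0) * ((codes k R True).card - (codes k R False).card) := by
  by_cases h : b
  · simp [h]
  · simp [h]

lemma rep_HH (j : ℕ) : Rep (HH j).1 (fun R : Finset V => ((codes (j + 1) R False).card : ℚ)) ∧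
    Rep (HH j).2 (fun R : Finset V => ((codes (j + 1) R True).card : ℚ)) := by
  induction j with
  | zero =>
    constructor
    · apply rep_E.congr
      intro R
      simp [card_codes_one]
    · apply (rep_E.sub rep_one).congr
      intro R
      rw [card_codes_one]
      by_cases h : R = ∅
      · simp [h]
      · simp [h, nonempty_iff_ne_empty]
  | succ j ih =>
    obtain ⟨hF, hT⟩ := ih
    have hP : Rep (s0 * (HH j).1 + t0 * ((HH j).2 - (HH j).1))
        (fun R : Finset V => ∑ L ∈ R.powerset, ∑ m ∈ links L, ((codes (j + 1) (R \ L) (be m)).card : ℚ)) := by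
      apply ((rep_s.mul hF).add (rep_t_be.mul (hT.sub hF))).congr
      intro R
      rw [← sum_add_distrib]
      apply sum_congr rfl
      intro L _
      rw [sum_congr rfl (fun m _ => codes_be _ _ (be m)), sum_add_distrib, ← sum_mul, sum_const, nsmul_eq_mul,
        card_filter]
      push_cast
      rfl
    have hQ : Rep (t0 * (HH j).1 + u0 * ((HH j).2 - (HH j).1))
        (fun R : Finset V => ∑ L ∈ R.powerset, ∑ m ∈ links L,
          (if al m then ((codes (j + 1) (R \ L) (be m)).card : ℚ) else 0)) := by
      apply ((rep_t.mul hF).add (rep_u.mul (hT.sub hF))).congr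
      intro R
      rw [← sum_add_distrib]
      apply sum_congr rfl
      intro L _
      rw [card_filter, card_filter]
      push_cast
      rw [sum_mul, sum_mul, ← sum_add_distrib]
      apply sum_congr rfl
      intro m _
      rw [codes_be _ _ (be m)]
      by_cases h1 : al m <;> by_cases h2 : be m <;> simp [h1, h2]
    constructor
    · apply hP.unE.congr
      intro R
      rw [card_codes_succ _ (by omega)]
      simp
    · apply (hP.unE.sub hQ).congr
      intro R
      rw [card_codes_succ _ (by omega)]
      push_cast
      rw [← add_sum_erase _ _ (empty_mem_powerset R), ← add_sum_erase _ _ (empty_mem_powerset R)]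
      have h1 : ∀ S ∈ R.powerset.erase ∅, (∑ L ∈ (R \ S).powerset, ∑ m ∈ links L,
          if (True → S.Nonempty ∨ ¬ al m) then ((codes (j + 1) ((R \ S) \ L) (be m)).card : ℚ) else 0) =
          ∑ L ∈ (R \ S).powerset, ∑ m ∈ links L, ((codes (j + 1) ((R \ S) \ L) (be m)).card : ℚ) := by
        intro S hS
        rw [mem_erase, ← nonempty_iff_ne_empty] at hS
        simp [hS.1]
      rw [sum_congr rfl h1, add_sub_right_comm]
      congr 1
      rw [sdiff_empty, ← sum_sub_distrib]
      apply sum_congr rfl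
      intro L _
      rw [← sum_sub_distrib]
      apply sum_congr rfl
      intro m _
      by_cases h : al m <;> simp [h]

lemma code_card {k : ℕ} {R : Finset V} {fl : Prop} {c : (V → ℕ) × (V → Finset V)} (h : Code k R fl c)
    (K : ℕ) (hK : ∀ i, 1 ≤ i → i ≤ K → ∃ y, c.1 y = i) : K ≤ R.card := by
  have h1 : Icc 1 K ⊆ R.image c.1 := by
    intro i hi
    rw [mem_Icc] at hi
    obtain ⟨y, hy⟩ := hK i hi.1 hi.2
    rw [mem_image]
    exact ⟨y, by rw [h.supp]; omega, hy⟩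
  have := (card_le_card h1).trans card_image_le
  simpa using this

lemma codes_T_empty {k : ℕ} {R : Finset V} (h : R.card < k) : codes k R True = ∅ := by
  apply eq_empty_of_forall_notMem
  intro c hc
  rw [mem_codes] at hc
  have := code_card hc k (fun i h1 h2 => by
    rcases h2.lt_or_eq with h3 | h3
    · obtain ⟨y, hy, _⟩ := hc.mid i h1 h3 (Classical.arbitrary V) (Classical.arbitrary V)
      exact ⟨y, hy⟩
    · obtain ⟨y, hy, _⟩ := hc.top trivial (Classical.arbitrary V)
      exact ⟨y, by omega⟩)
  omega

lemma codes_F_empty {k : ℕ} {R : Finset V} (h : R.card + 1 < k) : codes k R False = ∅ := by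
  apply eq_empty_of_forall_notMem
  intro c hc
  rw [mem_codes] at hc
  have := code_card hc (k - 1) (fun i h1 h2 => by
    obtain ⟨y, hy, _⟩ := hc.mid i h1 (by omega) (Classical.arbitrary V) (Classical.arbitrary V)
    exact ⟨y, hy⟩)
  omega

lemma coeff_HH {n j : ℕ} (V : Type) [Fintype V] [Nonempty V] (R : Finset V) (hR : R.card = n) :
    ((codes (j + 1) R True).card : ℚ) = n.factorial * PowerSeries.coeff n (HH j).2 ∧
    ((codes (j + 1) R False).card : ℚ) = n.factorial * PowerSeries.coeff n (HH j).1 := by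
  subst hR
  exact ⟨(rep_HH j).2 R, (rep_HH j).1 R⟩

lemma exR (n : ℕ) : ∃ R : Finset (Fin (n + 1)), R.card = n :=
  (exists_subset_card_eq (s := (univ : Finset (Fin (n + 1)))) (n := n) (by simp)).imp fun _ h => h.2

lemma coeff_HT_zero {n j : ℕ} (h : n ≤ j) : PowerSeries.coeff n (HH j).2 = 0 := by
  obtain ⟨R, hR⟩ := exR n
  have := (coeff_HH (j := j) _ R hR).1
  rw [codes_T_empty (by omega)] at this
  have h2 : (n.factorial : ℚ) ≠ 0 := by positivity
  simpa [h2] using this.symm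

lemma coeff_HF_zero {n j : ℕ} (h : n < j) : PowerSeries.coeff n (HH j).1 = 0 := by
  obtain ⟨R, hR⟩ := exR n
  have := (coeff_HH (j := j) _ R hR).2
  rw [codes_F_empty (by omega)] at this
  have h2 : (n.factorial : ℚ) ≠ 0 := by positivity
  simpa [h2] using this.symm

end SG

namespace SG
open Finset
open scoped Classical

lemma gCount_zero : gCount 0 = 1 := by
  unfold gCount
  have : Unique {r : Fin 0 → Fin 0 → Prop // IsStrictOrderRel r ∧ RelStronglyGraded r ∧ RelAvoids31 r} :=
    { default := ⟨fun _ _ => False, ⟨fun a => a.elim0, fun a => a.elim0⟩,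
        fun s t _ _ => by rw [Subsingleton.elim s t], fun ⟨w, _⟩ => w.elim0⟩
      uniq := fun r => Subsingleton.elim _ _ }
  exact Nat.card_unique

def toR {N : ℕ} (c : (Fin N → ℕ) × (Fin N → Finset (Fin N))) : Fin N → Fin N → Prop :=
  fun a b => c.1 a < c.1 b ∧ b ∉ c.2 a

lemma toR_order {N k : ℕ} {c : (Fin N → ℕ) × (Fin N → Finset (Fin N))} (h : Code k univ True c) :
    IsStrictOrderRel (toR c) := by
  refine ⟨fun a ha => lt_irrefl _ ha.1, ?_⟩
  rintro x y z ⟨h1, h2⟩ ⟨h3, h4⟩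
  refine ⟨h1.trans h3, fun h5 => ?_⟩
  have := h.step _ _ h5
  omega

lemma toR_avoids {N k : ℕ} {c : (Fin N → ℕ) × (Fin N → Finset (Fin N))} (h : Code k univ True c) :
    RelAvoids31 (toR c) := by
  rintro ⟨w, x, y, z, ⟨h1, _⟩, ⟨h2, _⟩, ⟨_, h4⟩, _, ⟨h7, _⟩⟩
  unfold toR at h4 h7
  push Not at h4 h7
  have key : c.1 w < c.1 z := by
    by_contra hh
    have h5 := h4 (by omega)
    have := h.step _ _ h5
    omega
  have h5 := h7 key
  have h6 := h.step _ _ h5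
  exact h.nop _ _ _ (h4 (by omega)) h5

lemma toR_card {N k : ℕ} [Nonempty (Fin N)] {c : (Fin N → ℕ) × (Fin N → Finset (Fin N))}
    (h : Code k univ True c) {s : Finset (Fin N)} (hs : RelMaxChain (toR c) s) : s.card = k := by
  obtain ⟨hc, hmax⟩ := hs
  have hinj : ∀ a ∈ s, ∀ b ∈ s, c.1 a = c.1 b → a = b := by
    intro a ha b hb hab
    by_contra hne
    rcases hc a ha b hb hne with h1 | h1
    · have := h1.1; omega
    · have := h1.1; omega
  have himg : s.image c.1 = Icc 1 k := by
    ext i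
    rw [mem_image, mem_Icc]
    constructor
    · rintro ⟨a, ha, rfl⟩
      have := (h.supp a).1 (mem_univ a)
      exact ⟨by omega, h.le a⟩
    · rintro ⟨hi1, hik⟩
      by_contra hcon
      push Not at hcon
      have uniq : ∀ l, ∃ x, ∀ a ∈ s, c.1 a = l → a = x := by
        intro l
        by_cases hl : ∃ x ∈ s, c.1 x = l
        · obtain ⟨x, hx, hl⟩ := hl
          exact ⟨x, fun a ha hal => hinj a ha x hx (by omega)⟩
        · push Not at hl
          exact ⟨Classical.arbitrary _, fun a ha hal => absurd hal (hl a ha)⟩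
      obtain ⟨x, hx⟩ := uniq (i - 1)
      obtain ⟨z, hz⟩ := uniq (i + 1)
      have hy : ∃ y, c.1 y = i ∧ y ∉ c.2 x ∧ z ∉ c.2 y := by
        rcases hik.lt_or_eq with hlt | rfl
        · exact h.mid i hi1 hlt x z
        · obtain ⟨y, hy, h1⟩ := h.top trivial x
          refine ⟨y, hy, h1, fun h2 => ?_⟩
          have := h.step _ _ h2
          have := h.le z
          omega
      obtain ⟨y, hy, hyx, hyz⟩ := hy
      have hcomp : ∀ a ∈ s, toR c a y ∨ toR c y a := by
        intro a ha
        rcases Nat.lt_or_gt_of_ne (hcon a ha) with hlt | hgt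
        · left
          refine ⟨by omega, fun hm => ?_⟩
          have := h.step _ _ hm
          have h3 := hx a ha (by omega)
          rw [h3] at hm
          exact hyx hm
        · right
          refine ⟨by omega, fun hm => ?_⟩
          have := h.step _ _ hm
          have h3 := hz a ha (by omega)
          rw [h3] at hm
          exact hyz hm
      have := hmax (insert y s) ?_ (subset_insert y s)
      · exact hcon y (by rw [this]; exact mem_insert_self y s) hy
      · intro a ha b hb hab
        rw [mem_insert] at ha hb
        rcases ha with rfl | ha <;> rcases hb with rfl | hb
        · exact absurd rfl hab
        · exact (hcomp b hb).symm
        · exact hcomp a ha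
        · exact hc a ha b hb hab
  have h1 : (s.image c.1).card = s.card := card_image_of_injOn hinj
  rw [himg] at h1
  simpa using h1.symm

lemma code_le {N k k' : ℕ} [Nonempty (Fin N)] {c c' : (Fin N → ℕ) × (Fin N → Finset (Fin N))}
    (h : Code k univ True c) (h' : Code k' univ True c') (he : toR c = toR c') :
    ∀ n v, c.1 v = n → n ≤ c'.1 v := by
  intro n
  induction n with
  | zero => intro v _; omega
  | succ n ih =>
    intro v hv
    rcases Nat.eq_zero_or_pos n with rfl | hn
    · have := (h'.supp v).1 (mem_univ v)
      omega
    · have hk := h.le v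
      obtain ⟨y, hy, _, h2⟩ := h.mid n hn (by omega) v v
      have h3 : toR c y v := ⟨by omega, h2⟩
      rw [he] at h3
      have := h3.1
      have := ih y hy
      omega

lemma code_inj {N k k' : ℕ} [Nonempty (Fin N)] {c c' : (Fin N → ℕ) × (Fin N → Finset (Fin N))}
    (h : Code k univ True c) (h' : Code k' univ True c') (he : toR c = toR c') : k = k' ∧ c = c' := by
  have h1 : ∀ v, c.1 v = c'.1 v := fun v =>
    le_antisymm (code_le h h' he _ v rfl) (code_le h' h he.symm _ v rfl)
  have h2 : ∀ {l : ℕ} {d : (Fin N → ℕ) × (Fin N → Finset (Fin N))}, Code l univ True d →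
      ∀ a b, b ∈ d.2 a ↔ d.1 b = d.1 a + 1 ∧ ¬ toR d a b := by
    intro l d hd a b
    constructor
    · intro hb; exact ⟨(hd.step a b hb).2, fun h => h.2 hb⟩
    · rintro ⟨h3, h4⟩
      by_contra h5
      exact h4 ⟨by omega, h5⟩
  refine ⟨?_, Prod.ext (funext h1) ?_⟩
  · obtain ⟨y, hy, _⟩ := h.top trivial (Classical.arbitrary _)
    obtain ⟨y', hy', _⟩ := h'.top trivial (Classical.arbitrary _)
    have := h.le y'
    have := h'.le y
    have := h1 y
    have := h1 y'
    omega
  · funext a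
    ext b
    rw [h2 h, h2 h', h1, h1, he]

lemma extend_chain {N : ℕ} (r : Fin N → Fin N → Prop) {s : Finset (Fin N)} (hs : RelChain r s) :
    ∃ t, s ⊆ t ∧ RelMaxChain r t := by
  obtain ⟨t, ht, hmax⟩ := exists_max_image (univ.filter fun t => s ⊆ t ∧ RelChain r t) card
    ⟨s, by simp [hs]⟩
  simp only [mem_filter, mem_univ, true_and] at ht hmax
  refine ⟨t, ht.1, ht.2, fun u hu htu => ?_⟩
  exact eq_of_subset_of_card_le htu (hmax u ⟨ht.1.trans htu, hu⟩)

/-- chains with top element `v`. -/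
noncomputable def chs {N : ℕ} (r : Fin N → Fin N → Prop) (v : Fin N) : Finset (Finset (Fin N)) :=
  univ.filter fun s => RelChain r s ∧ v ∈ s ∧ ∀ a ∈ s, a ≠ v → r a v

noncomputable def lev {N : ℕ} (r : Fin N → Fin N → Prop) (v : Fin N) : ℕ := (chs r v).sup card

lemma mem_chs {N : ℕ} {r : Fin N → Fin N → Prop} {v : Fin N} {s : Finset (Fin N)} :
    s ∈ chs r v ↔ RelChain r s ∧ v ∈ s ∧ ∀ a ∈ s, a ≠ v → r a v := by simp [chs]

lemma single_chs {N : ℕ} (r : Fin N → Fin N → Prop) (v : Fin N) : {v} ∈ chs r v := by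
  rw [mem_chs]
  refine ⟨?_, by simp, by simp⟩
  intro a ha b hb hab
  rw [mem_singleton] at ha hb
  exact absurd (ha.trans hb.symm) hab

lemma lev_attained {N : ℕ} (r : Fin N → Fin N → Prop) (v : Fin N) : ∃ s ∈ chs r v, s.card = lev r v := by
  obtain ⟨s, hs, h⟩ := exists_mem_eq_sup (chs r v) ⟨_, single_chs r v⟩ card
  exact ⟨s, hs, h.symm⟩

lemma lev_pos {N : ℕ} (r : Fin N → Fin N → Prop) (v : Fin N) : 1 ≤ lev r v := by
  have : card {v} ≤ lev r v := le_sup (f := card) (single_chs r v)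
  simpa using this

lemma lev_lt {N : ℕ} {r : Fin N → Fin N → Prop} (hr : IsStrictOrderRel r) {a b : Fin N} (hab : r a b) :
    lev r a < lev r b := by
  obtain ⟨s, hs, hc⟩ := lev_attained r a
  rw [mem_chs] at hs
  have hb : b ∉ s := by
    intro hb
    by_cases h : b = a
    · rw [h] at hab; exact hr.1 a hab
    · exact hr.1 a (hr.2 _ _ _ hab (hs.2.2 b hb h))
  have hall : ∀ x ∈ s, r x b := by
    intro x hx
    by_cases h : x = a
    · rw [h]; exact hab
    · exact hr.2 _ _ _ (hs.2.2 x hx h) hab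
  have h1 : insert b s ∈ chs r b := by
    rw [mem_chs]
    refine ⟨?_, mem_insert_self _ _, ?_⟩
    · intro x hx y hy hxy
      rw [mem_insert] at hx hy
      rcases hx with rfl | hx <;> rcases hy with rfl | hy
      · exact absurd rfl hxy
      · exact Or.inr (hall _ hy)
      · exact Or.inl (hall _ hx)
      · exact hs.1 x hx y hy hxy
    · intro x hx hxb
      rw [mem_insert] at hx
      exact hall x (hx.resolve_left hxb)
  have h2 : (insert b s).card ≤ lev r b := le_sup (f := card) h1
  rw [card_insert_of_notMem hb] at h2
  omega

lemma code_surj {N : ℕ} [Nonempty (Fin N)] {r : Fin N → Fin N → Prop} (hr : IsStrictOrderRel r)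
    (hg : RelStronglyGraded r) (ha : RelAvoids31 r) :
    ∃ k, 1 ≤ k ∧ k ≤ N ∧ ∃ c, Code k univ True c ∧ toR c = r := by
  obtain ⟨s0, _, hs0⟩ := extend_chain r (s := ∅) (by intro a ha; simp at ha)
  set k := s0.card with hk
  have hlt : ∀ {a b}, r a b → lev r a < lev r b := fun h => lev_lt hr h
  have hle : ∀ v, lev r v ≤ k := by
    intro v
    obtain ⟨s, hs, hc⟩ := lev_attained r v
    obtain ⟨t, hst, ht⟩ := extend_chain r (mem_chs.1 hs).1
    rw [← hc, hk, hg s0 t hs0 ht]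
    exact card_le_card hst
  have himg : ∀ t, RelMaxChain r t → ∀ i, 1 ≤ i → i ≤ k → ∃ y ∈ t, lev r y = i := by
    intro t ht i h1 h2
    have hinj : Set.InjOn (lev r) t := by
      intro a ha b hb hab
      by_contra hne
      rcases ht.1 a ha b hb hne with h | h
      · have := hlt h; omega
      · have := hlt h; omega
    have h3 : t.image (lev r) = Icc 1 k := by
      apply eq_of_subset_of_card_le
      · intro j hj
        rw [mem_image] at hj
        obtain ⟨a, _, rfl⟩ := hj
        exact mem_Icc.2 ⟨lev_pos r a, hle a⟩
      · rw [card_image_of_injOn hinj, Nat.card_Icc, ← hg s0 t hs0 ht]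
        omega
    have h4 : i ∈ t.image (lev r) := by rw [h3]; exact mem_Icc.2 ⟨h1, h2⟩
    exact mem_image.1 h4
  have hcmp : ∀ t, RelMaxChain r t → ∀ a ∈ t, ∀ b ∈ t, lev r a < lev r b → r a b := by
    intro t ht a ha b hb hab
    rcases ht.1 a ha b hb (by rintro rfl; omega) with h | h
    · exact h
    · have := hlt h; omega
  have hfar : ∀ a b, lev r a + 2 ≤ lev r b → r a b := by
    intro a b hab
    by_contra hn
    obtain ⟨t, hbt, ht⟩ := extend_chain r (mem_chs.1 (single_chs r b)).1
    have hb : b ∈ t := hbt (mem_singleton_self b)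
    have h1 := hle b
    have h0 := lev_pos r a
    obtain ⟨c, hc, hcl⟩ := himg t ht (lev r b - 1) (by omega) (by omega)
    obtain ⟨d, hd, hdl⟩ := himg t ht (lev r b - 2) (by omega) (by omega)
    have hdc := hcmp t ht d hd c hc (by omega)
    have hcb := hcmp t ht c hc b hb (by omega)
    refine ha ⟨a, d, c, b, hdc, hcb, ⟨?_, ?_⟩, ⟨?_, ?_⟩, ⟨hn, ?_⟩⟩
    · intro h; exact hn (hr.2 _ _ _ (hr.2 _ _ _ h hdc) hcb)
    · intro h; have := hlt h; omega
    · intro h; exact hn (hr.2 _ _ _ h hcb)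
    · intro h; have := hlt h; omega
    · intro h; have := hlt h; omega
  have hmem : ∀ a b, b ∈ (univ.filter fun b => lev r b = lev r a + 1 ∧ ¬ r a b) ↔
      lev r b = lev r a + 1 ∧ ¬ r a b := by intro a b; simp
  have hmid : ∀ i, 1 ≤ i → i ≤ k → ∀ x z, ∃ y, lev r y = i ∧ ¬ (lev r y = lev r x + 1 ∧ ¬ r x y)
      ∧ ¬ (lev r z = lev r y + 1 ∧ ¬ r y z) := by
    intro i h1 h2 x z
    have hs : RelChain r (univ.filter fun v => (v = x ∧ lev r v + 1 = i) ∨ (v = z ∧ lev r v = i + 1)) := by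
      intro a ha b hb hab
      simp only [mem_filter, mem_univ, true_and] at ha hb
      rcases ha with ⟨rfl, ha⟩ | ⟨rfl, ha⟩ <;> rcases hb with ⟨rfl, hb⟩ | ⟨rfl, hb⟩
      · exact absurd rfl hab
      · left; apply hfar; omega
      · right; apply hfar; omega
      · exact absurd rfl hab
    obtain ⟨t, hst, ht⟩ := extend_chain r hs
    obtain ⟨y, hy, hyl⟩ := himg t ht i h1 h2
    refine ⟨y, hyl, ?_, ?_⟩
    · rintro ⟨h3, h4⟩
      have hx : x ∈ t := hst (mem_filter.2 ⟨mem_univ _, Or.inl ⟨rfl, by omega⟩⟩)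
      exact h4 (hcmp t ht x hx y hy (by omega))
    · rintro ⟨h3, h4⟩
      have hz : z ∈ t := hst (mem_filter.2 ⟨mem_univ _, Or.inr ⟨rfl, by omega⟩⟩)
      exact h4 (hcmp t ht y hy z hz (by omega))
  have hk1 : 1 ≤ k := (lev_pos r (Classical.arbitrary _)).trans (hle _)
  refine ⟨k, hk1, ?_, (lev r, fun a => univ.filter fun b => lev r b = lev r a + 1 ∧ ¬ r a b), ⟨?_, ?_, ?_, ?_, ?_, ?_⟩, ?_⟩
  · have := card_le_univ s0
    simpa using this
  · intro v
    have := lev_pos r v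
    simp only [mem_univ, true_iff]
    omega
  · exact hle
  · intro a b hb
    have := lev_pos r a
    simp only [hmem] at hb
    exact ⟨by dsimp only; omega, hb.1⟩
  · intro a w b hw hb
    simp only [hmem] at hw hb
    have hab : r a b := hfar a b (by omega)
    obtain ⟨t, hst, ht⟩ := extend_chain r (s := {a, b}) (by
      intro x hx y hy hxy
      simp only [mem_insert, mem_singleton] at hx hy
      rcases hx with rfl | rfl <;> rcases hy with rfl | rfl
      · exact absurd rfl hxy
      · exact Or.inl hab
      · exact Or.inr hab
      · exact absurd rfl hxy)
    have hat : a ∈ t := hst (by simp)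
    have hbt : b ∈ t := hst (by simp)
    obtain ⟨y, hy, hyl⟩ := himg t ht (lev r a + 1) (by omega) (by have := hle b; omega)
    have hay := hcmp t ht a hat y hy (by omega)
    have hyb := hcmp t ht y hy b hbt (by omega)
    refine ha ⟨w, a, y, b, hay, hyb, ⟨?_, hw.2⟩, ⟨?_, ?_⟩, ⟨hb.2, ?_⟩⟩
    all_goals intro h; have := hlt h; omega
  · intro i h1 h2 x z
    simp only [hmem]
    exact hmid i h1 (by omega) x z
  · intro _ x
    simp only [hmem]
    obtain ⟨y, hy, h, _⟩ := hmid k hk1 le_rfl x x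
    exact ⟨y, hy, h⟩
  · funext a b
    simp only [toR, hmem, eq_iff_iff]
    constructor
    · rintro ⟨h1, h2⟩
      by_contra h3
      by_cases h4 : lev r b = lev r a + 1
      · exact h2 ⟨h4, h3⟩
      · exact h3 (hfar a b (by omega))
    · intro h
      exact ⟨hlt h, fun h2 => h2.2 h⟩

lemma gCount_succ (n : ℕ) : gCount (n + 1) =
    ∑ j ∈ range (n + 1), (codes (j + 1) (univ : Finset (Fin (n + 1))) True).card := by
  unfold gCount
  rw [Nat.card_eq_fintype_card, Fintype.card_subtype, ← card_sigma]
  symm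
  refine card_bij (fun x _ => toR x.2) ?_ ?_ ?_
  · rintro ⟨j, c⟩ h
    simp only [mem_sigma, mem_codes] at h
    simp only [mem_filter, mem_univ, true_and]
    exact ⟨toR_order h.2, fun s t hs ht => by rw [toR_card h.2 hs, toR_card h.2 ht], toR_avoids h.2⟩
  · rintro ⟨j, c⟩ h ⟨j', c'⟩ h' he
    simp only [mem_sigma, mem_codes] at h h'
    obtain ⟨h1, h2⟩ := code_inj h.2 h'.2 he
    have h3 : j = j' := by omega
    subst h3; subst h2; rfl
  · intro r hr
    simp only [mem_filter, mem_univ, true_and] at hr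
    obtain ⟨k, h1, h2, c, hc, he⟩ := code_surj hr.1 hr.2.1 hr.2.2
    refine ⟨⟨k - 1, c⟩, ?_, he⟩
    simp only [mem_sigma, mem_codes, mem_range]
    rw [Nat.sub_add_cancel h1]
    exact ⟨by omega, hc⟩

end SG

namespace SG
open Finset
open scoped Classical

lemma E2s : E ^ 2 * s0 = Psi := by
  have h := E_mul_inv
  unfold s0 X1
  linear_combination (E * E⁻¹ * Psi + Psi) * h

lemma E2t : E ^ 2 * t0 = E + (E - 1) * Psi := by
  have h := E_mul_inv
  unfold t0 Y2 Y1
  linear_combination (E * (Psi - E) - (E * E⁻¹ + 1) * (Psi - E)) * h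

lemma E2u : E ^ 2 * u0 = E ^ 2 + E ^ 2 * Psi - 2 * E * Psi + Psi := by
  have h := E_mul_inv
  have h2 := E2s
  unfold u0
  unfold X1
  linear_combination (-2 * E * Psi) * h + h2

noncomputable def SF (K : ℕ) : PowerSeries ℚ := ∑ j ∈ range K, (HH j).1
noncomputable def ST (K : ℕ) : PowerSeries ℚ := ∑ j ∈ range K, (HH j).2

lemma rec_F (K : ℕ) : SF K + (HH K).1 = E * (1 + s0 * SF K + t0 * (ST K - SF K)) := by
  induction K with
  | zero => simp [SF, ST, HH]
  | succ K ih =>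
    have h1 : SF (K + 1) = SF K + (HH K).1 := sum_range_succ _ _
    have h2 : ST (K + 1) = ST K + (HH K).2 := sum_range_succ _ _
    have h3 : (HH (K + 1)).1 = E * (s0 * (HH K).1 + t0 * ((HH K).2 - (HH K).1)) := rfl
    rw [h1, h2, h3]
    linear_combination ih

lemma rec_T (K : ℕ) : ST K + (HH K).2 = E * (1 + s0 * SF K + t0 * (ST K - SF K))
    - (1 + t0 * SF K + u0 * (ST K - SF K)) := by
  induction K with
  | zero => simp [SF, ST, HH]
  | succ K ih =>
    have h1 : SF (K + 1) = SF K + (HH K).1 := sum_range_succ _ _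
    have h2 : ST (K + 1) = ST K + (HH K).2 := sum_range_succ _ _
    have h3 : (HH (K + 1)).2 = E * (s0 * (HH K).1 + t0 * ((HH K).2 - (HH K).1))
      - (t0 * (HH K).1 + u0 * ((HH K).2 - (HH K).1)) := rfl
    rw [h1, h2, h3]
    linear_combination ih

lemma main_alg (F D f d E Psi s t u : PowerSeries ℚ) (hs : E ^ 2 * s = Psi) (ht : E ^ 2 * t = E + (E - 1) * Psi)
    (hu : E ^ 2 * u = E ^ 2 + E ^ 2 * Psi - 2 * E * Psi + Psi)
    (h1 : F + f = E * (1 + s * F + t * D))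
    (h2 : D + d = - (1 + t * F + u * D)) :
    E * ((F + D) * (E * (2 * E + 1) + (E ^ 2 - 2 * E - 1) * Psi) -
      (E ^ 2 * (2 * E - 3) + E * (E - 2) ^ 2 * Psi)) =
     f * (-(E * (2 * E ^ 2 + (E - 1) ^ 2 * Psi)) + (E + (E - 1) * Psi) * E)
     + d * ((Psi - E) * E ^ 2 - (E + (E - 1) * Psi) * E ^ 2) := by
  have e1 : (Psi - E) * F + (E + (E - 1) * Psi) * D = - E ^ 2 + E * f := by
    linear_combination (-E) * h1 + F * (-1) * hs - D * ht
  have e2 : (E + (E - 1) * Psi) * F + (2 * E ^ 2 + (E - 1) ^ 2 * Psi) * D = - E ^ 2 - E ^ 2 * d := by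
    linear_combination E ^ 2 * h2 - F * ht - D * hu
  linear_combination ((E + (E - 1) * Psi) - (2 * E ^ 2 + (E - 1) ^ 2 * Psi)) * e1 +
    ((E + (E - 1) * Psi) - (Psi - E)) * e2

lemma dvd_T (K : ℕ) : PowerSeries.X ^ K ∣ (HH K).2 := by
  rw [PowerSeries.X_pow_dvd_iff]
  intro m hm
  exact coeff_HT_zero (by omega)
lemma dvd_F (K : ℕ) : PowerSeries.X ^ K ∣ (HH K).1 := by
  rw [PowerSeries.X_pow_dvd_iff]
  intro m hm
  exact coeff_HF_zero (by omega)

lemma dvd_G (K : ℕ) : PowerSeries.X ^ K ∣ (G - 1) - ST K := by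
  rw [PowerSeries.X_pow_dvd_iff]
  intro n hn
  simp only [map_sub, ST, map_sum, PowerSeries.coeff_one, G, PowerSeries.coeff_mk]
  rcases n with _ | n
  · rw [gCount_zero, sum_eq_zero]
    · simp
    · intro j _; exact coeff_HT_zero (by omega)
  · rw [gCount_succ, if_neg (by omega), sub_zero]
    push_cast
    have h : ∀ j ∈ range (n + 1), ((codes (j + 1) (univ : Finset (Fin (n + 1))) True).card : ℚ) =
        (n + 1).factorial * PowerSeries.coeff (n + 1) (HH j).2 := fun j _ =>
      (coeff_HH _ _ (by simp)).1
    rw [sum_congr rfl h, ← mul_sum, mul_div_cancel_left₀ _ (by positivity), sub_eq_zero]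
    apply sum_subset
    · intro j; simp only [mem_range]; omega
    · intro j _ h2
      apply coeff_HT_zero
      simp only [mem_range] at h2; omega

lemma final : (G - 1) * (E * (2 * E + 1) + (E ^ 2 - 2 * E - 1) * Psi) =
      E ^ 2 * (2 * E - 3) + E * (E - 2) ^ 2 * Psi := by
  rw [← sub_eq_zero]
  ext n
  rw [map_zero]
  refine PowerSeries.X_pow_dvd_iff.1 ?_ n (Nat.lt_succ_self n)
  generalize n.succ = K
  have h1 := rec_F K
  have h2 := rec_T K
  have h3 := main_alg (SF K) (ST K - SF K) (HH K).1 ((HH K).2 - (HH K).1) E Psi s0 t0 u0 E2s E2t E2u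
    h1 (by linear_combination h2 - h1)
  have h4 := E_mul_inv
  obtain ⟨a, ha⟩ := dvd_F K
  obtain ⟨b, hb⟩ := dvd_T K
  obtain ⟨g, hg⟩ := dvd_G K
  set A := (G - 1) * (E * (2 * E + 1) + (E ^ 2 - 2 * E - 1) * Psi) - (E ^ 2 * (2 * E - 3) + E * (E - 2) ^ 2 * Psi) with hA
  have h5 : A = E⁻¹ * (E * A) := by linear_combination (-A) * h4
  rw [h5]
  apply Dvd.dvd.mul_left
  have h6 : E * A = E * (PowerSeries.X ^ K * g) * (E * (2 * E + 1) + (E ^ 2 - 2 * E - 1) * Psi) +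
     ((HH K).1 * (-(E * (2 * E ^ 2 + (E - 1) ^ 2 * Psi)) + (E + (E - 1) * Psi) * E)
     + ((HH K).2 - (HH K).1) * ((Psi - E) * E ^ 2 - (E + (E - 1) * Psi) * E ^ 2)) := by
    rw [← h3, ← hg, hA]; ring
  rw [h6, ha, hb]
  exact ⟨E * g * (E * (2 * E + 1) + (E ^ 2 - 2 * E - 1) * Psi) +
     (a * (-(E * (2 * E ^ 2 + (E - 1) ^ 2 * Psi)) + (E + (E - 1) * Psi) * E)
     + (b - a) * ((Psi - E) * E ^ 2 - (E + (E - 1) * Psi) * E ^ 2)), by ring⟩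

end SG

theorem strongly_graded_gf :
    (G - 1) * (E * (2 * E + 1) + (E ^ 2 - 2 * E - 1) * Psi) =
      E ^ 2 * (2 * E - 3) + E * (E - 2) ^ 2 * Psi := by
  exact SG.final
end
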